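/- arXiv:1407.5291 — 4 statements merged into one kernel-verified Lean document; each statement's English description precedes it below -/
import Mathlib

section
/- Let s ≥ 2 be an integer and let g be a positive function on the positive integers satisfying g(z) = o(z) as z → ∞. Then, as z tends to infinity through the integers, the sum over all s-tuples of integers with g(z) ≤ x_s < x_{s-1} < ⋯ < x_1 and x_1 + ⋯ + x_s = z of (x_1 ⋯ x_s)^{-1+1/s} converges to s^s · λ_s. -/
open Finset Filter

/-- `λ_s = Γ(1/s)^s / (s^s · s!)`. -/
noncomputable def lambdaS (s : ℕ) : ℝ :=
  (Real.Gamma (1 / s)) ^ s / ((s : ℝ) ^ s * (Nat.factorial s))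


noncomputable def bc (t : ℝ) (n : ℕ) : ℝ := ∏ i ∈ Finset.range n, (t + i) / (i + 1)

lemma bc_zero (t : ℝ) : bc t 0 = 1 := by simp [bc]

lemma bc_succ (t : ℝ) (n : ℕ) : bc t (n + 1) = bc t n * ((t + n) / (n + 1)) := by
  rw [bc, Finset.prod_range_succ]; rfl

lemma bc_succ' (t : ℝ) (n : ℕ) : bc t (n + 1) * (n + 1) = bc t n * (t + n) := by
  rw [bc_succ]
  have : (n : ℝ) + 1 ≠ 0 := by positivity
  field_simp

lemma bc_pos {t : ℝ} (ht : 0 < t) (n : ℕ) : 0 < bc t n := by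
  apply Finset.prod_pos
  intro i _
  positivity

lemma bc_one (n : ℕ) : bc 1 n = 1 := by
  apply Finset.prod_eq_one
  intro i _
  have : (i : ℝ) + 1 ≠ 0 := by positivity
  field_simp
  ring

lemma bc_antitone {t : ℝ} (ht : 0 < t) (ht1 : t ≤ 1) : Antitone (bc t) := by
  apply antitone_nat_of_succ_le
  intro n
  rw [bc_succ]
  apply mul_le_of_le_one_right (bc_pos ht n).le
  rw [div_le_one (by positivity)]
  linarith

noncomputable def bs (t : ℝ) : PowerSeries ℝ := PowerSeries.mk (bc t)

lemma bs_zero : bs 0 = 1 := by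
  ext n
  cases n with
  | zero => simp [bs, bc_zero]
  | succ n =>
    have h : bc 0 (n + 1) = 0 := by
      apply Finset.prod_eq_zero (i := 0) (by simp)
      simp
    simp [bs, h, PowerSeries.coeff_one]

lemma bs_deriv (t : ℝ) :
    PowerSeries.derivative ℝ (bs t) = t • bs t + PowerSeries.X * PowerSeries.derivative ℝ (bs t) := by
  ext n
  rw [map_add, PowerSeries.coeff_derivative]
  cases n with
  | zero =>
    have := bc_succ' t 0
    simp [bs] at *
    linarith
  | succ n =>
    have := bc_succ' t (n+1)
    rw [PowerSeries.coeff_succ_X_mul, PowerSeries.coeff_derivative]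
    simp [bs] at *
    linarith

lemma bs_unique (t : ℝ) (F : PowerSeries ℝ) (h0 : PowerSeries.coeff 0 F = 1)
    (hF : PowerSeries.derivative ℝ F = t • F + PowerSeries.X * PowerSeries.derivative ℝ F) :
    F = bs t := by
  ext n
  induction n with
  | zero => simp [bs, bc_zero] at *; exact h0
  | succ n ih =>
    have h := congrArg (PowerSeries.coeff n) hF
    have h2 := bc_succ' t n
    have hn : (n : ℝ) + 1 ≠ 0 := by positivity
    have key : PowerSeries.coeff (n+1) F * (n + 1) = PowerSeries.coeff n F * (t + n) := by
      rw [map_add, PowerSeries.coeff_derivative] at h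
      cases n with
      | zero => simp at *; linarith
      | succ n =>
        rw [PowerSeries.coeff_succ_X_mul, PowerSeries.coeff_derivative] at h
        simp at *
        linarith
    apply mul_right_cancel₀ hn
    rw [key, ih]
    simp [bs, h2]

lemma bs_mul (t u : ℝ) : bs t * bs u = bs (t + u) := by
  apply bs_unique
  · simp [bs, bc_zero]
  · have h1 := bs_deriv t
    have h2 := bs_deriv u
    rw [Derivation.leibniz]
    simp only [smul_eq_mul]
    simp only [PowerSeries.smul_eq_C_mul, map_add] at *
    linear_combination (bs t) * h2 + (bs u) * h1

lemma bs_pow (t : ℝ) (k : ℕ) : bs t ^ k = bs (k * t) := by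
  induction k with
  | zero => simp [bs_zero]
  | succ k ih => rw [pow_succ, ih, bs_mul]; congr 1; push_cast; ring

lemma bc_sum (t : ℝ) (M : ℕ) : ∑ m ∈ Finset.range (M + 1), bc t m = bc (t + 1) M := by
  have h := congrArg (PowerSeries.coeff M) (bs_mul t 1)
  rw [PowerSeries.coeff_mul, Finset.Nat.sum_antidiagonal_eq_sum_range_succ_mk] at h
  simpa [bs, bc_one] using h

lemma bc_tendsto {t : ℝ} (ht : 0 < t) :
    Tendsto (fun n : ℕ => (n : ℝ) ^ (t - 1) / bc t n) atTop (nhds (Real.Gamma t)) := by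
  have h1 := Real.GammaSeq_tendsto_Gamma t
  have h2 : Tendsto (fun n : ℕ => (t + n) / (n : ℝ)) atTop (nhds 1) := by
    have : Tendsto (fun n : ℕ => t / (n : ℝ) + 1) atTop (nhds (0 + 1)) :=
      (tendsto_const_div_atTop_nhds_zero_nat t).add_const 1
    rw [zero_add] at this
    refine this.congr' ?_
    filter_upwards [eventually_gt_atTop 0] with n hn
    have : (n : ℝ) ≠ 0 := by positivity
    field_simp
  have h3 := h1.mul h2
  rw [mul_one] at h3
  refine h3.congr' ?_
  filter_upwards [eventually_gt_atTop 0] with n hn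
  have hn' : (0 : ℝ) < n := by positivity
  have e : bc t n = (∏ i ∈ Finset.range n, (t + i)) / n.factorial := by
    rw [bc, Finset.prod_div_distrib, ← Finset.prod_range_add_one_eq_factorial]
    push_cast
    rfl
  have hp : 0 < ∏ i ∈ Finset.range n, (t + (i : ℝ)) := Finset.prod_pos fun i _ => by positivity
  rw [e, Real.GammaSeq, Finset.prod_range_succ, Real.rpow_sub hn', Real.rpow_one]
  have : t + n ≠ 0 := by positivity
  field_simp

lemma bc_ratio_bdd {t : ℝ} (ht : 0 < t) :
    ∃ K > 0, ∀ n : ℕ, (n : ℝ) ^ (t - 1) / bc t n ≤ K := by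
  obtain ⟨K, hK⟩ := (bc_tendsto ht).bddAbove_range
  refine ⟨max K 1, by positivity, fun n => le_max_of_le_left (hK ⟨n, rfl⟩)⟩

lemma bc_le {t : ℝ} (ht : 0 < t) :
    ∃ K > 0, ∀ n : ℕ, 0 < n → bc t n ≤ K * (n : ℝ) ^ (t - 1) := by
  obtain ⟨K, hK⟩ := ((bc_tendsto ht).inv₀ (Real.Gamma_pos_of_pos ht).ne').bddAbove_range
  refine ⟨max K 1, by positivity, fun n hn => ?_⟩
  have h := le_max_of_le_left (c := 1) (hK ⟨n, rfl⟩)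
  simp only [inv_div] at h
  rwa [div_le_iff₀ (by positivity)] at h

/-- weight -/
noncomputable def wt (s : ℕ) (x : Fin s → ℕ) : ℝ := ∏ i, bc (1 / s) (x i)

lemma coeff_prod_pi {s : ℕ} (F : Fin s → PowerSeries ℝ) (z : ℕ) :
    PowerSeries.coeff z (∏ i, F i) =
      ∑ x ∈ Finset.piAntidiag univ z, ∏ i, PowerSeries.coeff (x i) (F i) := by
  rw [PowerSeries.coeff_prod]
  refine Finset.sum_bij' (fun l _ => ⇑l) (fun x _ => Finsupp.equivFunOnFinite.symm x) ?_ ?_ ?_ ?_ ?_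
  · intro l hl; simp at *; exact hl
  · intro l hl; simp at *; exact hl
  · intro l hl; ext; simp
  · intro l hl; ext; simp
  · intro l hl; rfl

lemma wt_nonneg (s : ℕ) (hs : 2 ≤ s) (x : Fin s → ℕ) : 0 ≤ wt s x := by
  apply Finset.prod_nonneg
  intro i _
  exact (bc_pos (by positivity) _).le

lemma wt_total (s : ℕ) (hs : 2 ≤ s) (z : ℕ) : ∑ x ∈ Finset.piAntidiag univ z, wt s x = 1 := by
  have h := coeff_prod_pi (fun _ : Fin s => bs (1 / s)) z
  have hs' : (s : ℝ) ≠ 0 := by positivity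
  rw [Finset.prod_const, bs_pow, Finset.card_univ, Fintype.card_fin, mul_one_div_cancel hs'] at h
  simp only [bs, PowerSeries.coeff_mk, bc_one] at h
  exact h.symm

lemma wt_small (s : ℕ) (hs : 2 ≤ s) (z M : ℕ) (hM : M ≤ z) (i : Fin s) :
    ∑ x ∈ (Finset.piAntidiag univ z).filter (fun x : Fin s → ℕ => x i ≤ M), wt s x
      ≤ bc (1 + 1 / s) M * bc (1 - 1 / s) (z - M) := by
  have hs0 : (0 : ℝ) < s := by positivity
  have hs2 : (2 : ℝ) ≤ s := by exact_mod_cast hs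
  have hα : (0 : ℝ) < 1 - 1 / s := by
    rw [sub_pos, div_lt_one hs0]; linarith
  have hα' : (1 : ℝ) - 1 / s ≤ 1 := by
    have : (0 : ℝ) < 1 / s := by positivity
    linarith
  let T : PowerSeries ℝ := PowerSeries.mk fun m => if m ≤ M then bc (1 / s) m else 0
  have h := coeff_prod_pi (Function.update (fun _ : Fin s => bs (1 / s)) i T) z
  rw [Finset.prod_update_of_mem (Finset.mem_univ i), Finset.prod_const, bs_pow] at h
  have hc : (((univ \ {i} : Finset (Fin s)).card : ℕ) : ℝ) * (1 / s) = 1 - 1 / s := by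
    rw [Finset.card_sdiff_of_subset (by simp)]
    simp only [Finset.card_univ, Fintype.card_fin, Finset.card_singleton]
    rw [Nat.cast_sub (by omega)]
    field_simp
    simp
  rw [hc] at h
  rw [Finset.sum_filter]
  have e : ∑ x ∈ Finset.piAntidiag univ z, (if x i ≤ M then wt s x else 0) =
      PowerSeries.coeff z (T * bs (1 - 1 / s)) := by
    rw [h]
    apply Finset.sum_congr rfl
    intro x _
    rw [← Finset.mul_prod_erase univ _ (Finset.mem_univ i), wt,
      ← Finset.mul_prod_erase univ _ (Finset.mem_univ i)]
    have : ∏ k ∈ univ.erase i, PowerSeries.coeff (x k)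
        (Function.update (fun _ : Fin s => bs (1 / s)) i T k) =
        ∏ k ∈ univ.erase i, bc (1 / s) (x k) := by
      apply Finset.prod_congr rfl
      intro k hk
      rw [Function.update_of_ne (Finset.ne_of_mem_erase hk)]
      simp [bs]
    rw [this]
    simp [T]
  rw [e, PowerSeries.coeff_mul, Finset.Nat.sum_antidiagonal_eq_sum_range_succ_mk]
  have e2 : bc (1 + 1 / s) M = ∑ m ∈ Finset.range (M + 1), bc (1 / s) m := by
    rw [bc_sum, add_comm]
  rw [e2, Finset.sum_mul]
  simp only [T, bs, PowerSeries.coeff_mk, ite_mul, zero_mul]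
  rw [← Finset.sum_filter]
  have e3 : (Finset.range z.succ).filter (fun m => m ≤ M) = Finset.range (M + 1) := by
    ext m; simp; omega
  rw [e3]
  apply Finset.sum_le_sum
  intro m hm
  simp at hm
  apply mul_le_mul_of_nonneg_left _ (bc_pos (by positivity) _).le
  exact bc_antitone hα hα' (by omega)

lemma wt_eq (s : ℕ) (hs : 2 ≤ s) (z M : ℕ) (i j : Fin s) (hij : i ≠ j) :
    ∑ x ∈ (Finset.piAntidiag univ z).filter
      (fun x : Fin s → ℕ => x i = x j ∧ ∀ k, M < x k), wt s x
      ≤ ((z : ℝ) + 1) ^ (s - 2) * bc (1 / s) M ^ s := by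
  have hs0 : (0 : ℝ) < s := by positivity
  have hs2 : (2 : ℝ) ≤ s := by exact_mod_cast hs
  have hα : (0 : ℝ) < 1 / s := by positivity
  have hα' : (1 : ℝ) / s ≤ 1 := by
    rw [div_le_one hs0]; linarith
  set S := (Finset.piAntidiag univ z).filter
      (fun x : Fin s → ℕ => x i = x j ∧ ∀ k, M < x k) with hS
  have hcard : S.card ≤ (z + 1) ^ (s - 2) := by
    have hsub : Fintype.card {k : Fin s // k ≠ i ∧ k ≠ j} = s - 2 := by
      rw [Fintype.card_subtype]
      have : (univ.filter fun k : Fin s => k ≠ i ∧ k ≠ j) = univ \ {i, j} := by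
        ext k; simp
      rw [this, Finset.card_sdiff_of_subset (by simp), Finset.card_pair hij]
      simp
    have hp : (Fintype.piFinset fun _ : {k : Fin s // k ≠ i ∧ k ≠ j} =>
        Finset.range (z + 1)).card = (z + 1) ^ (s - 2) := by
      rw [Fintype.card_piFinset]; simp only [Finset.card_range, Finset.prod_const, Finset.card_univ]; rw [hsub]
    rw [← hp]
    apply Finset.card_le_card_of_injOn (fun x k => x k.1)
    · intro x hx
      simp [hS] at hx
      simp only [Finset.mem_coe, Fintype.mem_piFinset, Finset.mem_range]
      intro k
      have : x k.1 ≤ ∑ i, x i := Finset.single_le_sum (fun _ _ => Nat.zero_le _) (Finset.mem_univ _)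
      have ex : ∑ i, x i = z := hx.1
      omega
    · intro x hx y hy hxy
      simp [hS] at hx hy
      have hoff : ∀ k, k ≠ i → k ≠ j → x k = y k := fun k h1 h2 => congrFun hxy ⟨k, h1, h2⟩
      have sx : ∀ w : Fin s → ℕ, ∑ k, w k = w i + (w j + ∑ k ∈ (univ.erase i).erase j, w k) := by
        intro w
        rw [Finset.add_sum_erase _ _ (by simp [hij.symm]), Finset.add_sum_erase _ _ (by simp)]
      have ex : ∑ i, x i = z := hx.1
      have ey : ∑ i, y i = z := hy.1
      have h1 := sx x
      have h2 := sx y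
      have h3 : ∑ k ∈ (univ.erase i).erase j, x k = ∑ k ∈ (univ.erase i).erase j, y k := by
        apply Finset.sum_congr rfl
        intro k hk
        simp at hk
        exact hoff k hk.2 hk.1
      funext k
      by_cases hki : k = i
      · subst hki; omega
      by_cases hkj : k = j
      · subst hkj; omega
      exact hoff k hki hkj
  have hterm : ∀ x ∈ S, wt s x ≤ bc (1 / s) M ^ s := by
    intro x hx
    simp [hS] at hx
    calc wt s x ≤ ∏ _i : Fin s, bc (1 / s) M := by
          apply Finset.prod_le_prod
          · intro k _; exact (bc_pos hα _).le
          · intro k _; exact bc_antitone hα hα' (hx.2.2 k).le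
      _ = _ := by simp
  have := Finset.sum_le_card_nsmul S _ _ hterm
  refine this.trans ?_
  rw [nsmul_eq_mul]
  apply mul_le_mul_of_nonneg_right _ (pow_nonneg (bc_pos hα _).le _)
  exact_mod_cast hcard

lemma symm_sum (s : ℕ) (U : Finset (Fin s → ℕ)) (hU : ∀ x (σ : Equiv.Perm (Fin s)), x ∈ U → x ∘ σ ∈ U)
    (f : (Fin s → ℕ) → ℝ) (hf : ∀ x (σ : Equiv.Perm (Fin s)), f (x ∘ σ) = f x) :
    ∑ x ∈ U.filter (fun x => Function.Injective x), f x =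
      s.factorial * ∑ x ∈ U.filter (fun x => StrictAnti x), f x := by
  classical
  have h1 : (s.factorial : ℝ) * ∑ x ∈ U.filter (fun x => StrictAnti x), f x =
      ∑ p ∈ (univ : Finset (Equiv.Perm (Fin s))) ×ˢ U.filter (fun x => StrictAnti x),
        f (p.2 ∘ p.1) := by
    rw [Finset.sum_product]
    simp only [hf]
    rw [Finset.sum_const, Finset.card_univ, Fintype.card_perm, Fintype.card_fin, nsmul_eq_mul]
  rw [h1]
  symm
  apply Finset.sum_nbij (fun p => p.2 ∘ p.1)
  · rintro ⟨σ, y⟩ h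
    simp at *
    exact ⟨hU _ _ h.1, h.2.injective⟩
  · rintro ⟨σ, y⟩ h ⟨τ, w⟩ h' he
    simp at *
    have : y = w := by
      rw [← StrictAnti.range_inj h.2 h'.2]
      have := congrArg Set.range he
      rwa [Set.range_comp, Set.range_comp, σ.surjective.range_eq, τ.surjective.range_eq,
        Set.image_univ, Set.image_univ] at this
    subst this
    refine ⟨?_, rfl⟩
    ext k
    have := h.2.injective (congrFun he k)
    rw [this]
  · intro x hx
    simp at hx
    simp only [Set.mem_image]
    let τ : Equiv.Perm (Fin s) := Fin.revPerm.trans (Tuple.sort x)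
    refine ⟨(τ.symm, x ∘ τ), ?_, ?_⟩
    · simp
      refine ⟨hU _ _ hx.1, ?_⟩
      have ha : Antitone (x ∘ τ) := by
        intro a b hab
        exact Tuple.monotone_sort x (Fin.rev_le_rev.mpr hab)
      exact ha.strictAnti_of_injective (hx.2.comp τ.injective)
    · funext k; simp
  · intro p _; rfl

lemma bad_small (s : ℕ) (hs : 2 ≤ s) (δ : ℝ) (hδ : 0 < δ) : ∃ ε : ℝ, 0 < ε ∧ ∀ᶠ z : ℕ in atTop,
    ∑ x ∈ (Finset.piAntidiag univ z).filter
      (fun x : Fin s → ℕ => (∃ i, x i ≤ ⌊ε * z⌋₊) ∨ ¬ Function.Injective x), wt s x ≤ δ := by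
  have hs0 : (0 : ℝ) < s := by positivity
  have hs2 : (2 : ℝ) ≤ s := by exact_mod_cast hs
  have hα : (0 : ℝ) < 1 / s := by positivity
  have hα1 : (0 : ℝ) < 1 - 1 / s := by
    rw [sub_pos, div_lt_one hs0]; linarith
  obtain ⟨K1, hK1, h1⟩ := bc_le (t := 1 + 1 / s) (by positivity)
  obtain ⟨K2, hK2, h2⟩ := bc_le hα1
  obtain ⟨K3, hK3, h3⟩ := bc_le hα
  obtain ⟨d, hd0, hd1, hd⟩ : ∃ d : ℝ, 0 < d ∧ d ≤ 1 ∧ s * (K1 * K2 * d) ≤ δ / 2 := by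
    refine ⟨min 1 (δ / 2 / (s * (K1 * K2))), by positivity, min_le_left _ _, ?_⟩
    have := min_le_right 1 (δ / 2 / (s * (K1 * K2)))
    rw [le_div_iff₀ (by positivity)] at this
    linarith
  set ε : ℝ := d ^ s / 2 with hε
  have hε0 : 0 < ε := by positivity
  have hε1 : ε ≤ 1 / 2 := by
    have : d ^ s ≤ 1 := pow_le_one₀ hd0.le hd1
    linarith
  have h2ε : (2 * ε) ^ (1 / (s : ℝ)) = d := by
    rw [hε, mul_div_cancel₀ _ (by norm_num), ← Real.rpow_natCast, ← Real.rpow_mul hd0.le,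
      mul_one_div_cancel hs0.ne', Real.rpow_one]
  refine ⟨ε, hε0, ?_⟩
  have hlim : Tendsto (fun z : ℕ => (s : ℝ) * s * (K3 ^ s * (2 / ε) ^ (s - 1)) / ((z : ℝ) + 1)) atTop (nhds 0) := by
    apply Tendsto.div_atTop tendsto_const_nhds
    exact tendsto_atTop_add_const_right _ _ tendsto_natCast_atTop_atTop
  have hz1 : ∀ᶠ z : ℕ in atTop, 2 / ε + 1 ≤ (z : ℝ) :=
    tendsto_natCast_atTop_atTop.eventually_ge_atTop _
  filter_upwards [hlim.eventually_le_const (show (0 : ℝ) < δ / 2 by positivity), hz1] with z hz hz1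
  set M := ⌊ε * z⌋₊ with hM
  have hz0 : (0 : ℝ) < z := lt_of_lt_of_le (by positivity) hz1
  have hMle : (M : ℝ) ≤ ε * z := Nat.floor_le (by positivity)
  have hMlt : ε * z < M + 1 := Nat.lt_floor_add_one _
  have hzε : 2 + ε ≤ ε * z := by
    have := mul_le_mul_of_nonneg_left hz1 hε0.le
    rw [mul_add, mul_div_cancel₀ _ hε0.ne'] at this
    linarith
  have hMge : ε * (z + 1) / 2 ≤ M := by linarith
  have hMpos : 0 < M := by
    have : (0 : ℝ) < M := lt_of_lt_of_le (by positivity) hMge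
    exact_mod_cast this
  have hMz2 : (M : ℝ) ≤ z / 2 := by nlinarith
  have hMz : M ≤ z := by
    have : (M : ℝ) ≤ z := by linarith
    exact_mod_cast this
  have hsub : ((z - M : ℕ) : ℝ) = z - M := Nat.cast_sub hMz
  have hzM : 0 < z - M := by
    have : (0 : ℝ) < ((z - M : ℕ) : ℝ) := by rw [hsub]; linarith
    exact_mod_cast this
  -- small coordinates
  have hA : ∀ i : Fin s, ∑ x ∈ (Finset.piAntidiag univ z).filter
      (fun x : Fin s → ℕ => x i ≤ M), wt s x ≤ K1 * K2 * d := by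
    intro i
    refine (wt_small s hs z M hMz i).trans ?_
    have a1 : bc (1 + 1 / s) M ≤ K1 * (ε * z) ^ (1 / (s : ℝ)) := by
      refine (h1 M hMpos).trans ?_
      rw [add_sub_cancel_left]
      gcongr
    have a2 : bc (1 - 1 / s) (z - M) ≤ K2 * ((z : ℝ) / 2) ^ (-(1 / (s : ℝ))) := by
      refine (h2 _ hzM).trans ?_
      rw [show (1 : ℝ) - 1 / s - 1 = -(1 / s) by ring]
      apply mul_le_mul_of_nonneg_left _ hK2.le
      apply Real.rpow_le_rpow_of_nonpos (by positivity) _ (by linarith)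
      rw [hsub]; linarith
    calc _ ≤ (K1 * (ε * z) ^ (1 / (s : ℝ))) * (K2 * ((z : ℝ) / 2) ^ (-(1 / (s : ℝ)))) :=
          mul_le_mul a1 a2 (bc_pos hα1 _).le (by positivity)
      _ = K1 * K2 * d := by
          rw [show ε * z = (2 * ε) * (z / 2) by ring, Real.mul_rpow (by positivity) (by positivity),
            h2ε, Real.rpow_neg (by positivity)]
          have : ((z : ℝ) / 2) ^ (1 / (s : ℝ)) ≠ 0 := by positivity
          field_simp
  have hB : ∀ i j : Fin s, i ≠ j → ∑ x ∈ (Finset.piAntidiag univ z).filter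
      (fun x : Fin s → ℕ => x i = x j ∧ ∀ k, M < x k), wt s x ≤
      K3 ^ s * (2 / ε) ^ (s - 1) / ((z : ℝ) + 1) := by
    intro i j hij
    refine (wt_eq s hs z M i j hij).trans ?_
    have hM0 : (0 : ℝ) < M := by exact_mod_cast hMpos
    have b1 : bc (1 / s) M ^ s ≤ K3 ^ s * (1 / (M : ℝ) ^ (s - 1)) := by
      calc bc (1 / s) M ^ s ≤ (K3 * (M : ℝ) ^ (1 / (s : ℝ) - 1)) ^ s :=
            pow_le_pow_left₀ (bc_pos hα _).le (h3 M hMpos) _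
        _ = _ := by
            rw [mul_pow, ← Real.rpow_natCast ((M : ℝ) ^ (1 / (s : ℝ) - 1)), ← Real.rpow_mul hM0.le,
              show (1 / (s : ℝ) - 1) * s = -((s - 1 : ℕ) : ℝ) by
                rw [Nat.cast_sub (by omega)]; field_simp; push_cast; ring,
              Real.rpow_neg hM0.le, Real.rpow_natCast, one_div]
    have b2 : 1 / (M : ℝ) ^ (s - 1) ≤ (2 / ε) ^ (s - 1) / ((z : ℝ) + 1) ^ (s - 1) := by
      rw [← div_pow, ← one_div_pow]
      apply pow_le_pow_left₀ (by positivity)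
      rw [div_div, div_le_div_iff₀ hM0 (by positivity)]
      linarith
    calc _ ≤ ((z : ℝ) + 1) ^ (s - 2) * (K3 ^ s * ((2 / ε) ^ (s - 1) / ((z : ℝ) + 1) ^ (s - 1))) := by
          apply mul_le_mul_of_nonneg_left _ (by positivity)
          exact b1.trans (mul_le_mul_of_nonneg_left b2 (by positivity))
      _ = _ := by
          have e : ((z : ℝ) + 1) ^ (s - 1) = ((z : ℝ) + 1) ^ (s - 2) * (z + 1) := by
            rw [← pow_succ]; congr 1; omega
          rw [e]
          have : ((z : ℝ) + 1) ^ (s - 2) ≠ 0 := by positivity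
          field_simp
  -- union bound
  have hpt : ∀ x : Fin s → ℕ, (if (∃ i, x i ≤ M) ∨ ¬ Function.Injective x then wt s x else 0) ≤
      ∑ i, (if x i ≤ M then wt s x else 0) +
      ∑ i, ∑ j, (if i ≠ j ∧ x i = x j ∧ ∀ k, M < x k then wt s x else 0) := by
    intro x
    have hw := wt_nonneg s hs x
    have n1 : ∀ i, 0 ≤ (if x i ≤ M then wt s x else 0) := by
      intro i; split_ifs <;> simp [hw]
    have n2 : ∀ i j, 0 ≤ (if i ≠ j ∧ x i = x j ∧ ∀ k, M < x k then wt s x else 0) := by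
      intro i j; split_ifs <;> simp [hw]
    have N1 := Finset.sum_nonneg (fun i (_ : i ∈ univ) => n1 i)
    have N2 : 0 ≤ ∑ i, ∑ j, (if i ≠ j ∧ x i = x j ∧ ∀ k, M < x k then wt s x else 0) :=
      Finset.sum_nonneg (fun i _ => Finset.sum_nonneg fun j _ => n2 i j)
    by_cases hsm : ∃ i, x i ≤ M
    · obtain ⟨i, hi⟩ := hsm
      have := Finset.single_le_sum (fun i (_ : i ∈ univ) => n1 i) (Finset.mem_univ i)
      rw [if_pos hi] at this
      rw [if_pos (Or.inl ⟨i, hi⟩)]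
      linarith
    · by_cases hin : Function.Injective x
      · rw [if_neg (by tauto)]
        linarith
      · rw [if_pos (Or.inr hin)]
        push Not at hsm
        simp only [Function.Injective, not_forall] at hin
        obtain ⟨i, j, hxij, hij⟩ := hin
        have t1 := Finset.single_le_sum (fun j (_ : j ∈ univ) => n2 i j) (Finset.mem_univ j)
        have t2 := Finset.single_le_sum
          (fun i (_ : i ∈ univ) => Finset.sum_nonneg fun j (_ : j ∈ univ) => n2 i j) (Finset.mem_univ i)
        rw [if_pos ⟨hij, hxij, hsm⟩] at t1
        linarith
  rw [Finset.sum_filter]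
  refine (Finset.sum_le_sum fun x _ => hpt x).trans ?_
  rw [Finset.sum_add_distrib, Finset.sum_comm]
  have c1 : ∑ i : Fin s, ∑ x ∈ Finset.piAntidiag univ z, (if x i ≤ M then wt s x else 0) ≤ δ / 2 := by
    refine (Finset.sum_le_card_nsmul univ _ (K1 * K2 * d) ?_).trans ?_
    · intro i _
      rw [← Finset.sum_filter]; exact hA i
    · simpa using hd
  have c2 : ∑ x ∈ Finset.piAntidiag univ z, ∑ i : Fin s, ∑ j : Fin s,
      (if i ≠ j ∧ x i = x j ∧ ∀ k, M < x k then wt s x else 0) ≤ δ / 2 := by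
    rw [Finset.sum_comm]
    refine le_trans ?_ hz
    have : ∀ i ∈ (univ : Finset (Fin s)), ∑ x ∈ Finset.piAntidiag univ z, ∑ j : Fin s,
      (if i ≠ j ∧ x i = x j ∧ ∀ k, M < x k then wt s x else 0) ≤
        s * (K3 ^ s * (2 / ε) ^ (s - 1) / ((z : ℝ) + 1)) := by
      intro i _
      rw [Finset.sum_comm]
      refine (Finset.sum_le_card_nsmul univ _ (K3 ^ s * (2 / ε) ^ (s - 1) / ((z : ℝ) + 1)) ?_).trans ?_
      · intro j _
        by_cases hij : i = j
        · simp [hij]; positivity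
        · simp only [ne_eq, hij, not_false_eq_true, true_and]
          rw [← Finset.sum_filter]; exact hB i j hij
      · simp
    refine (Finset.sum_le_card_nsmul univ _ _ this).trans ?_
    simp only [Finset.card_univ, Fintype.card_fin, nsmul_eq_mul]
    apply le_of_eq; ring
  linarith

lemma main_inj (s : ℕ) (hs : 2 ≤ s) (g : ℕ → ℝ) (hgpos : ∀ z, 0 < g z)
    (hgo : g =o[Filter.atTop] fun z : ℕ => (z : ℝ)) :
    Tendsto (fun z : ℕ => ∑ x ∈ (Finset.piAntidiag univ z).filter
        (fun x : Fin s → ℕ => (∀ i, g z ≤ (x i : ℝ)) ∧ Function.Injective x),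
          ∏ i, (x i : ℝ) ^ (-1 + 1 / (s : ℝ))) atTop (nhds (Real.Gamma (1 / s) ^ s)) := by
  have hs0 : (0 : ℝ) < s := by positivity
  have hα : (0 : ℝ) < 1 / s := by positivity
  set G := Real.Gamma (1 / s) with hG
  have hGpos : 0 < G := Real.Gamma_pos_of_pos hα
  set c : ℕ → ℝ := fun n => (n : ℝ) ^ (1 / (s : ℝ) - 1) / bc (1 / s) n with hc
  have hc0 : ∀ n, 0 ≤ c n := fun n => div_nonneg (by positivity) (bc_pos hα n).le
  obtain ⟨K, hK, hcK⟩ := bc_ratio_bdd hα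
  have hcl : Tendsto c atTop (nhds G) := bc_tendsto hα
  have hprod : ∀ x : Fin s → ℕ, ∏ i, (x i : ℝ) ^ (-1 + 1 / (s : ℝ)) = (∏ i, c (x i)) * wt s x := by
    intro x
    rw [wt, ← Finset.prod_mul_distrib]
    apply Finset.prod_congr rfl
    intro i _
    rw [hc]
    simp only
    rw [div_mul_cancel₀ _ (bc_pos hα _).ne', neg_add_eq_sub]
  rw [Metric.tendsto_nhds]
  intro η hη
  -- continuity of the product
  have hcont : Continuous (fun y : Fin s → ℝ => ∏ i, y i) := by fun_prop
  have hlimp : ∃ N : ℕ, ∀ x : Fin s → ℕ, (∀ i, N ≤ x i) → |(∏ i, c (x i)) - G ^ s| ≤ η / 4 := by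
    obtain ⟨ρ, hρ, hb⟩ := Metric.continuous_iff.mp hcont (fun _ => G) (η / 4) (by positivity)
    obtain ⟨N, hN⟩ := (Metric.tendsto_atTop.mp hcl) ρ hρ
    refine ⟨N, fun x hx => ?_⟩
    have := hb (fun i => c (x i)) (by
      rw [dist_pi_lt_iff hρ]
      intro i
      exact hN _ (hx i))
    simp only [Finset.prod_const, Finset.card_univ, Fintype.card_fin, Real.dist_eq] at this
    exact this.le
  obtain ⟨N, hN⟩ := hlimp
  set R := K ^ s + G ^ s with hR
  have hRpos : 0 < R := by positivity
  obtain ⟨ε, hε, hbad⟩ := bad_small s hs (η / 4 / R) (by positivity)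
  have hg1 : ∀ᶠ z : ℕ in atTop, g z ≤ ε * z := by
    filter_upwards [hgo.def hε] with z hz
    have := (le_abs_self (g z)).trans (by simpa using hz)
    simpa using this
  have hz1 : ∀ᶠ z : ℕ in atTop, (N : ℝ) / ε ≤ (z : ℝ) :=
    tendsto_natCast_atTop_atTop.eventually_ge_atTop _
  filter_upwards [hbad, hg1, hz1] with z hbad hg1 hz1
  set M := ⌊ε * z⌋₊ with hM
  have hMlt : ε * z < M + 1 := Nat.lt_floor_add_one _
  have hNM : N ≤ M := by
    apply Nat.le_floor
    rw [div_le_iff₀ hε] at hz1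
    linarith
  rw [Real.dist_eq]
  have hexp : ∑ x ∈ (Finset.piAntidiag univ z).filter
        (fun x : Fin s → ℕ => (∀ i, g z ≤ (x i : ℝ)) ∧ Function.Injective x),
          ∏ i, (x i : ℝ) ^ (-1 + 1 / (s : ℝ)) - G ^ s =
      ∑ x ∈ Finset.piAntidiag univ z,
        ((if (∀ i, g z ≤ (x i : ℝ)) ∧ Function.Injective x then ∏ i, c (x i) else 0) - G ^ s) * wt s x := by
    simp only [sub_mul]
    rw [Finset.sum_sub_distrib, ← Finset.mul_sum, wt_total s hs z, mul_one, Finset.sum_filter]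
    congr 1
    apply Finset.sum_congr rfl
    intro x _
    rw [hprod]
    split_ifs <;> simp
  rw [hexp]
  refine (Finset.abs_sum_le_sum_abs _ _).trans_lt ?_
  have hpt : ∀ x ∈ Finset.piAntidiag (univ : Finset (Fin s)) z,
      |((if (∀ i, g z ≤ (x i : ℝ)) ∧ Function.Injective x then ∏ i, c (x i) else 0) - G ^ s) * wt s x|
      ≤ η / 4 * wt s x +
        R * (if (∃ i, x i ≤ M) ∨ ¬ Function.Injective x then wt s x else 0) := by
    intro x _
    have hw := wt_nonneg s hs x
    rw [abs_mul, abs_of_nonneg hw]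
    by_cases hb : (∃ i, x i ≤ M) ∨ ¬ Function.Injective x
    · rw [if_pos hb, ← add_mul]
      apply mul_le_mul_of_nonneg_right _ hw
      have p0 : 0 ≤ ∏ i, c (x i) := Finset.prod_nonneg fun i _ => hc0 _
      have p1 : ∏ i, c (x i) ≤ K ^ s := by
        calc ∏ i, c (x i) ≤ ∏ _i : Fin s, K :=
              Finset.prod_le_prod (fun i _ => hc0 _) (fun i _ => hcK _)
          _ = K ^ s := by simp
      have p2 : 0 < G ^ s := by positivity
      have p3 : 0 < K ^ s := by positivity
      rw [abs_le]
      split_ifs <;> constructor <;> linarith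
    · rw [if_neg hb, mul_zero, add_zero]
      push Not at hb
      have hgood : (∀ i, g z ≤ (x i : ℝ)) ∧ Function.Injective x := by
        refine ⟨fun i => ?_, hb.2⟩
        have : ((M + 1 : ℕ) : ℝ) ≤ x i := by exact_mod_cast hb.1 i
        push_cast at this
        linarith
      rw [if_pos hgood]
      apply mul_le_mul_of_nonneg_right _ hw
      exact hN x fun i => hNM.trans (hb.1 i).le
  refine (Finset.sum_le_sum hpt).trans_lt ?_
  rw [Finset.sum_add_distrib, ← Finset.mul_sum, ← Finset.mul_sum, wt_total s hs z, ← Finset.sum_filter]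
  have := mul_le_mul_of_nonneg_left hbad hRpos.le
  rw [mul_div_cancel₀ _ hRpos.ne'] at this
  linarith

/-- Lemma 1 (iii): if `g` is positive with `g(z) = o(z)`, then the sum over tuples of
positive integers `g(z) ≤ x_s < ⋯ < x_1` with `x_1 + ⋯ + x_s = z` of `(x_1 ⋯ x_s)^{-1+1/s}`
tends to `s^s λ_s` as `z → ∞`. -/
theorem stmt_6 (s : ℕ) (hs : 2 ≤ s) (g : ℕ → ℝ) (hgpos : ∀ z, 0 < g z)
    (hgo : g =o[Filter.atTop] fun z : ℕ => (z : ℝ)) :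
    Filter.Tendsto
      (fun z : ℕ =>
        ∑ x ∈ (Fintype.piFinset fun _ : Fin s => Finset.Icc 1 z).filter
            (fun x : Fin s → ℕ =>
              (∀ i j : Fin s, i < j → x j < x i) ∧ (∀ i, g z ≤ (x i : ℝ)) ∧ ∑ i, x i = z),
          ∏ i, (x i : ℝ) ^ (-1 + 1 / (s : ℝ)))
      Filter.atTop (nhds ((s : ℝ) ^ s * lambdaS s)) := by
  have hmain := (main_inj s hs g hgpos hgo).div_const (s.factorial : ℝ)
  have hfac : (s.factorial : ℝ) ≠ 0 := by positivity
  have hs0 : (s : ℝ) ≠ 0 := by positivity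
  have hval : (s : ℝ) ^ s * lambdaS s = Real.Gamma (1 / s) ^ s / s.factorial := by
    rw [lambdaS]
    have : (s : ℝ) ^ s ≠ 0 := by positivity
    field_simp
  rw [hval]
  refine hmain.congr fun z => ?_
  rw [div_eq_iff hfac, mul_comm, ← Finset.filter_filter]
  rw [symm_sum s _ ?_ (fun x => ∏ i, (x i : ℝ) ^ (-1 + 1 / (s : ℝ))) ?_]
  · congr 1
    apply Finset.sum_congr _ fun _ _ => rfl
    ext x
    simp only [Finset.mem_filter, Finset.mem_piAntidiag, Fintype.mem_piFinset, Finset.mem_Icc]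
    constructor
    · rintro ⟨⟨⟨h1, _⟩, h2⟩, h3⟩
      refine ⟨fun i => ⟨?_, ?_⟩, fun i j hij => h3 hij, h2, h1⟩
      · have : (0 : ℝ) < x i := (hgpos z).trans_le (h2 i)
        exact_mod_cast this
      · rw [← h1]
        exact Finset.single_le_sum (f := x) (fun _ _ => Nat.zero_le _) (Finset.mem_univ i)
    · rintro ⟨_, h3, h2, h1⟩
      exact ⟨⟨⟨h1, fun i _ => Finset.mem_univ i⟩, h2⟩, fun i j hij => h3 i j hij⟩
  · intro x σ hx
    simp only [Finset.mem_filter, Finset.mem_piAntidiag] at *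
    refine ⟨⟨?_, fun i _ => Finset.mem_univ i⟩, fun i => hx.2 (σ i)⟩
    rw [← hx.1.1]
    exact Equiv.sum_comp σ x
  · intro x σ
    exact Equiv.prod_comp σ (fun i => (x i : ℝ) ^ (-1 + 1 / (s : ℝ)))
end

section
/- Let s ≥ 2 be an integer and c > 0. For an integer n ≥ 2 let Ω_n be the collection of all (s+1)-element sets ω = {x_1, …, x_{s+1}} of positive integers with x_{s+1} < (c·log n)^s < x_s < x_{s-1} < ⋯ < x_1 and x_1 + ⋯ + x_{s+1} = n, and for such ω set p(ω) = s^{-(s+1)} · ∏_{x∈ω} x^{-1+1/s}. Then, as n → ∞, ∏_{ω∈Ω_n} (1 − p(ω)) = exp(−(1+o(1))·c·λ_s·log n); equivalently, −log ∏_{ω∈Ω_n}(1 − p(ω)) is asymptotic to c·λ_s·log n. -/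
open Finset Filter

/-- The family `Ω_n` of `(s+1)`-element sets `ω = {x_1 > ⋯ > x_{s+1}}` of positive integers
with `x_1 + ⋯ + x_{s+1} = n` and `x_{s+1} < (c log n)^s < x_s` (i.e. exactly one element of
`ω` lies below `(c log n)^s` and no element equals it). -/
noncomputable def OmegaN (s : ℕ) (c : ℝ) (n : ℕ) : Finset (Finset ℕ) :=
  (Finset.powersetCard (s + 1) (Finset.Icc 1 n)).filter
    (fun ω : Finset ℕ => ω.sum id = n ∧
      (ω.filter fun x : ℕ => (x : ℝ) < (c * Real.log n) ^ s).card = 1 ∧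
      ∀ x ∈ ω, (x : ℝ) ≠ (c * Real.log n) ^ s)


noncomputable def bb (α : ℝ) (k : ℕ) : ℝ := ∏ j ∈ range k, (α + j) / (j + 1)

lemma bb_zero (α : ℝ) : bb α 0 = 1 := by simp [bb]
lemma bb_succ (α : ℝ) (k : ℕ) : bb α (k+1) = bb α k * ((α + k) / (k + 1)) := by
  simp only [bb, prod_range_succ]
lemma bb_nonneg {α : ℝ} (h : 0 ≤ α) (k : ℕ) : 0 ≤ bb α k :=
  prod_nonneg fun j _ => by positivity
lemma bb_anti {α : ℝ} (h : 0 ≤ α) (h1 : α ≤ 1) : Antitone (bb α) := by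
  refine antitone_nat_of_succ_le fun k => ?_
  rw [bb_succ]
  apply mul_le_of_le_one_right (bb_nonneg h k)
  rw [div_le_one (by positivity)]
  linarith
lemma bb_le_one {α : ℝ} (h : 0 ≤ α) (h1 : α ≤ 1) (k : ℕ) : bb α k ≤ 1 := by
  have := bb_anti h h1 (Nat.zero_le k)
  rwa [bb_zero] at this
lemma bb_one (k : ℕ) : bb 1 k = 1 := by
  induction k with
  | zero => exact bb_zero 1
  | succ k ih =>
    rw [bb_succ, ih, one_mul, add_comm]
    exact div_self (by positivity)
lemma bb_double {α : ℝ} (h : 0 ≤ α) (x : ℕ) : bb α x ≤ 2 * bb α (2 * x) := by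
  have hm : Monotone (fun k : ℕ => (k : ℝ) * bb α k) := by
    refine monotone_nat_of_le_succ fun k => ?_
    rw [bb_succ]
    have : ((k + 1 : ℕ) : ℝ) * (bb α k * ((α + k) / (k + 1))) = (α + k) * bb α k := by
      push_cast; field_simp
    rw [this]
    have := bb_nonneg h k
    nlinarith
  rcases Nat.eq_zero_or_pos x with rfl | hx
  · simp [bb_zero]
  · have := hm (show x ≤ 2 * x by omega)
    simp only at this
    push_cast at this
    have hx' : (0:ℝ) < x := by exact_mod_cast hx
    nlinarith

noncomputable def PP (α : ℝ) : PowerSeries ℝ := PowerSeries.mk (bb α)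

lemma PP_ode (α : ℝ) : (1 - PowerSeries.X) * PowerSeries.derivative (R := ℝ) (PP α) = PowerSeries.C α * PP α := by
  ext n
  rw [sub_mul, one_mul, map_sub, PowerSeries.coeff_derivative, PowerSeries.coeff_C_mul]
  cases n with
  | zero => simp [PP, bb_succ, bb_zero]
  | succ n =>
    rw [PowerSeries.coeff_succ_X_mul, PowerSeries.coeff_derivative]
    simp only [PP, PowerSeries.coeff_mk]
    rw [bb_succ α (n+1)]
    push_cast
    field_simp
    ring

lemma ode_unique (α : ℝ) (P : PowerSeries ℝ) (h0 : PowerSeries.coeff 0 P = 1)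
    (h : (1 - PowerSeries.X) * PowerSeries.derivative (R := ℝ) P = PowerSeries.C α * P) : P = PP α := by
  ext n
  induction n with
  | zero => rw [h0]; simp [PP, bb_zero]
  | succ n ih =>
    have h2 := congrArg (PowerSeries.coeff n) h
    rw [sub_mul, one_mul, map_sub, PowerSeries.coeff_derivative, PowerSeries.coeff_C_mul] at h2
    have h3 : PowerSeries.coeff n (PowerSeries.X * PowerSeries.derivative (R := ℝ) P) = n * PowerSeries.coeff n P := by
      cases n with
      | zero => simp
      | succ n => rw [PowerSeries.coeff_succ_X_mul, PowerSeries.coeff_derivative]; push_cast; ring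
    rw [h3, ih] at h2
    simp only [PP, PowerSeries.coeff_mk] at h2 ⊢
    rw [bb_succ]
    have : (n:ℝ) + 1 ≠ 0 := by positivity
    field_simp
    linarith

lemma PP_mul (α β : ℝ) : PP α * PP β = PP (α + β) := by
  apply ode_unique
  · simp [PP, bb_zero]
  · have h1 := PP_ode α
    have h2 := PP_ode β
    rw [Derivation.leibniz, map_add, smul_eq_mul, smul_eq_mul]
    linear_combination PP β * h1 + PP α * h2

lemma PP_pow (α : ℝ) (k : ℕ) : PP α ^ k = PP (k * α) := by
  induction k with
  | zero =>
    rw [pow_zero]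
    apply ode_unique <;> simp
  | succ k ih => rw [pow_succ, ih, PP_mul]; push_cast; ring_nf

lemma bb_tendsto {α : ℝ} (h : 0 < α) :
    Tendsto (fun n : ℕ => (n : ℝ) ^ (1 - α) * bb α n) atTop (nhds (1 / Real.Gamma α)) := by
  have h1 := Real.GammaSeq_tendsto_Gamma α
  have hG := (Real.Gamma_pos_of_pos h).ne'
  have h2 : Tendsto (fun n : ℕ => (n : ℝ) / (n + α)) atTop (nhds 1) := tendsto_natCast_div_add_atTop α
  have h3 := h2.div h1 hG
  refine h3.congr' ?_
  filter_upwards [eventually_gt_atTop 0] with n hn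
  have hn' : (0:ℝ) < n := by exact_mod_cast hn
  have hb : bb α n = (∏ j ∈ range n, (α + j)) / n.factorial := by
    rw [bb, prod_div_distrib]
    congr 1
    rw [← Finset.prod_range_add_one_eq_factorial]; push_cast; rfl
  simp only [Pi.div_apply]
  rw [Real.GammaSeq, hb, prod_range_succ, Real.rpow_sub hn', Real.rpow_one]
  have : (∏ j ∈ range n, (α + j)) ≠ 0 := prod_ne_zero_iff.2 fun j _ => by positivity
  have : (n:ℝ)^α ≠ 0 := by positivity
  have : (n:ℝ) + α ≠ 0 := by positivity
  have : α + (n:ℝ) ≠ 0 := by positivity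
  field_simp
  ring

def NN (p : PowerSeries ℝ) : Prop := ∀ m, 0 ≤ PowerSeries.coeff m p

lemma NN.add {p q} (hp : NN p) (hq : NN q) : NN (p + q) := fun m => by
  rw [map_add]; exact add_nonneg (hp m) (hq m)
lemma NN.mul {p q} (hp : NN p) (hq : NN q) : NN (p * q) := fun m => by
  rw [PowerSeries.coeff_mul]; exact sum_nonneg fun i _ => mul_nonneg (hp _) (hq _)
lemma NN.zero : NN 0 := fun m => by simp
lemma NN.one : NN 1 := fun m => by rw [PowerSeries.coeff_one]; split_ifs <;> norm_num
lemma NN.nat (k : ℕ) : NN (k : PowerSeries ℝ) := by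
  induction k with
  | zero => simpa using NN.zero
  | succ k ih => push_cast; exact ih.add NN.one
lemma NN.pow {p} (hp : NN p) (k : ℕ) : NN (p ^ k) := by
  induction k with
  | zero => simpa using NN.one
  | succ k ih => rw [pow_succ]; exact ih.mul hp
lemma NN.sum {ι : Type*} (s : Finset ι) (f : ι → PowerSeries ℝ) (h : ∀ i ∈ s, NN (f i)) :
    NN (∑ i ∈ s, f i) := fun m => by
  rw [map_sum]; exact sum_nonneg fun i hi => h i hi m
lemma NN.prod {ι : Type*} (s : Finset ι) (f : ι → PowerSeries ℝ) (h : ∀ i ∈ s, NN (f i)) :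
    NN (∏ i ∈ s, f i) := prod_induction _ _ (fun _ _ => NN.mul) NN.one h

noncomputable def eS (A : Finset ℕ) (w : ℕ → PowerSeries ℝ) (k : ℕ) : PowerSeries ℝ :=
  ∑ W ∈ powersetCard k A, ∏ x ∈ W, w x

lemma eS_zero (A w) : eS A w 0 = 1 := by simp [eS]
lemma eS_nn (A w k) (hw : ∀ x, NN (w x)) : NN (eS A w k) :=
  NN.sum _ _ fun _ _ => NN.prod _ _ fun _ _ => hw _
lemma eS_insert (A : Finset ℕ) (w : ℕ → PowerSeries ℝ) (k x : ℕ) (hx : x ∉ A) :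
    eS (insert x A) w (k+1) = eS A w (k+1) + w x * eS A w k := by
  unfold eS
  rw [powersetCard_succ_insert hx, sum_union, sum_image, mul_sum]
  · congr 1
    refine sum_congr rfl fun W hW => ?_
    rw [prod_insert]
    exact fun h => hx ((mem_powersetCard.1 hW).1 h)
  · intro W hW W' hW' h
    have h1 : x ∉ W := fun h => hx ((mem_powersetCard.1 hW).1 h)
    have h2 : x ∉ W' := fun h => hx ((mem_powersetCard.1 hW').1 h)
    rw [← erase_insert h1, h, erase_insert h2]
  · rw [disjoint_left]
    intro W hW hW'
    obtain ⟨V, _, rfl⟩ := mem_image.1 hW'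
    exact hx ((mem_powersetCard.1 hW).1 (mem_insert_self _ _))
lemma eS_one (A w) : eS A w 1 = ∑ x ∈ A, w x := by
  induction A using Finset.induction_on with
  | empty => simp [eS, powersetCard_one]
  | insert x A hx ih => rw [eS_insert _ _ _ _ hx, ih, eS_zero, sum_insert hx]; ring

lemma newton_aux (A : Finset ℕ) (w : ℕ → PowerSeries ℝ) (hw : ∀ x, NN (w x)) :
    (∀ k : ℕ, NN ((∑ x ∈ A, w x) * eS A w k - ((k+1:ℕ) : PowerSeries ℝ) * eS A w (k+1))) ∧
    (∀ k : ℕ, NN ((∑ x ∈ A, w x ^ 2) * eS A w k -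
      ((∑ x ∈ A, w x) * eS A w (k+1) - ((k+2:ℕ) : PowerSeries ℝ) * eS A w (k+2)))) := by
  induction A using Finset.induction_on with
  | empty =>
    have h : ∀ k, eS ∅ w (k+1) = 0 := fun k => by
      unfold eS
      rw [powersetCard_eq_empty.2 (by simp)]; simp
    constructor <;> intro k <;> simp [h, NN.zero]
  | insert x A hx ih =>
    obtain ⟨ih1, ih2⟩ := ih
    rw [sum_insert hx, sum_insert hx]
    have h1 := eS_one A w
    have hE := fun k => eS_nn A w k hw
    constructor
    · intro k
      cases k with
      | zero =>
        rw [eS_insert _ _ _ _ hx, eS_zero, eS_zero, h1]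
        convert NN.zero using 1
        push_cast; ring
      | succ k =>
        rw [eS_insert _ _ _ _ hx, eS_insert _ _ _ _ hx]
        convert ((ih1 (k+1)).add ((hw x).mul (ih1 k))).add (((hw x).pow 2).mul (hE k)) using 1
        push_cast; ring
    · intro k
      cases k with
      | zero =>
        rw [eS_insert _ _ _ _ hx, eS_insert _ _ _ _ hx, eS_zero, eS_zero]
        convert ih2 0 using 1
        rw [eS_zero, zero_add, zero_add, h1]
        push_cast; ring
      | succ k =>
        rw [eS_insert _ _ _ _ hx, eS_insert _ _ _ _ hx, eS_insert _ _ _ _ hx]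
        convert ((ih2 (k+1)).add ((hw x).mul (ih2 k))).add (((hw x).pow 3).mul (hE k)) using 1
        push_cast; ring

lemma newton_upper (A : Finset ℕ) (w : ℕ → PowerSeries ℝ) (hw : ∀ x, NN (w x)) (k : ℕ) :
    NN ((∑ x ∈ A, w x) ^ k - (k.factorial : PowerSeries ℝ) * eS A w k) := by
  induction k with
  | zero => simp [eS_zero, NN.zero]
  | succ k ih =>
    have hp : NN (∑ x ∈ A, w x) := NN.sum _ _ fun _ _ => hw _
    convert (hp.mul ih).add ((NN.nat k.factorial).mul ((newton_aux A w hw).1 k)) using 1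
    rw [Nat.factorial_succ]
    push_cast; ring

lemma newton_lower (A : Finset ℕ) (w : ℕ → PowerSeries ℝ) (hw : ∀ x, NN (w x)) (k : ℕ) :
    NN (((k+2).factorial : PowerSeries ℝ) * eS A w (k+2) - (∑ x ∈ A, w x) ^ (k+2) +
      (((k+2)^2 : ℕ) : PowerSeries ℝ) * (∑ x ∈ A, w x^2) * (∑ x ∈ A, w x) ^ k) := by
  have hp : NN (∑ x ∈ A, w x) := NN.sum _ _ fun _ _ => hw _
  have hp2 : NN (∑ x ∈ A, w x ^ 2) := NN.sum _ _ fun _ _ => (hw _).pow 2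
  induction k with
  | zero =>
    convert ((newton_aux A w hw).2 0).add ((NN.nat 3).mul hp2) using 1
    rw [eS_zero, zero_add, zero_add, eS_one]
    simp [Nat.factorial]
    ring
  | succ k ih =>
    have h3 := newton_upper A w hw (k+1)
    have h4 := (newton_aux A w hw).2 (k+1)
    convert (((hp.mul ih).add (((NN.nat (k+2).factorial).mul h4))).add
      ((NN.nat (k+2)).mul (hp2.mul h3))).add
      ((NN.nat (k+3)).mul (hp2.mul (hp.pow (k+1)))) using 1
    rw [Nat.factorial_succ (k+2), Nat.factorial_succ (k+1)]
    push_cast; ring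

noncomputable def ww (a : ℝ) (x : ℕ) : PowerSeries ℝ := PowerSeries.monomial x (bb a x)

lemma ww_nn {a : ℝ} (ha : 0 ≤ a) (x : ℕ) : NN (ww a x) := fun m => by
  rw [ww, PowerSeries.coeff_monomial]
  split_ifs
  · exact bb_nonneg ha x
  · exact le_rfl

lemma PP_nn {a : ℝ} (ha : 0 ≤ a) : NN (PP a) := fun m => by
  simp only [PP, PowerSeries.coeff_mk]; exact bb_nonneg ha m

lemma coeff_B (a : ℝ) (H : Finset ℕ) (i : ℕ) :
    PowerSeries.coeff i (∑ x ∈ H, ww a x) = if i ∈ H then bb a i else 0 := by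
  rw [map_sum]
  simp only [ww, PowerSeries.coeff_monomial]
  rw [sum_ite_eq]

lemma pow_sub_nn {P B : PowerSeries ℝ} (hB : NN B) (hP : NN P) (h : NN (P - B)) (j : ℕ) :
    NN (P ^ j - B ^ j) := by
  induction j with
  | zero => simp [NN.zero]
  | succ j ih =>
    convert (hP.mul ih).add (h.mul (hB.pow j)) using 1
    ring

lemma pow_sub_le {P B : PowerSeries ℝ} (hB : NN B) (hP : NN P) (h : NN (P - B)) (j : ℕ) :
    NN (((j+1 : ℕ) : PowerSeries ℝ) * ((P - B) * P ^ j) - (P ^ (j+1) - B ^ (j+1))) := by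
  induction j with
  | zero => simp [NN.zero]
  | succ j ih =>
    convert (hP.mul ih).add (h.mul (pow_sub_nn hB hP h (j+1))) using 1
    push_cast
    ring

lemma core (k : ℕ) (a : ℝ) (ha : a = 1 / ((k+2 : ℕ) : ℝ)) (H : Finset ℕ) (n t m J : ℕ) (δ : ℝ)
    (hH : ∀ x, t < x → x ≤ n → x ∈ H) (hδ : ∀ x ∈ H, bb a x ≤ δ) (hδ0 : 0 ≤ δ)
    (hmn : m ≤ n) (hJ : J + t ≤ m) :
    ((k+2).factorial : ℝ) * PowerSeries.coeff m (eS H (ww a) (k+2)) ≤ 1 ∧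
    1 - ((k+2:ℕ):ℝ) * ((t + 1) * bb (1 - a) J) - ((k+2:ℕ):ℝ)^2 * (2 * δ) ≤
      ((k+2).factorial : ℝ) * PowerSeries.coeff m (eS H (ww a) (k+2)) := by
  have hk : (2:ℝ) ≤ ((k+2 : ℕ) : ℝ) := by push_cast; linarith [Nat.cast_nonneg (α := ℝ) k]
  have ha0 : 0 < a := by rw [ha]; positivity
  have ha1 : a ≤ 1 := by rw [ha, div_le_one (by positivity)]; linarith
  have hka : ((k+2:ℕ):ℝ) * a = 1 := by rw [ha]; field_simp
  have hka1 : ((k+1:ℕ):ℝ) * a = 1 - a := by rw [← hka]; push_cast; ring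
  have hw := fun x => ww_nn ha0.le x
  set B := ∑ x ∈ H, ww a x with hBdef
  set D := ∑ x ∈ H, ww a x ^ 2 with hDdef
  have hB : NN B := NN.sum _ _ fun _ _ => hw _
  have hD : NN D := NN.sum _ _ fun _ _ => (hw _).pow 2
  have hP : NN (PP a) := PP_nn ha0.le
  have hPB : NN (PP a - B) := fun i => by
    rw [map_sub, coeff_B]
    simp only [PP, PowerSeries.coeff_mk]
    split_ifs
    · simp
    · simpa using bb_nonneg ha0.le i
  have hPs : PowerSeries.coeff m (PP a ^ (k+2)) = 1 := by
    rw [PP_pow, hka]; simp [PP, bb_one]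
  have hcN : ∀ (N : ℕ) (p : PowerSeries ℝ), PowerSeries.coeff m ((N : PowerSeries ℝ) * p) = N * PowerSeries.coeff m p := by
    intro N p
    rw [← nsmul_eq_mul, map_nsmul, nsmul_eq_mul]
  have hup := newton_upper H (ww a) hw (k+2) m
  have hlo := newton_lower H (ww a) hw k m
  have hps := pow_sub_nn hB hP hPB (k+2) m
  have hpl := pow_sub_le hB hP hPB (k+1) m
  rw [map_sub, hcN] at hup
  rw [map_add, map_sub, hcN, mul_assoc, hcN] at hlo
  rw [map_sub] at hps
  rw [map_sub, hcN, map_sub] at hpl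
  rw [hPs] at hps hpl
  refine ⟨by linarith, ?_⟩
  have e1 : PowerSeries.coeff m ((PP a - B) * PP a ^ (k+1)) ≤ (t + 1) * bb (1 - a) J := by
    rw [PP_pow, hka1, PowerSeries.coeff_mul, Finset.Nat.sum_antidiagonal_eq_sum_range_succ_mk]
    calc _ ≤ ∑ i ∈ range m.succ, if i ≤ t then bb (1 - a) J else 0 := by
          refine sum_le_sum fun i hi => ?_
          have him : i ≤ m := by simpa [Nat.lt_succ_iff] using hi
          rw [map_sub, coeff_B]
          simp only [PP, PowerSeries.coeff_mk]
          by_cases hit : i ≤ t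
          · rw [if_pos hit]
            have h1 : bb (1 - a) (m - i) ≤ bb (1 - a) J :=
              bb_anti (by linarith) (by linarith) (by omega)
            have h2 := bb_le_one ha0.le ha1 i
            have h3 := bb_nonneg ha0.le i
            have h4 := bb_nonneg (show 0 ≤ 1 - a by linarith) (m - i)
            split_ifs
            · rw [sub_self, zero_mul]; linarith
            · rw [sub_zero]; nlinarith
          · rw [if_neg hit, if_pos (hH i (by omega) (by omega))]; simp
      _ ≤ (t + 1) * bb (1 - a) J := by
          rw [← sum_filter, sum_const, nsmul_eq_mul]
          refine mul_le_mul_of_nonneg_right ?_ (bb_nonneg (by linarith) J)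
          have : #{i ∈ range m.succ | i ≤ t} ≤ #(range (t+1)) := card_le_card fun i hi => by
            simp at hi ⊢; omega
          rw [card_range] at this
          exact_mod_cast this
  have hDP : NN (PowerSeries.C (2 * δ) * PP a - D) := fun i => by
    rw [map_sub, PowerSeries.coeff_C_mul, hDdef, map_sum]
    simp only [PP, PowerSeries.coeff_mk]
    have hc : ∀ x, PowerSeries.coeff i (ww a x ^ 2) = if i = 2 * x then bb a x ^ 2 else 0 := by
      intro x
      rw [ww, pow_two, PowerSeries.monomial_mul_monomial, PowerSeries.coeff_monomial, two_mul, pow_two]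
    simp only [hc]
    rw [sub_nonneg]
    by_cases hex : ∃ x ∈ H, i = 2 * x
    · obtain ⟨x, hx, rfl⟩ := hex
      rw [sum_eq_single x]
      · rw [if_pos rfl]
        have h1 := bb_double ha0.le x
        have h2 := hδ x hx
        have h3 := bb_nonneg ha0.le x
        nlinarith
      · intro y _ hy
        rw [if_neg (by omega)]
      · intro h; exact absurd hx h
    · rw [sum_eq_zero]
      · have := bb_nonneg ha0.le i
        positivity
      · intro x hx
        rw [if_neg fun h => hex ⟨x, hx, h⟩]
  have e2 : PowerSeries.coeff m (D * B ^ k) ≤ 2 * δ := by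
    have h1 := hD.mul (pow_sub_nn hB hP hPB k) m
    have h2 := hDP.mul (hP.pow k) m
    rw [mul_sub, map_sub] at h1
    rw [sub_mul, map_sub, mul_assoc, ← pow_succ', PowerSeries.coeff_C_mul, PP_pow, hka1] at h2
    simp only [PP, PowerSeries.coeff_mk] at h2 
    simp only [PP] at h1
    have h3 := bb_le_one (show 0 ≤ 1 - a by linarith) (by linarith) m
    nlinarith
  have e3 := mul_le_mul_of_nonneg_left e1 (show (0:ℝ) ≤ ((k+2:ℕ):ℝ) by positivity)
  have e4 := mul_le_mul_of_nonneg_left e2 (show (0:ℝ) ≤ ((k+2:ℕ):ℝ)^2 by positivity)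
  rw [Nat.cast_pow] at hlo
  have hpl' : 0 ≤ ((k+2:ℕ):ℝ) * PowerSeries.coeff m ((PP a - B) * PP a ^ (k+1)) - (1 - PowerSeries.coeff m (B ^ (k+2))) := hpl
  linarith

lemma coeff_eS (a : ℝ) (H : Finset ℕ) (k m : ℕ) :
    PowerSeries.coeff m (eS H (ww a) k) =
      ∑ W ∈ (powersetCard k H).filter (fun W => W.sum id = m), ∏ x ∈ W, bb a x := by
  have hp : ∀ W : Finset ℕ, ∏ x ∈ W, ww a x = PowerSeries.monomial (W.sum id) (∏ x ∈ W, bb a x) := by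
    intro W
    induction W using Finset.induction_on with
    | empty => simp
    | insert x W hx ih =>
      rw [prod_insert hx, ih, ww, PowerSeries.monomial_mul_monomial, prod_insert hx, sum_insert hx]; rfl
  rw [eS, map_sum, sum_filter]
  refine sum_congr rfl fun W _ => ?_
  rw [hp, PowerSeries.coeff_monomial]
  simp only [eq_comm]

lemma weight_transfer (f b : ℕ → ℝ) (H : Finset ℕ) (k m : ℕ) (l u : ℝ) (hl : 0 ≤ l)
    (hb : ∀ x, 0 ≤ b x)
    (h1 : ∀ x ∈ H, l * b x ≤ f x) (h2 : ∀ x ∈ H, f x ≤ u * b x) :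
    l ^ k * (∑ W ∈ (powersetCard k H).filter (fun W => W.sum id = m), ∏ x ∈ W, b x) ≤
      ∑ W ∈ (powersetCard k H).filter (fun W => W.sum id = m), ∏ x ∈ W, f x ∧
    ∑ W ∈ (powersetCard k H).filter (fun W => W.sum id = m), ∏ x ∈ W, f x ≤
    u ^ k * (∑ W ∈ (powersetCard k H).filter (fun W => W.sum id = m), ∏ x ∈ W, b x) := by
  rw [mul_sum, mul_sum]
  constructor
  · refine sum_le_sum fun W hW => ?_
    obtain ⟨hs, hc⟩ := mem_powersetCard.1 (mem_filter.1 hW).1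
    rw [← hc, ← prod_const, ← prod_mul_distrib]
    exact prod_le_prod (fun x _ => mul_nonneg hl (hb x)) fun x hx => h1 x (hs hx)
  · refine sum_le_sum fun W hW => ?_
    obtain ⟨hs, hc⟩ := mem_powersetCard.1 (mem_filter.1 hW).1
    rw [← hc, ← prod_const, ← prod_mul_distrib]
    exact prod_le_prod (fun x hx => (mul_nonneg hl (hb x)).trans (h1 x (hs hx))) fun x hx => h2 x (hs hx)

lemma rsum_bounds (a : ℝ) (ha : 0 < a) (ha1 : a ≤ 1) (N : ℕ) :
    ((N:ℝ)+1) ^ a - 1 ≤ a * ∑ y ∈ Icc 1 N, (y:ℝ) ^ (-1 + a) ∧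
    a * ∑ y ∈ Icc 1 N, (y:ℝ) ^ (-1 + a) ≤ (N:ℝ) ^ a := by
  induction N with
  | zero => simp [Real.zero_rpow ha.ne']
  | succ N ih =>
    rw [sum_Icc_succ_top (by omega), mul_add]
    push_cast
    have hN : (0:ℝ) < (N:ℝ) + 1 := by positivity
    have key : ((N:ℝ)+1) ^ (-1 + a) = ((N:ℝ)+1) ^ a / (N+1) := by
      rw [Real.rpow_add hN, Real.rpow_neg_one]; field_simp
    have hp : (0:ℝ) < ((N:ℝ)+1) ^ a := by positivity
    rw [key]
    have u1 : ((N:ℝ)+1+1) ^ a ≤ ((N:ℝ)+1)^a + a * (((N:ℝ)+1)^a / (N+1)) := by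
      have := rpow_one_add_le_one_add_mul_self (s := 1/((N:ℝ)+1)) (by
        have : 0 < 1/((N:ℝ)+1) := by positivity
        linarith) ha.le ha1
      have e : (N:ℝ)+1+1 = (N+1) * (1 + 1/(N+1)) := by field_simp
      rw [e, Real.mul_rpow hN.le (by positivity)]
      calc _ ≤ ((N:ℝ)+1)^a * (1 + a * (1/((N:ℝ)+1))) := by gcongr
        _ = _ := by ring
    have u2 : (N:ℝ) ^ a ≤ ((N:ℝ)+1)^a - a * (((N:ℝ)+1)^a / (N+1)) := by
      have h1 : 1/((N:ℝ)+1) ≤ 1 := by rw [div_le_one hN]; linarith [Nat.cast_nonneg (α := ℝ) N]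
      have := rpow_one_add_le_one_add_mul_self (s := -(1/((N:ℝ)+1))) (by linarith) ha.le ha1
      have e : (N:ℝ) = (N+1) * (1 + -(1/(N+1))) := by field_simp; ring
      have : (N:ℝ)^a = ((N:ℝ)+1)^a * (1 + -(1/((N:ℝ)+1)))^a := by
        rw [← Real.mul_rpow hN.le (by linarith), ← e]
      rw [this]
      calc _ ≤ ((N:ℝ)+1)^a * (1 + a * -(1/((N:ℝ)+1))) := by gcongr
        _ = _ := by ring
    constructor <;> linarith

lemma Vbounds (a : ℝ) (ha : 0 < a) (ha1 : a ≤ 1) (T : ℝ) (hT : 0 < T) (n : ℕ) (hn : T ≤ n) :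
    T ^ a - 1 ≤ a * ∑ y ∈ (Icc 1 n).filter (fun x : ℕ => (x:ℝ) < T), (y:ℝ) ^ (-1 + a) ∧
    a * ∑ y ∈ (Icc 1 n).filter (fun x : ℕ => (x:ℝ) < T), (y:ℝ) ^ (-1 + a) ≤ T ^ a := by
  have hc : 0 < ⌈T⌉₊ := Nat.ceil_pos.2 hT
  have e : (Icc 1 n).filter (fun x : ℕ => (x:ℝ) < T) = Icc 1 (⌈T⌉₊ - 1) := by
    ext y
    have h2 : ⌈T⌉₊ ≤ n := Nat.ceil_le.2 hn
    rw [mem_filter, mem_Icc, mem_Icc, ← Nat.lt_ceil]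
    omega
  rw [e]
  have hb := rsum_bounds a ha ha1 (⌈T⌉₊ - 1)
  have e1 : (((⌈T⌉₊ - 1 : ℕ) : ℝ) + 1) = ⌈T⌉₊ := by exact_mod_cast Nat.sub_add_cancel hc
  rw [e1] at hb
  constructor
  · refine le_trans ?_ hb.1
    gcongr
    exact Nat.le_ceil T
  · refine hb.2.trans ?_
    gcongr
    exact (Nat.lt_ceil.1 (by omega)).le

lemma omega_sum (s : ℕ) (c : ℝ) (n : ℕ) (f : ℕ → ℝ) :
    ∑ ω ∈ OmegaN s c n, ∏ x ∈ ω, f x =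
    ∑ y ∈ (Icc 1 n).filter (fun x : ℕ => (x:ℝ) < (c * Real.log n) ^ s), f y *
      ∑ W ∈ (powersetCard s ((Icc 1 n).filter (fun x : ℕ => (c * Real.log n) ^ s < (x:ℝ)))).filter
        (fun W => W.sum id = n - y), ∏ x ∈ W, f x := by
  set T := (c * Real.log n) ^ s with hT
  simp only [mul_sum]
  rw [sum_sigma']
  symm
  have key : ∀ y : ℕ, ∀ W : Finset ℕ, (y:ℝ) < T → (∀ x ∈ W, T < (x:ℝ)) → y ∉ W ∧
      (insert y W).filter (fun x : ℕ => (x:ℝ) < T) = {y} := by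
    intro y W hy hW
    refine ⟨fun h => absurd (hW y h) (not_lt.2 hy.le), ?_⟩
    rw [filter_insert, if_pos hy, filter_eq_empty_iff.2]
    · rfl
    · intro x hx; exact not_lt.2 (hW x hx).le
  have hmem : ∀ p : (_ : ℕ) × Finset ℕ, p ∈ ((Icc 1 n).filter (fun x : ℕ => (x:ℝ) < T)).sigma (fun y =>
      (powersetCard s ((Icc 1 n).filter (fun x : ℕ => T < (x:ℝ)))).filter
        (fun W => W.sum id = n - y)) ↔ (1 ≤ p.1 ∧ p.1 ≤ n) ∧ (p.1 : ℝ) < T ∧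
        (∀ x ∈ p.2, (1 ≤ x ∧ x ≤ n) ∧ T < x) ∧ p.2.card = s ∧ p.2.sum id = n - p.1 := by
    intro p
    simp only [mem_sigma, mem_filter, mem_Icc, mem_powersetCard, subset_iff]
    tauto
  refine sum_bij (fun p _ => insert p.1 p.2) ?_ ?_ ?_ ?_
  · intro p hp
    obtain ⟨h1, h2, h3, h4, h5⟩ := (hmem p).1 hp
    obtain ⟨k1, k2⟩ := key p.1 p.2 h2 fun x hx => (h3 x hx).2
    rw [OmegaN, mem_filter, mem_powersetCard, ← hT]
    refine ⟨⟨?_, ?_⟩, ?_, ?_, ?_⟩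
    · intro x hx
      rcases mem_insert.1 hx with rfl | hx
      · exact mem_Icc.2 h1
      · exact mem_Icc.2 (h3 x hx).1
    · rw [card_insert_of_notMem k1, h4]
    · rw [sum_insert k1, h5]; simp only [id]; omega
    · rw [k2]; rfl
    · intro x hx
      rcases mem_insert.1 hx with rfl | hx
      · exact h2.ne
      · exact (h3 x hx).2.ne'
  · rintro ⟨y, W⟩ hp ⟨y', W'⟩ hp' h
    obtain ⟨h1, h2, h3, h4, h5⟩ := (hmem _).1 hp
    obtain ⟨k1, k2⟩ := key y W h2 fun x hx => (h3 x hx).2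
    obtain ⟨h1', h2', h3', h4', h5'⟩ := (hmem _).1 hp'
    obtain ⟨k1', k2'⟩ := key y' W' h2' fun x hx => (h3' x hx).2
    simp only at h
    rw [h, k2'] at k2
    have hy : y' = y := singleton_injective k2
    subst hy
    have : W = W' := by rw [← erase_insert k1, h, erase_insert k1']
    subst this
    rfl
  · intro ω hω
    rw [OmegaN, mem_filter, mem_powersetCard, ← hT] at hω
    obtain ⟨⟨h1, h2⟩, h3, h4, h5⟩ := hω
    obtain ⟨y, hy⟩ := card_eq_one.1 h4
    have hyω : y ∈ ω ∧ (y:ℝ) < T := by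
      have : y ∈ ω.filter (fun x : ℕ => (x:ℝ) < T) := by rw [hy]; simp
      exact mem_filter.1 this
    refine ⟨⟨y, ω.erase y⟩, (hmem _).2 ⟨mem_Icc.1 (h1 hyω.1), hyω.2, ?_, ?_, ?_⟩, insert_erase hyω.1⟩
    · intro x hx
      obtain ⟨hxy, hxω⟩ := mem_erase.1 hx
      refine ⟨mem_Icc.1 (h1 hxω), lt_of_le_of_ne (not_lt.1 fun hlt => hxy ?_) (h5 x hxω).symm⟩
      have : x ∈ ω.filter (fun x : ℕ => (x:ℝ) < T) := mem_filter.2 ⟨hxω, hlt⟩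
      rw [hy] at this
      exact mem_singleton.1 this
    · simp only; rw [card_erase_of_mem hyω.1, h2]; rfl
    · have := add_sum_erase ω id hyω.1
      simp only [id] at this ⊢
      simp only [id] at h3
      omega
  · intro p hp
    obtain ⟨h1, h2, h3, h4, h5⟩ := (hmem p).1 hp
    obtain ⟨k1, k2⟩ := key p.1 p.2 h2 fun x hx => (h3 x hx).2
    rw [prod_insert k1]

lemma f_eventually (a : ℝ) (ha : 0 < a) (ha1 : a < 1) (η : ℝ) (hη : 0 < η) :
    ∀ᶠ x : ℕ in atTop, (1 - η) * Real.Gamma a * bb a x ≤ (x:ℝ) ^ (-1 + a) ∧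
      (x:ℝ) ^ (-1 + a) ≤ (1 + η) * Real.Gamma a * bb a x ∧ bb a x ≤ η := by
  have hG := Real.Gamma_pos_of_pos ha
  have h1 := bb_tendsto ha
  have h2 : Tendsto (fun n : ℕ => Real.Gamma a * ((n : ℝ) ^ (1 - a) * bb a n)) atTop (nhds 1) := by
    have := h1.const_mul (Real.Gamma a)
    rwa [mul_one_div_cancel hG.ne'] at this
  have h3 : Tendsto (fun n : ℕ => (1 - η) * (Real.Gamma a * ((n : ℝ) ^ (1 - a) * bb a n))) atTop (nhds (1 - η)) := by
    simpa using h2.const_mul (1 - η)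
  have h4 : Tendsto (fun n : ℕ => (1 + η) * (Real.Gamma a * ((n : ℝ) ^ (1 - a) * bb a n))) atTop (nhds (1 + η)) := by
    simpa using h2.const_mul (1 + η)
  have h0 : Tendsto (fun n : ℕ => (n:ℝ) ^ (-(1 - a))) atTop (nhds 0) :=
    (tendsto_rpow_neg_atTop (by linarith)).comp tendsto_natCast_atTop_atTop
  have h5 := h0.mul h1
  rw [zero_mul] at h5
  filter_upwards [h3.eventually (gt_mem_nhds (show 1 - η < 1 by linarith)),
    h4.eventually (lt_mem_nhds (show 1 < 1 + η by linarith)),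
    h5.eventually (gt_mem_nhds hη), eventually_gt_atTop 0] with x e1 e2 e3 hx
  have hx' : (0:ℝ) < x := by exact_mod_cast hx
  have hp : (x:ℝ) ^ (-1 + a) * (x:ℝ) ^ (1 - a) = 1 := by
    rw [← Real.rpow_add hx']; simp
  have hpos : (0:ℝ) < (x:ℝ) ^ (-1 + a) := by positivity
  refine ⟨?_, ?_, ?_⟩
  · calc _ = (x:ℝ) ^ (-1 + a) * ((1 - η) * (Real.Gamma a * ((x : ℝ) ^ (1 - a) * bb a x))) := by
          linear_combination (-(1 - η) * Real.Gamma a * bb a x) * hp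
      _ ≤ (x:ℝ) ^ (-1 + a) * 1 := by gcongr
      _ = _ := mul_one _
  · calc _ = (x:ℝ) ^ (-1 + a) * 1 := (mul_one _).symm
      _ ≤ (x:ℝ) ^ (-1 + a) * ((1 + η) * (Real.Gamma a * ((x : ℝ) ^ (1 - a) * bb a x))) := by gcongr
      _ = _ := by linear_combination ((1 + η) * Real.Gamma a * bb a x) * hp
  · have e : (-(1 - a)) = -1 + a := by ring
    rw [e, ← mul_assoc, hp, one_mul] at e3
    exact e3.le

lemma T_littleo (s : ℕ) (c r : ℝ) (hr : 0 < r) :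
    Tendsto (fun n : ℕ => (c * Real.log n) ^ s / (n:ℝ) ^ r) atTop (nhds 0) := by
  have h := (isLittleO_log_rpow_rpow_atTop (s : ℝ) hr).tendsto_div_nhds_zero
  have h2 := (h.comp tendsto_natCast_atTop_atTop).const_mul (c ^ s)
  rw [mul_zero] at h2
  refine h2.congr fun n => ?_
  simp only [Function.comp, Real.rpow_natCast]
  rw [mul_pow]; ring

lemma T_atTop (s : ℕ) (hs : s ≠ 0) (c : ℝ) (hc : 0 < c) :
    Tendsto (fun n : ℕ => (c * Real.log n) ^ s) atTop atTop :=
  (tendsto_pow_atTop hs).comp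
    ((Real.tendsto_log_atTop.comp tendsto_natCast_atTop_atTop).const_mul_atTop hc)

lemma err_tendsto (s : ℕ) (c a : ℝ) (hc : 0 < c) (ha : 0 < a) (ha1 : a < 1) :
    Tendsto (fun n : ℕ => ((⌊(c * Real.log n) ^ s⌋₊ : ℝ) + 1) * bb (1 - a) (n / 2)) atTop (nhds 0) := by
  have hJ : Tendsto (fun n : ℕ => n / 2) atTop atTop := Nat.tendsto_div_const_atTop (by norm_num)
  have h1 := (bb_tendsto (show 0 < 1 - a by linarith)).comp hJ
  have h2 := (T_littleo s c a ha).add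
    ((tendsto_rpow_neg_atTop ha).comp tendsto_natCast_atTop_atTop)
  have h3 := (h2.const_mul (4 ^ a)).mul h1
  simp only [add_zero, mul_zero, zero_mul] at h3
  refine squeeze_zero' (Eventually.of_forall fun n => ?_) ?_ h3
  · exact mul_nonneg (by positivity) (bb_nonneg (by linarith) _)
  · filter_upwards [eventually_ge_atTop 4] with n hn
    simp only [Function.comp]
    have hn' : (0:ℝ) < n := by exact_mod_cast (by omega : 0 < n)
    have hlog : 0 ≤ Real.log n := Real.log_natCast_nonneg n
    have hT : 0 ≤ (c * Real.log n) ^ s := by positivity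
    have hfl := Nat.floor_le hT
    have hb := bb_nonneg (show 0 ≤ 1 - a by linarith) (n / 2)
    have e : (1 - (1 - a)) = a := by ring
    rw [e, ← mul_assoc]
    refine mul_le_mul_of_nonneg_right ?_ hb
    have hJ4 : (n:ℝ) / 4 ≤ ((n / 2 : ℕ) : ℝ) := by
      rw [div_le_iff₀ (by norm_num)]
      exact_mod_cast (by omega : n ≤ n / 2 * 4)
    have hJa : ((n:ℝ)/4) ^ a ≤ ((n / 2 : ℕ) : ℝ) ^ a := by gcongr
    have hone : 4 ^ a * (n:ℝ) ^ (-a) * ((n:ℝ)/4) ^ a = 1 := by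
      rw [Real.div_rpow hn'.le (by norm_num), Real.rpow_neg hn'.le]
      have : (n:ℝ)^a ≠ 0 := by positivity
      have : (4:ℝ)^a ≠ 0 := by positivity
      field_simp
    calc (⌊(c * Real.log n) ^ s⌋₊ : ℝ) + 1 ≤ ((c * Real.log n) ^ s + 1) * 1 := by linarith
      _ = ((c * Real.log n) ^ s + 1) * (4 ^ a * (n:ℝ) ^ (-a) * ((n:ℝ)/4) ^ a) := by rw [hone]
      _ ≤ ((c * Real.log n) ^ s + 1) * (4 ^ a * (n:ℝ) ^ (-a) * ((n / 2 : ℕ) : ℝ) ^ a) := by gcongr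
      _ = _ := by rw [Real.rpow_neg hn'.le]; ring

lemma inner_asymp (k : ℕ) (c a : ℝ) (hc : 0 < c) (ha : a = 1 / ((k+2 : ℕ) : ℝ)) (ε : ℝ) (hε : 0 < ε) :
    ∀ᶠ n : ℕ in atTop, ∀ y : ℕ, (y:ℝ) < (c * Real.log n) ^ (k+2) →
      |∑ W ∈ (powersetCard (k+2) ((Icc 1 n).filter (fun x : ℕ => (c * Real.log n) ^ (k+2) < (x:ℝ)))).filter
        (fun W => W.sum id = n - y), ∏ x ∈ W, (x:ℝ) ^ (-1 + a) -
        Real.Gamma a ^ (k+2) / (k+2).factorial| ≤ ε := by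
  have hk : (2:ℝ) ≤ ((k+2 : ℕ) : ℝ) := by push_cast; linarith [Nat.cast_nonneg (α := ℝ) k]
  have ha0 : 0 < a := by rw [ha]; positivity
  have ha1 : a < 1 := by rw [ha, div_lt_one (by positivity)]; linarith
  have hG := Real.Gamma_pos_of_pos ha0
  set G := Real.Gamma a with hGdef
  set F : ℝ := ((k+2).factorial : ℝ) with hF
  have hF0 : 0 < F := by rw [hF]; positivity
  obtain ⟨η, hη0, hη1, hφ, hψ⟩ : ∃ η : ℝ, 0 < η ∧ η < 1 ∧
      G ^ (k+2) / F - ε < ((1 - η) * G) ^ (k+2) * ((1 - ((k+2:ℕ):ℝ) * η - ((k+2:ℕ):ℝ)^2 * (2 * η)) / F) ∧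
      ((1 + η) * G) ^ (k+2) * (1 / F) < G ^ (k+2) / F + ε := by
    have c1 : Continuous fun η : ℝ => ((1 - η) * G) ^ (k+2) * ((1 - ((k+2:ℕ):ℝ) * η - ((k+2:ℕ):ℝ)^2 * (2 * η)) / F) := by fun_prop
    have c2 : Continuous fun η : ℝ => ((1 + η) * G) ^ (k+2) * (1 / F) := by fun_prop
    have t1 := (c1.tendsto 0).mono_left (nhdsWithin_le_nhds (s := Set.Ioi 0))
    have t2 := (c2.tendsto 0).mono_left (nhdsWithin_le_nhds (s := Set.Ioi 0))
    have e1 := t1.eventually (lt_mem_nhds (a := G ^ (k+2) / F - ε) (by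
      simp only [sub_zero, mul_zero, one_mul]
      rw [mul_one_div]; linarith))
    have e2 := t2.eventually (gt_mem_nhds (show ((1 + 0) * G) ^ (k+2) * (1 / F) < G ^ (k+2) / F + ε by
      rw [add_zero, one_mul, mul_one_div]; linarith))
    have e3 : ∀ᶠ η : ℝ in nhdsWithin 0 (Set.Ioi 0), 0 < η ∧ η < 1 :=
      Ioo_mem_nhdsGT (show (0:ℝ) < 1 by norm_num)
    obtain ⟨η, h1, h2, h3⟩ := (e1.and (e2.and e3)).exists
    exact ⟨η, h3.1, h3.2, h1, h2⟩
  obtain ⟨x0, hx0⟩ := eventually_atTop.1 (f_eventually a ha0 ha1 η hη0)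
  have hTn := T_littleo (k+2) c 1 one_pos
  filter_upwards [(err_tendsto (k+2) c a hc ha0 ha1).eventually (gt_mem_nhds hη0),
    (T_atTop (k+2) (by omega) c hc).eventually_ge_atTop (x0 : ℝ),
    hTn.eventually (gt_mem_nhds (show (0:ℝ) < 1/4 by norm_num)), eventually_gt_atTop 0]
    with n herr hT0 hT4 hn y hy
  have hn' : (0:ℝ) < n := by exact_mod_cast hn
  rw [Real.rpow_one, div_lt_iff₀ hn'] at hT4
  set T := (c * Real.log n) ^ (k+2) with hTdef
  have hT00 : 0 ≤ T := le_trans (Nat.cast_nonneg _) hT0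
  set H := (Icc 1 n).filter (fun x : ℕ => T < (x:ℝ)) with hH
  have hfl := Nat.floor_le hT00
  have hyt : y * 4 < n := by
    have : (y:ℝ) * 4 < n := by linarith
    exact_mod_cast this
  have htt : ⌊T⌋₊ * 4 < n := by
    have : (⌊T⌋₊:ℝ) * 4 < n := by linarith
    exact_mod_cast this
  have hHx : ∀ x ∈ H, x0 ≤ x := fun x hx => by
    have := (mem_filter.1 hx).2
    have : (x0:ℝ) ≤ x := by linarith
    exact_mod_cast this
  obtain ⟨hcu, hcl⟩ := core k a ha H n ⌊T⌋₊ (n - y) (n / 2) η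
    (fun x h1 h2 => mem_filter.2 ⟨mem_Icc.2 ⟨by omega, h2⟩, (Nat.floor_lt hT00).1 h1⟩)
    (fun x hx => (hx0 x (hHx x hx)).2.2) hη0.le (by omega) (by omega)
  obtain ⟨hwl, hwu⟩ := weight_transfer (fun x : ℕ => (x:ℝ) ^ (-1 + a)) (bb a) H (k+2) (n - y)
    ((1 - η) * G) ((1 + η) * G) (mul_nonneg (by linarith) hG.le) (bb_nonneg ha0.le)
    (fun x hx => (hx0 x (hHx x hx)).1) (fun x hx => (hx0 x (hHx x hx)).2.1)
  rw [← coeff_eS] at hwl hwu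
  set E := PowerSeries.coeff (n - y) (eS H (ww a) (k+2)) with hE
  have hE1 : E ≤ 1 / F := by rw [le_div_iff₀ hF0]; linarith
  have hE2 : (1 - ((k+2:ℕ):ℝ) * η - ((k+2:ℕ):ℝ)^2 * (2 * η)) / F ≤ E := by
    rw [div_le_iff₀ hF0]
    have := mul_le_mul_of_nonneg_left herr.le (show (0:ℝ) ≤ ((k+2:ℕ):ℝ) by positivity)
    linarith
  have g1 := mul_le_mul_of_nonneg_left hE1 (show 0 ≤ ((1 + η) * G) ^ (k+2) by positivity)
  have g2 := mul_le_mul_of_nonneg_left hE2 (show 0 ≤ ((1 - η) * G) ^ (k+2) from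
    pow_nonneg (mul_nonneg (by linarith) hG.le) _)
  rw [abs_le]
  constructor <;> linarith

lemma sum_asymp (k : ℕ) (c a : ℝ) (hc : 0 < c) (ha : a = 1 / ((k+2 : ℕ) : ℝ)) :
    Tendsto (fun n : ℕ => (∑ ω ∈ OmegaN (k+2) c n, ∏ x ∈ ω, (x:ℝ) ^ (-1 + a)) / Real.log n) atTop
      (nhds (Real.Gamma a ^ (k+2) / (k+2).factorial * (c / a))) := by
  have hk : (2:ℝ) ≤ ((k+2 : ℕ) : ℝ) := by push_cast; linarith [Nat.cast_nonneg (α := ℝ) k]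
  have ha0 : 0 < a := by rw [ha]; positivity
  have ha1 : a < 1 := by rw [ha, div_lt_one (by positivity)]; linarith
  set K := Real.Gamma a ^ (k+2) / (k+2).factorial with hK
  let V : ℕ → ℝ := fun n => ∑ y ∈ (Icc 1 n).filter (fun x : ℕ => (x:ℝ) < (c * Real.log n) ^ (k+2)), (y:ℝ) ^ (-1 + a)
  have hlog : Tendsto (fun n : ℕ => Real.log n) atTop atTop :=
    Real.tendsto_log_atTop.comp tendsto_natCast_atTop_atTop
  have hVb : ∀ᶠ n : ℕ in atTop, c * Real.log n - 1 ≤ a * V n ∧ a * V n ≤ c * Real.log n := by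
    have hTn := T_littleo (k+2) c 1 one_pos
    filter_upwards [hTn.eventually (gt_mem_nhds one_pos), hlog.eventually_gt_atTop 0,
      eventually_gt_atTop 0] with n h1 h2 hn
    have hn' : (0:ℝ) < n := by exact_mod_cast hn
    rw [Real.rpow_one, div_lt_one hn'] at h1
    have := Vbounds a ha0 ha1.le ((c * Real.log n) ^ (k+2)) (by positivity) n h1.le
    have e : ((c * Real.log n) ^ (k+2)) ^ a = c * Real.log n := by
      rw [ha, one_div, Real.pow_rpow_inv_natCast (by positivity) (by omega)]
    rw [e] at this
    exact this
  have hV : Tendsto (fun n => V n / Real.log n) atTop (nhds (c / a)) := by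
    have l1 : Tendsto (fun n : ℕ => c / a - (1 / a) * (Real.log n)⁻¹) atTop (nhds (c / a)) := by
      simpa using (hlog.inv_tendsto_atTop.const_mul (1 / a)).const_sub (c / a)
    refine tendsto_of_tendsto_of_tendsto_of_le_of_le' l1 tendsto_const_nhds ?_ ?_
    · filter_upwards [hVb, hlog.eventually_gt_atTop 0] with n hn hl
      rw [le_div_iff₀ hl]
      have : (c / a - (1 / a) * (Real.log n)⁻¹) * Real.log n = (c * Real.log n - 1) / a := by
        field_simp
      rw [this, div_le_iff₀ ha0]; linarith
    · filter_upwards [hVb, hlog.eventually_gt_atTop 0] with n hn hl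
      rw [div_le_div_iff₀ hl ha0]; linarith
  have hdiff : Tendsto (fun n : ℕ => (∑ ω ∈ OmegaN (k+2) c n, ∏ x ∈ ω, (x:ℝ) ^ (-1 + a)) / Real.log n -
      K * (V n / Real.log n)) atTop (nhds 0) := by
    rw [Metric.tendsto_nhds]
    intro ε hε
    set ε' := ε / (c / a) / 2 with hε'
    have hε'0 : 0 < ε' := by positivity
    filter_upwards [inner_asymp k c a hc ha ε' hε'0, hVb, hlog.eventually_gt_atTop 0] with n h1 h2 hl
    rw [dist_zero_right, Real.norm_eq_abs, omega_sum]
    have e : ∀ S : ℝ, S / Real.log n - K * (V n / Real.log n) = (S - V n * K) / Real.log n := fun S => by ring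
    rw [e, abs_div, abs_of_pos hl, div_lt_iff₀ hl]
    have hle : V n * ε' ≤ ε / 2 * Real.log n := by
      have : V n ≤ c * Real.log n / a := by rw [le_div_iff₀ ha0]; linarith
      calc _ ≤ (c * Real.log n / a) * ε' := by gcongr
        _ = _ := by rw [hε']; field_simp
    have hlt : ε / 2 * Real.log n < ε * Real.log n := by nlinarith
    refine lt_of_le_of_lt (le_trans ?_ hle) hlt
    simp only [V]
    rw [sum_mul, sum_mul, ← sum_sub_distrib]
    refine (abs_sum_le_sum_abs _ _).trans (sum_le_sum fun y hy => ?_)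
    rw [← mul_sub, abs_mul, abs_of_nonneg (by positivity)]
    refine mul_le_mul_of_nonneg_left ?_ (by positivity)
    exact h1 y (mem_filter.1 hy).2
  have := hdiff.add (hV.const_mul K)
  simpa using this

lemma omega_small (s : ℕ) (c a : ℝ) (n : ℕ) (ha1 : a < 1) (hn : 0 < n) (ω) (hω : ω ∈ OmegaN s c n) :
    0 ≤ ∏ x ∈ ω, (x:ℝ) ^ (-1 + a) ∧ ∏ x ∈ ω, (x:ℝ) ^ (-1 + a) ≤ ((n:ℝ) / (s+1)) ^ (-1 + a) := by
  rw [OmegaN, mem_filter, mem_powersetCard] at hω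
  obtain ⟨⟨h1, h2⟩, h3, -, -⟩ := hω
  refine ⟨prod_nonneg fun _ _ => by positivity, ?_⟩
  obtain ⟨x, hx, hxn⟩ : ∃ x ∈ ω, (n:ℝ) / (s+1) ≤ x := by
    by_contra! hcon
    have hne : ω.Nonempty := card_pos.1 (by omega)
    have := sum_lt_sum_of_nonempty hne hcon
    rw [sum_const, h2, nsmul_eq_mul] at this
    have e : ∑ i ∈ ω, (i:ℝ) = n := by
      rw [← h3]; push_cast; rfl
    rw [e] at this
    push_cast at this
    rw [mul_div_cancel₀ _ (by positivity)] at this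
    exact lt_irrefl _ this
  rw [← mul_prod_erase ω _ hx]
  have hp : ∏ x ∈ ω.erase x, (x:ℝ) ^ (-1 + a) ≤ 1 := by
    refine prod_le_one (fun _ _ => by positivity) fun y hy => ?_
    have hy1 : 1 ≤ y := (mem_Icc.1 (h1 (mem_of_mem_erase hy))).1
    exact Real.rpow_le_one_of_one_le_of_nonpos (by exact_mod_cast hy1) (by linarith)
  have hn' : (0:ℝ) < n := by exact_mod_cast hn
  calc _ ≤ (x:ℝ) ^ (-1 + a) * 1 := by gcongr
    _ = (x:ℝ) ^ (-1 + a) := mul_one _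
    _ ≤ _ := Real.rpow_le_rpow_of_nonpos (by positivity) hxn (by linarith)

/-- Lemma 4 (Lemma `prod`): with `p(ω) = s^{-(s+1)} ∏_{x ∈ ω} x^{-1+1/s}`, one has
`∏_{ω ∈ Ω_n} (1 - p(ω)) = exp(-(1+o(1)) c λ_s log n)`, i.e.
`-log ∏_{ω ∈ Ω_n} (1 - p(ω)) ∼ c λ_s log n` as `n → ∞`. -/
theorem stmt_9 (s : ℕ) (hs : 2 ≤ s) (c : ℝ) (hc : 0 < c) :
    Filter.Tendsto
      (fun n : ℕ =>
        (-Real.log (∏ ω ∈ OmegaN s c n,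
          (1 - ((s : ℝ) ^ (s + 1))⁻¹ * ∏ x ∈ ω, (x : ℝ) ^ (-1 + 1 / (s : ℝ))))) /
          Real.log n)
      Filter.atTop (nhds (c * lambdaS s)) := by

  obtain ⟨k, rfl⟩ : ∃ k, s = k + 2 := ⟨s - 2, by omega⟩
  set a : ℝ := 1 / ((k+2 : ℕ) : ℝ) with ha
  have hk : (2:ℝ) ≤ ((k+2 : ℕ) : ℝ) := by push_cast; linarith [Nat.cast_nonneg (α := ℝ) k]
  have ha0 : 0 < a := by rw [ha]; positivity
  have ha1 : a < 1 := by rw [ha, div_lt_one (by positivity)]; linarith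
  have hS := (sum_asymp k c a hc ha).const_mul ((((k+2:ℕ) : ℝ) ^ (k+2+1))⁻¹)
  have elim : (((k+2:ℕ) : ℝ) ^ (k+2+1))⁻¹ * (Real.Gamma a ^ (k+2) / (k+2).factorial * (c / a)) =
      c * lambdaS (k+2) := by
    rw [lambdaS, ← ha, show c / a = c * ((k+2:ℕ):ℝ) by rw [ha]; field_simp, pow_succ]
    have : ((k+2:ℕ):ℝ) ≠ 0 := by positivity
    field_simp
  rw [elim] at hS
  have hη : Tendsto (fun n : ℕ => ((n:ℝ) / ((k+2:ℕ)+1)) ^ (-1 + a)) atTop (nhds 0) := by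
    have h1 : Tendsto (fun n : ℕ => (n:ℝ) / (((k+2:ℕ):ℝ)+1)) atTop atTop :=
      tendsto_natCast_atTop_atTop.atTop_div_const (by positivity)
    have h2 := (tendsto_rpow_neg_atTop (show 0 < 1 - a by linarith)).comp h1
    refine h2.congr fun n => ?_
    simp only [Function.comp]
    congr 1; ring
  have hU := hS.mul ((hη.const_sub 1).inv₀ (by norm_num))
  simp only [sub_zero, inv_one, mul_one] at hU
  have hboth : ∀ᶠ n : ℕ in atTop,
      (((k+2:ℕ) : ℝ) ^ (k+2+1))⁻¹ * ((∑ ω ∈ OmegaN (k+2) c n, ∏ x ∈ ω, (x:ℝ) ^ (-1 + a)) / Real.log n) ≤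
      (-Real.log (∏ ω ∈ OmegaN (k+2) c n,
          (1 - (((k+2:ℕ) : ℝ) ^ (k+2 + 1))⁻¹ * ∏ x ∈ ω, (x : ℝ) ^ (-1 + a)))) / Real.log n ∧
      (-Real.log (∏ ω ∈ OmegaN (k+2) c n,
          (1 - (((k+2:ℕ) : ℝ) ^ (k+2 + 1))⁻¹ * ∏ x ∈ ω, (x : ℝ) ^ (-1 + a)))) / Real.log n ≤
      (((k+2:ℕ) : ℝ) ^ (k+2+1))⁻¹ * ((∑ ω ∈ OmegaN (k+2) c n, ∏ x ∈ ω, (x:ℝ) ^ (-1 + a)) / Real.log n) *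
        (1 - ((n:ℝ) / ((k+2:ℕ)+1)) ^ (-1 + a))⁻¹ := by
    filter_upwards [hη.eventually (gt_mem_nhds one_pos), eventually_gt_atTop 0] with n h1 hn
    have hl : 0 ≤ Real.log n := Real.log_natCast_nonneg n
    set η := ((n:ℝ) / ((k+2:ℕ)+1)) ^ (-1 + a) with hηd
    set q := (((k+2:ℕ) : ℝ) ^ (k+2+1))⁻¹ with hq
    have hq0 : 0 ≤ q := by rw [hq]; positivity
    have hq1 : q ≤ 1 := inv_le_one_of_one_le₀ (one_le_pow₀ (by linarith))
    have hp : ∀ ω ∈ OmegaN (k+2) c n, 0 ≤ q * ∏ x ∈ ω, (x : ℝ) ^ (-1 + a) ∧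
        q * ∏ x ∈ ω, (x : ℝ) ^ (-1 + a) ≤ η := fun ω hω => by
      obtain ⟨g1, g2⟩ := omega_small (k+2) c a n ha1 hn ω hω
      exact ⟨mul_nonneg hq0 g1, (mul_le_of_le_one_left g1 hq1).trans g2⟩
    have hlogp : ∀ p : ℝ, 0 ≤ p → p ≤ η → p ≤ -Real.log (1 - p) ∧ -Real.log (1 - p) ≤ p * (1 - η)⁻¹ := by
      intro p hp0 hpη
      have hpos : 0 < 1 - p := by linarith
      constructor
      · linarith [Real.log_le_sub_one_of_pos hpos]
      · have g := Real.one_sub_inv_le_log_of_pos hpos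
        have g2 : (1 - p)⁻¹ - 1 = p * (1 - p)⁻¹ := by field_simp; ring
        have g3 : p * (1 - p)⁻¹ ≤ p * (1 - η)⁻¹ := by
          gcongr
        linarith
    rw [Real.log_prod (fun ω hω => by
      have := hp ω hω
      have : 0 < 1 - q * ∏ x ∈ ω, (x : ℝ) ^ (-1 + a) := by linarith
      exact this.ne'), ← sum_neg_distrib, ← mul_div_assoc, mul_sum, div_mul_eq_mul_div, sum_mul]
    constructor
    · refine div_le_div_of_nonneg_right (sum_le_sum fun ω hω => ?_) hl
      exact (hlogp _ (hp ω hω).1 (hp ω hω).2).1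
    · refine div_le_div_of_nonneg_right (sum_le_sum fun ω hω => ?_) hl
      exact (hlogp _ (hp ω hω).1 (hp ω hω).2).2
  exact tendsto_of_tendsto_of_tendsto_of_le_of_le' hS hU (hboth.mono fun _ h => h.1) (hboth.mono fun _ h => h.2)
end

section
/- Let s ≥ 2 be an integer and c > 0. For an integer n ≥ 2 let Ω_n be the collection of all (s+1)-element sets ω = {x_1, …, x_{s+1}} of positive integers with x_{s+1} < (c·log n)^s < x_s < x_{s-1} < ⋯ < x_1 and x_1 + ⋯ + x_{s+1} = n. Define Δ_n = Σ s^{-|ω∪ω'|} · ∏_{x∈ω∪ω'} x^{-1+1/s}, where the sum runs over all ordered pairs (ω, ω') of elements of Ω_n with ω ≠ ω' and ω ∩ ω' ≠ ∅. Then Δ_n ≤ (1+o(1)) · c · λ_s^2 · log n as n → ∞; in particular limsup_{n→∞} Δ_n / log n ≤ c·λ_s^2. -/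
open Finset Filter

/-- The correlation term
`Δ_n = Σ_{ω ≠ ω' ∈ Ω_n, ω ∩ ω' ≠ ∅} s^{-|ω ∪ ω'|} ∏_{x ∈ ω ∪ ω'} x^{-1+1/s}`. -/
noncomputable def DeltaN (s : ℕ) (c : ℝ) (n : ℕ) : ℝ :=
  ∑ p ∈ (OmegaN s c n ×ˢ OmegaN s c n).filter
      (fun p : Finset ℕ × Finset ℕ => p.1 ≠ p.2 ∧ (p.1 ∩ p.2).Nonempty),
    ((s : ℝ) ^ (p.1 ∪ p.2).card)⁻¹ * ∏ x ∈ p.1 ∪ p.2, (x : ℝ) ^ (-1 + 1 / (s : ℝ))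


noncomputable def bt (θ : ℝ) (m : ℕ) : ℝ := ∏ i ∈ range m, ((θ + i) / (i + 1))

lemma bt_succ (θ : ℝ) (m : ℕ) : bt θ (m+1) = bt θ m * ((θ + m) / (m + 1)) := by
  unfold bt; rw [prod_range_succ]

lemma bt_nonneg {θ : ℝ} (h : 0 ≤ θ) (m : ℕ) : 0 ≤ bt θ m := by
  unfold bt; exact prod_nonneg fun i _ => by positivity

lemma bt_one (m : ℕ) : bt 1 m = 1 := by
  unfold bt; apply prod_eq_one; intro i _; rw [add_comm]; exact div_self (by positivity)

lemma bt_zero (θ : ℝ) : bt θ 0 = 1 := by simp [bt]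

lemma bt_choose (θ : ℝ) (m : ℕ) : Ring.choose (-θ) m = (-1)^m * bt θ m := by
  induction m with
  | zero => simp [bt]
  | succ m ih =>
    rw [Ring.choose_eq_smul] at ih ⊢
    rw [bt_succ, pow_succ, descPochhammer_succ_right, Polynomial.smeval_mul]
    have : ((Polynomial.X - (m:Polynomial ℤ)).smeval (-θ)) = -θ - m := by
      rw [Polynomial.smeval_sub]; simp [Polynomial.smeval_natCast]
    rw [this]
    simp only [smul_eq_mul] at ih ⊢
    rw [Nat.factorial_succ]
    push_cast
    have h := Nat.factorial_ne_zero m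
    have h' : ((m.factorial : ℕ):ℝ) ≠ 0 := by exact_mod_cast h
    have h3 : (m:ℝ)+1 ≠ 0 := by positivity
    field_simp at ih ⊢
    rw [ih]; ring

lemma bt_conv (θ φ : ℝ) (m : ℕ) :
    ∑ p ∈ antidiagonal m, bt θ p.1 * bt φ p.2 = bt (θ + φ) m := by
  have h := Ring.add_choose_eq m (Commute.all (-θ) (-φ))
  rw [← neg_add, bt_choose] at h
  have h2 : ∀ p ∈ antidiagonal m, Ring.choose (-θ) p.1 * Ring.choose (-φ) p.2 = (-1)^m * (bt θ p.1 * bt φ p.2) := by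
    intro p hp
    rw [HasAntidiagonal.mem_antidiagonal] at hp
    rw [bt_choose, bt_choose, ← hp, pow_add]; ring
  rw [sum_congr rfl h2, ← mul_sum] at h
  exact (mul_left_cancel₀ (pow_ne_zero _ (by norm_num)) h).symm

lemma bt_le {θ : ℝ} (h0 : 0 ≤ θ) (h1 : θ ≤ 1) (m : ℕ) : bt θ m ≤ ((m:ℝ)+1)^(θ-1) := by
  induction m with
  | zero => simp [bt]
  | succ m ih =>
    rw [bt_succ]
    have hm : (0:ℝ) < m + 1 := by positivity
    have hb := rpow_one_add_le_one_add_mul_self (s := 1/((m:ℝ)+1)) (p := 1-θ)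
      (by have : 0 ≤ 1/((m:ℝ)+1) := by positivity
          linarith) (by linarith) (by linarith)
    have e : 1 + 1/((m:ℝ)+1) = ((m:ℝ)+1+1)/((m:ℝ)+1) := by field_simp
    rw [e, Real.div_rpow (by positivity) (by positivity)] at hb
    push_cast
    have e1 : ((m:ℝ)+1)^(θ-1) = (((m:ℝ)+1)^(1-θ))⁻¹ := by
      rw [← Real.rpow_neg (by positivity)]; congr 1; ring
    have e2 : ((m:ℝ)+1+1)^(θ-1) = (((m:ℝ)+1+1)^(1-θ))⁻¹ := by
      rw [← Real.rpow_neg (by positivity)]; congr 1; ring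
    rw [e1] at ih
    rw [e2]
    set P := ((m:ℝ)+1)^(1-θ) with hP
    set R := ((m:ℝ)+1+1)^(1-θ) with hR
    have hPp : 0 < P := by positivity
    have hRp : 0 < R := by positivity
    have hf : 0 ≤ (θ + m)/((m:ℝ)+1) := by positivity
    refine (mul_le_mul_of_nonneg_right ih hf).trans ?_
    rw [inv_eq_one_div, inv_eq_one_div, div_mul_div_comm, div_le_div_iff₀ (by positivity) hRp]
    rw [div_le_iff₀ hPp] at hb
    have : (θ + m) * R ≤ (θ+m) * ((1 + (1 - θ) * (1 / (m + 1))) * P) :=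
      mul_le_mul_of_nonneg_left hb (by positivity)
    have h3 : (θ + m) * (1 + (1 - θ) * (1 / (m + 1))) ≤ (m:ℝ) + 1 := by
      have : (θ + m) * (1 + (1 - θ) * (1 / ((m:ℝ) + 1))) = (m+1) - (1-θ)^2/(m+1) := by
        field_simp; ring
      rw [this]
      have : 0 ≤ (1-θ)^2/((m:ℝ)+1) := by positivity
      linarith
    nlinarith

lemma bt_gamma {θ : ℝ} (h0 : 0 < θ) (m : ℕ) :
    bt θ m = Real.Gamma (m + θ) / (Real.Gamma θ * m.factorial) := by
  have hg := Real.Gamma_pos_of_pos h0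
  induction m with
  | zero => simp [bt]; field_simp
  | succ m ih =>
    rw [bt_succ, ih]; push_cast
    rw [show (m:ℝ) + 1 + θ = (m + θ) + 1 by ring, Real.Gamma_add_one (by positivity), Nat.factorial_succ]
    push_cast
    field_simp
    ring

lemma le_bt {θ : ℝ} (h0 : 0 < θ) (h1 : θ < 1) (m : ℕ) (hm : 1 ≤ m) :
    (m:ℝ)^(-1+θ) ≤ (1 + 1/m) * Real.Gamma θ * bt θ m := by
  have hg := Real.Gamma_pos_of_pos h0
  have hm' : (1:ℝ) ≤ m := by exact_mod_cast hm
  have hG := Real.Gamma_pos_of_pos (show 0 < (m:ℝ) + θ by positivity)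
  have key := Real.Gamma_mul_add_mul_le_rpow_Gamma_mul_rpow_Gamma (s := m+θ) (t := m+θ+1) (a := θ) (b := 1-θ)
    (by positivity) (by positivity) h0 (by linarith) (by ring)
  rw [show θ*(m+θ) + (1-θ)*(m+θ+1) = (m:ℝ)+1 by ring, Real.Gamma_nat_eq_factorial,
    Real.Gamma_add_one (by positivity), Real.mul_rpow (by positivity) hG.le, mul_left_comm,
    ← Real.rpow_add hG] at key
  simp only [add_sub_cancel, Real.rpow_one] at key
  have hf : (0:ℝ) < m.factorial := by positivity
  have e : Real.Gamma θ * bt θ m = Real.Gamma (m+θ) / m.factorial := by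
    rw [bt_gamma h0]; field_simp
  rw [mul_assoc, e]
  have k2 : ((m:ℝ)+θ)^(1-θ) ≤ (1+1/m) * (m:ℝ)^(1-θ) := by
    have : (m:ℝ)+θ ≤ (1+1/m)*m := by field_simp; linarith
    calc ((m:ℝ)+θ)^(1-θ) ≤ ((1+1/m)*m)^(1-θ) := Real.rpow_le_rpow (by positivity) this (by linarith)
      _ = (1+1/m:ℝ)^(1-θ) * (m:ℝ)^(1-θ) := Real.mul_rpow (by positivity) (by positivity)
      _ ≤ _ := by
        apply mul_le_mul_of_nonneg_right _ (by positivity)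
        calc (1+1/m:ℝ)^(1-θ) ≤ (1+1/m:ℝ)^(1:ℝ) := 
              Real.rpow_le_rpow_of_exponent_le (by have : 0 ≤ 1/(m:ℝ) := by positivity
                                                   linarith) (by linarith)
          _ = _ := Real.rpow_one _
  rw [show -1+θ = -(1-θ) by ring, Real.rpow_neg (by positivity)]
  have hp : 0 < (m:ℝ)^(1-θ) := by positivity
  rw [inv_le_iff_one_le_mul₀ hp, mul_div_assoc', div_mul_eq_mul_div, le_div_iff₀ hf, one_mul]
  calc _ ≤ _ := key
    _ ≤ ((1+1/m) * (m:ℝ)^(1-θ)) * Real.Gamma (m+θ) := mul_le_mul_of_nonneg_right k2 hG.le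
    _ = _ := by ring

/-- sum over sets ≤ coefficient -/
lemma sets_le {θ : ℝ} (h0 : 0 ≤ θ) (r : ℕ) : ∀ (m : ℕ) (F : Finset (Finset ℕ)),
    (∀ A ∈ F, A.card = r ∧ ∑ x ∈ A, x = m) →
    ∑ A ∈ F, ∏ y ∈ A, bt θ y ≤ bt (r * θ) m / r.factorial := by
  induction r with
  | zero =>
    intro m F hF
    have : ∀ A ∈ F, A = ∅ ∧ m = 0 := by
      intro A hA
      have h := hF A hA
      have h2 := card_eq_zero.mp h.1
      subst h2
      simpa using h.2.symm
    have hz : ∀ k, 0 ≤ bt ((0:ℕ) * θ) k := fun k => bt_nonneg (by simp) k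
    by_cases hne : F = ∅
    · subst hne; simpa using hz m
    · obtain ⟨A, hA⟩ := nonempty_iff_ne_empty.mpr hne
      have hm := (this A hA).2
      have hs : F ⊆ {∅} := fun A hA => by simpa using (this A hA).1
      calc _ ≤ ∑ A ∈ ({∅} : Finset (Finset ℕ)), ∏ y ∈ A, bt θ y :=
            sum_le_sum_of_subset_of_nonneg hs (fun A _ _ => prod_nonneg fun _ _ => bt_nonneg h0 _)
        _ ≤ _ := by simp [hm, bt_zero]
  | succ r ih =>
    intro m F hF
    have hr : (0:ℝ) < (r:ℝ) + 1 := by positivity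
    have hrf : (0:ℝ) < r.factorial := by positivity
    have step : ((r:ℝ)+1) * ∑ A ∈ F, ∏ y ∈ A, bt θ y ≤ bt ((r+1:ℕ)*θ) m / r.factorial := by
      calc ((r:ℝ)+1) * ∑ A ∈ F, ∏ y ∈ A, bt θ y
          = ∑ A ∈ F, ∑ y ∈ A, bt θ y * ∏ z ∈ A.erase y, bt θ z := by
            rw [mul_sum]
            refine sum_congr rfl fun A hA => ?_
            rw [sum_congr rfl (fun y hy => mul_prod_erase A (bt θ) hy), sum_const, (hF A hA).1]
            simp
        _ = ∑ y ∈ range (m+1), ∑ A ∈ F with y ∈ A, bt θ y * ∏ z ∈ A.erase y, bt θ z := by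
            apply sum_comm'
            intro A y
            simp only [mem_filter, mem_range]
            constructor
            · rintro ⟨hA, hy⟩
              refine ⟨⟨hA, hy⟩, ?_⟩
              have := single_le_sum (f := fun x : ℕ => x) (fun _ _ => Nat.zero_le _) hy
              rw [(hF A hA).2] at this
              exact Nat.lt_succ_of_le this
            · rintro ⟨⟨hA, hy⟩, -⟩; exact ⟨hA, hy⟩
        _ ≤ ∑ y ∈ range (m+1), bt θ y * (bt (r*θ) (m-y) / r.factorial) := by
            refine sum_le_sum fun y hy => ?_
            rw [← mul_sum]
            apply mul_le_mul_of_nonneg_left _ (bt_nonneg h0 y)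
            have hinj : Set.InjOn (fun A : Finset ℕ => A.erase y) (F.filter (fun A => y ∈ A)) := by
              intro A hA B hB hAB
              simp only [coe_filter, Set.mem_ofPred_eq] at hA hB
              rw [← insert_erase hA.2, ← insert_erase hB.2]
              simp only at hAB
              rw [hAB]
            rw [← sum_image (f := fun A => ∏ z ∈ A, bt θ z) hinj]
            apply ih
            intro B hB
            simp only [mem_image, mem_filter] at hB
            obtain ⟨A, ⟨hA, hy'⟩, rfl⟩ := hB
            have h := hF A hA
            refine ⟨by rw [card_erase_of_mem hy', h.1]; simp, ?_⟩
            have := add_sum_erase A (fun x : ℕ => x) hy'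
            rw [h.2] at this
            omega
        _ = _ := by
            have := bt_conv θ (r*θ) m
            rw [Finset.Nat.sum_antidiagonal_eq_sum_range_succ (fun a b => bt θ a * bt (r*θ) b)] at this
            rw [show ((r+1:ℕ):ℝ)*θ = θ + r*θ by push_cast; ring, ← this, sum_div]
            exact sum_congr rfl fun _ _ => by ring
    rw [Nat.factorial_succ]
    push_cast
    rw [le_div_iff₀ (by positivity)]
    rw [le_div_iff₀ hrf] at step
    push_cast at step
    linarith

/-- sum of `f` -/
lemma sum_f_le {θ : ℝ} (h0 : 0 < θ) (h1 : θ < 1) (N : ℕ) :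
    ∑ x ∈ Icc 1 N, θ * (x:ℝ)^(-1+θ) ≤ (N:ℝ)^θ := by
  induction N with
  | zero => simp [h0.ne']
  | succ N ih =>
    rw [sum_Icc_succ_top (by omega)]
    have hM : (0:ℝ) < ((N+1:ℕ):ℝ) := by positivity
    set M := ((N+1:ℕ):ℝ) with hMd
    have hM1 : (1:ℝ) ≤ M := by simp [hMd]
    have hN : (N:ℝ) = M * (1 + (-(1/M))) := by rw [hMd]; field_simp; push_cast; ring
    have hi : 1/M ≤ 1 := by rw [div_le_one hM]; exact hM1
    have hb := rpow_one_add_le_one_add_mul_self (s := -(1/M)) (p := θ) (by linarith) h0.le h1.le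
    have : (N:ℝ)^θ ≤ M^θ * (1 + θ * (-(1/M))) := by
      rw [hN, Real.mul_rpow hM.le (by linarith)]
      exact mul_le_mul_of_nonneg_left hb (by positivity)
    have e : M^(-1+θ) = M^θ * (1/M) := by
      rw [add_comm, Real.rpow_add hM, Real.rpow_neg_one]; simp
    rw [e]
    linarith

lemma sum_le_of_inj {α β : Type*} (S : Finset α) (R : Finset β) (i : α → β)
    (f : α → ℝ) (g : β → ℝ) (hm : ∀ a ∈ S, i a ∈ R) (hi : Set.InjOn i S)
    (hfg : ∀ a ∈ S, f a ≤ g (i a)) (hg : ∀ b ∈ R, 0 ≤ g b) : ∑ a ∈ S, f a ≤ ∑ b ∈ R, g b := by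
  classical
  calc ∑ a ∈ S, f a ≤ ∑ a ∈ S, g (i a) := sum_le_sum hfg
    _ = ∑ b ∈ S.image i, g b := (sum_image hi).symm
    _ ≤ _ := sum_le_sum_of_subset_of_nonneg (image_subset_iff.mpr hm) (fun b hb _ => hg b hb)

noncomputable def sx (T : ℝ) (ω : Finset ℕ) : ℕ := ∑ x ∈ ω.filter (fun x : ℕ => (x:ℝ) < T), x
noncomputable def lg (T : ℝ) (ω : Finset ℕ) : Finset ℕ := ω.filter (fun x : ℕ => ¬ (x:ℝ) < T)

noncomputable def ff (θ : ℝ) (x : ℕ) : ℝ := θ * (x:ℝ)^(-1+θ)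

lemma ff_nonneg {θ : ℝ} (h : 0 ≤ θ) (x : ℕ) : 0 ≤ ff θ x := by unfold ff; positivity

lemma ff_le_one {θ : ℝ} (h : 0 ≤ θ) (h1 : θ ≤ 1) (x : ℕ) (hx : 1 ≤ x) : ff θ x ≤ 1 := by
  unfold ff
  have : (x:ℝ)^(-1+θ) ≤ 1 := Real.rpow_le_one_of_one_le_of_nonpos (by exact_mod_cast hx) (by linarith)
  have h3 : 0 ≤ (x:ℝ)^(-1+θ) := by positivity
  nlinarith

lemma omega_facts {s : ℕ} {c : ℝ} {n : ℕ} {ω : Finset ℕ} (h : ω ∈ OmegaN s c n) {T : ℝ}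
    (hT : T = (c * Real.log n)^s) :
    ω = insert (sx T ω) (lg T ω) ∧ sx T ω ∉ lg T ω ∧ 1 ≤ sx T ω ∧ (sx T ω : ℝ) < T ∧
    (lg T ω).card = s ∧ sx T ω + ∑ x ∈ lg T ω, x = n ∧ (∀ y ∈ lg T ω, T < y ∧ 1 ≤ y ∧ y ≤ n) := by
  unfold OmegaN at h
  rw [← hT] at h
  simp only [mem_filter, mem_powersetCard] at h
  obtain ⟨⟨hsub, hcard⟩, hsum, hone, hne⟩ := h
  obtain ⟨x, hx⟩ := card_eq_one.mp hone
  have hsx : sx T ω = x := by unfold sx; rw [hx]; simp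
  have hxm : x ∈ ω.filter (fun x : ℕ => (x:ℝ) < T) := by rw [hx]; simp
  rw [mem_filter] at hxm
  have hc := card_filter_add_card_filter_not (s := ω) (fun x : ℕ => (x:ℝ) < T)
  have hs2 := sum_filter_add_sum_filter_not ω (fun x : ℕ => (x:ℝ) < T) (fun x : ℕ => x)
  have hu := filter_union_filter_not_eq (fun x : ℕ => (x:ℝ) < T) ω
  rw [hx] at hu
  rw [hone, hcard] at hc
  rw [hsx]
  refine ⟨?_, ?_, ?_, hxm.2, ?_, ?_, ?_⟩
  · rw [insert_eq]; exact hu.symm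
  · unfold lg; rw [mem_filter]; exact fun h => h.2 hxm.2
  · exact (mem_Icc.mp (hsub hxm.1)).1
  · unfold lg; omega
  · rw [hx] at hs2
    simp only [sum_singleton] at hs2
    unfold lg; rw [hs2]; simpa using hsum
  · intro y hy
    unfold lg at hy
    rw [mem_filter] at hy
    exact ⟨lt_of_le_of_ne (not_lt.mp hy.2) (hne y hy.1).symm, mem_Icc.mp (hsub hy.1)⟩

/-- pairs -/
noncomputable def DD (s : ℕ) (c : ℝ) (n : ℕ) : Finset (Finset ℕ × Finset ℕ) :=
  (OmegaN s c n ×ˢ OmegaN s c n).filter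
      (fun p : Finset ℕ × Finset ℕ => p.1 ≠ p.2 ∧ (p.1 ∩ p.2).Nonempty)

lemma DeltaN_eq (s : ℕ) (c : ℝ) (n : ℕ) :
    DeltaN s c n = ∑ p ∈ DD s c n, ∏ x ∈ p.1 ∪ p.2, ff (1/(s:ℝ)) x := by
  unfold DeltaN DD ff
  refine sum_congr rfl fun p _ => ?_
  rw [prod_mul_distrib, prod_const]
  simp

lemma part1 {s : ℕ} (hs : 2 ≤ s) {c : ℝ} {n : ℕ} {T : ℝ}
    (hT : T = (c * Real.log n)^s) (hT0 : 0 < T) :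
    ∑ p ∈ DD s c n with Disjoint (lg T p.1) (lg T p.2), ∏ x ∈ p.1 ∪ p.2, ff (1/(s:ℝ)) x
      ≤ T^(1/(s:ℝ)) * ((((1 + 1/T) * (Real.Gamma (1/(s:ℝ)) * (1/(s:ℝ))))^s / s.factorial))^2 := by
  have hs' : (2:ℝ) ≤ s := by exact_mod_cast hs
  set θ := 1/(s:ℝ) with hθ
  have h0 : 0 < θ := by positivity
  have h1 : θ < 1 := by rw [hθ, div_lt_one (by positivity)]; linarith
  have hsθ : s * θ = 1 := by rw [hθ]; field_simp
  have hg := Real.Gamma_pos_of_pos h0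
  set κ := (1 + 1/T) * (Real.Gamma θ * θ) with hκ
  have hκ0 : 0 < κ := by positivity
  set M := κ^s / s.factorial with hM
  have hM0 : 0 ≤ M := by positivity
  set G : ℕ → Finset (Finset ℕ) := fun x => ((OmegaN s c n).filter (fun ω => sx T ω = x)).image (lg T) with hG
  have hGs : ∀ x, ∑ A ∈ G x, ∏ y ∈ A, ff θ y ≤ M := by
    intro x
    have hmem : ∀ A ∈ G x, A.card = s ∧ ∑ y ∈ A, y = n - x ∧ ∀ y ∈ A, T < y ∧ 1 ≤ y := by
      intro A hA
      simp only [hG, mem_image, mem_filter] at hA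
      obtain ⟨ω, ⟨hω, hx⟩, rfl⟩ := hA
      obtain ⟨-, -, -, -, h5, h6, h7⟩ := omega_facts hω hT
      refine ⟨h5, by omega, fun y hy => ⟨(h7 y hy).1, (h7 y hy).2.1⟩⟩
    calc ∑ A ∈ G x, ∏ y ∈ A, ff θ y ≤ ∑ A ∈ G x, κ^s * ∏ y ∈ A, bt θ y := by
          refine sum_le_sum fun A hA => ?_
          obtain ⟨h5, -, h7⟩ := hmem A hA
          calc ∏ y ∈ A, ff θ y ≤ ∏ y ∈ A, κ * bt θ y := by
                refine prod_le_prod (fun y _ => ff_nonneg h0.le y) fun y hy => ?_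
                have h := le_bt h0 h1 y (h7 y hy).2
                have hb := bt_nonneg h0.le y
                have hi : 1/(y:ℝ) ≤ 1/T := one_div_le_one_div_of_le hT0 (h7 y hy).1.le
                unfold ff
                calc θ * (y:ℝ)^(-1+θ) ≤ θ * ((1 + 1/y) * Real.Gamma θ * bt θ y) := by gcongr
                  _ ≤ θ * ((1 + 1/T) * Real.Gamma θ * bt θ y) := by gcongr
                  _ = _ := by rw [hκ]; ring
            _ = _ := by rw [prod_mul_distrib, prod_const, h5]
      _ = κ^s * ∑ A ∈ G x, ∏ y ∈ A, bt θ y := by rw [mul_sum]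
      _ ≤ κ^s * (bt (s*θ) (n-x) / s.factorial) := by
          apply mul_le_mul_of_nonneg_left _ (by positivity)
          exact sets_le h0.le s (n-x) (G x) fun A hA => ⟨(hmem A hA).1, (hmem A hA).2.1⟩
      _ = M := by rw [hsθ, bt_one, hM]; ring
  -- common smallest element
  have hcommon : ∀ p ∈ (DD s c n).filter (fun p => Disjoint (lg T p.1) (lg T p.2)),
      p.1 ∈ OmegaN s c n ∧ p.2 ∈ OmegaN s c n ∧ sx T p.1 = sx T p.2 ∧ Disjoint (lg T p.1) (lg T p.2) := by
    intro p hp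
    simp only [DD, mem_filter, mem_product] at hp
    obtain ⟨⟨⟨hp1, hp2⟩, -, ⟨z, hz⟩⟩, hd⟩ := hp
    refine ⟨hp1, hp2, ?_, hd⟩
    obtain ⟨e1, -, -, lt1, -, -, g1⟩ := omega_facts hp1 hT
    obtain ⟨e2, -, -, lt2, -, -, g2⟩ := omega_facts hp2 hT
    rw [mem_inter] at hz
    obtain ⟨hz1, hz2⟩ := hz
    rw [e1, mem_insert] at hz1
    rw [e2, mem_insert] at hz2
    rcases hz1 with hz1 | hz1 <;> rcases hz2 with hz2 | hz2
    · rw [← hz1, ← hz2]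
    · have := (g2 z hz2).1
      rw [hz1] at this
      linarith
    · have := (g1 z hz1).1
      rw [hz2] at this
      linarith
    · exact absurd hz2 (disjoint_left.mp hd hz1)
  have hmaps : ∀ p ∈ (DD s c n).filter (fun p => Disjoint (lg T p.1) (lg T p.2)),
      sx T p.1 ∈ Icc 1 ⌊T⌋₊ := by
    intro p hp
    obtain ⟨hp1, -⟩ := hcommon p hp
    obtain ⟨-, -, h3, h4, -⟩ := omega_facts hp1 hT
    exact mem_Icc.mpr ⟨h3, Nat.le_floor h4.le⟩
  rw [← sum_fiberwise_of_maps_to hmaps]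
  calc _ ≤ ∑ x ∈ Icc 1 ⌊T⌋₊, ff θ x * M^2 := by
        refine sum_le_sum fun x hx => ?_
        calc _ ≤ ∑ q ∈ G x ×ˢ G x, ff θ x * ((∏ y ∈ q.1, ff θ y) * ∏ y ∈ q.2, ff θ y) := by
              apply sum_le_of_inj _ _ (fun p => (lg T p.1, lg T p.2))
              · intro p hp
                rw [mem_filter] at hp
                obtain ⟨a1, a2, a3, a4⟩ := hcommon p hp.1
                simp only [mem_product, hG]
                exact ⟨mem_image_of_mem _ (mem_filter.mpr ⟨a1, hp.2⟩),
                  mem_image_of_mem _ (mem_filter.mpr ⟨a2, a3 ▸ hp.2⟩)⟩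
              · intro p hp q hq hpq
                rw [mem_coe, mem_filter] at hp hq
                obtain ⟨a1, a2, a3, a4⟩ := hcommon p hp.1
                obtain ⟨b1, b2, b3, b4⟩ := hcommon q hq.1
                simp only [Prod.mk.injEq] at hpq
                have e1 := (omega_facts a1 hT).1
                have e2 := (omega_facts a2 hT).1
                have e3 := (omega_facts b1 hT).1
                have e4 := (omega_facts b2 hT).1
                apply Prod.ext
                · rw [e1, e3, hpq.1, hp.2, hq.2]
                · rw [e2, e4, hpq.2, ← a3, ← b3, hp.2, hq.2]
              · intro p hp
                rw [mem_filter] at hp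
                obtain ⟨a1, a2, a3, a4⟩ := hcommon p hp.1
                obtain ⟨e1, n1, -⟩ := omega_facts a1 hT
                obtain ⟨e2, n2, -⟩ := omega_facts a2 hT
                have : p.1 ∪ p.2 = insert x (lg T p.1 ∪ lg T p.2) := by
                  conv_lhs => rw [e1, e2, ← a3, hp.2]
                  ext z; simp only [mem_union, mem_insert]; tauto
                rw [this, prod_insert, prod_union a4]
                rw [mem_union, not_or]
                exact ⟨hp.2 ▸ n1, hp.2 ▸ a3 ▸ n2⟩
              · intro q _
                exact mul_nonneg (ff_nonneg h0.le _) (mul_nonneg (prod_nonneg fun y _ => ff_nonneg h0.le y)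
                  (prod_nonneg fun y _ => ff_nonneg h0.le y))
          _ = ff θ x * ((∑ A ∈ G x, ∏ y ∈ A, ff θ y) * (∑ A ∈ G x, ∏ y ∈ A, ff θ y)) := by
              rw [← mul_sum, sum_mul_sum, sum_product]
          _ ≤ ff θ x * M^2 := by
              apply mul_le_mul_of_nonneg_left _ (ff_nonneg h0.le _)
              rw [sq]
              have hnn : 0 ≤ ∑ A ∈ G x, ∏ y ∈ A, ff θ y :=
                sum_nonneg fun _ _ => prod_nonneg fun y _ => ff_nonneg h0.le y
              exact mul_le_mul (hGs x) (hGs x) hnn hM0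
    _ = (∑ x ∈ Icc 1 ⌊T⌋₊, ff θ x) * M^2 := by rw [sum_mul]
    _ ≤ _ := by
        apply mul_le_mul_of_nonneg_right _ (by positivity)
        refine (sum_f_le h0 h1 ⌊T⌋₊).trans ?_
        exact Real.rpow_le_rpow (by positivity) (Nat.floor_le hT0.le) h0.le

noncomputable def FF (n r m : ℕ) : Finset (Finset ℕ) :=
  ((powersetCard r (range (n+1))).filter (fun A => ∑ y ∈ A, y = m))

lemma part2a {s : ℕ} (hs : 2 ≤ s) {c : ℝ} {n : ℕ} {T : ℝ}
    (hT : T = (c * Real.log n)^s) {K : ℝ} (hK : 1 ≤ K)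
    (hKf : ∀ y : ℕ, 1 ≤ y → ff (1/(s:ℝ)) y ≤ K * bt (1/(s:ℝ)) y) :
    ∑ p ∈ DD s c n with ¬ Disjoint (lg T p.1) (lg T p.2), ∏ x ∈ p.1 ∪ p.2, ff (1/(s:ℝ)) x
      ≤ ∑ t ∈ (Icc 1 ⌊T⌋₊ ×ˢ Icc 1 ⌊T⌋₊) ×ˢ (Icc 1 (s-1) ×ˢ range (n+1)),
        K^(2*s) * (bt (t.2.1 * (1/(s:ℝ))) (n - t.2.2) * (bt ((s-t.2.1:ℕ) * (1/(s:ℝ))) (t.2.2 - t.1.1) *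
          bt ((s-t.2.1:ℕ) * (1/(s:ℝ))) (t.2.2 - t.1.2))) := by
  have hs' : (2:ℝ) ≤ s := by exact_mod_cast hs
  set θ := 1/(s:ℝ) with hθ
  have h0 : 0 < θ := by positivity
  have h1 : θ < 1 := by rw [hθ, div_lt_one (by positivity)]; linarith
  have hFs : ∀ r m, ∑ A ∈ FF n r m, ∏ y ∈ A, bt θ y ≤ bt (r * θ) m := by
    intro r m
    refine (sets_le h0.le r m (FF n r m) ?_).trans ?_
    · intro A hA
      simp only [FF, mem_filter, mem_powersetCard] at hA
      exact ⟨hA.1.2, hA.2⟩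
    · apply div_le_self (bt_nonneg (by positivity) _)
      exact_mod_cast Nat.one_le_iff_ne_zero.mpr (Nat.factorial_ne_zero r)
  have hbp : ∀ A : Finset ℕ, 0 ≤ ∏ y ∈ A, bt θ y := fun A => prod_nonneg fun y _ => bt_nonneg h0.le y
  have facts : ∀ p ∈ (DD s c n).filter (fun p => ¬ Disjoint (lg T p.1) (lg T p.2)),
      p.1 ∈ OmegaN s c n ∧ p.2 ∈ OmegaN s c n ∧ 1 ≤ (lg T p.1 ∩ lg T p.2).card ∧
      (lg T p.1 ∩ lg T p.2).card ≤ s - 1 := by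
    intro p hp
    simp only [DD, mem_filter, mem_product] at hp
    obtain ⟨⟨⟨hp1, hp2⟩, hne, -⟩, hd⟩ := hp
    refine ⟨hp1, hp2, ?_, ?_⟩
    · rw [disjoint_iff_inter_eq_empty, ← card_eq_zero] at hd
      omega
    · by_contra hcon
      obtain ⟨e1, -, -, -, c1, s1, -⟩ := omega_facts hp1 hT
      obtain ⟨e2, -, -, -, c2, s2, -⟩ := omega_facts hp2 hT
      have i1 := eq_of_subset_of_card_le (inter_subset_left (s₁ := lg T p.1) (s₂ := lg T p.2)) (by omega)
      have i2 := eq_of_subset_of_card_le (inter_subset_right (s₁ := lg T p.1) (s₂ := lg T p.2)) (by omega)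
      have i3 := i1.symm.trans i2
      rw [i3] at s1 e1
      have i4 : sx T p.1 = sx T p.2 := by omega
      rw [i4] at e1
      exact hne (e1.trans e2.symm)
  have hmaps : ∀ p ∈ (DD s c n).filter (fun p => ¬ Disjoint (lg T p.1) (lg T p.2)),
      (((sx T p.1, sx T p.2), ((lg T p.1 ∩ lg T p.2).card, n - ∑ y ∈ lg T p.1 ∩ lg T p.2, y)) : (ℕ × ℕ) × (ℕ × ℕ))
       ∈ (Icc 1 ⌊T⌋₊ ×ˢ Icc 1 ⌊T⌋₊) ×ˢ (Icc 1 (s-1) ×ˢ range (n+1)) := by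
    intro p hp
    obtain ⟨hp1, hp2, hj1, hj2⟩ := facts p hp
    obtain ⟨-, -, h3, h4, -⟩ := omega_facts hp1 hT
    obtain ⟨-, -, h3', h4', -⟩ := omega_facts hp2 hT
    simp only [mem_product, mem_Icc, mem_range]
    exact ⟨⟨⟨h3, Nat.le_floor h4.le⟩, h3', Nat.le_floor h4'.le⟩, ⟨hj1, hj2⟩, by omega⟩
  rw [← sum_fiberwise_of_maps_to hmaps]
  refine sum_le_sum fun t ht => ?_
  obtain ⟨⟨x, x'⟩, j, q⟩ := t
  simp only
  calc _ ≤ ∑ u ∈ FF n j (n-q) ×ˢ (FF n (s-j) (q-x) ×ˢ FF n (s-j) (q-x')),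
        K^(2*s) * ((∏ y ∈ u.1, bt θ y) * ((∏ y ∈ u.2.1, bt θ y) * ∏ y ∈ u.2.2, bt θ y)) := by
        apply sum_le_of_inj _ _ (fun p => (lg T p.1 ∩ lg T p.2, (lg T p.1 \ lg T p.2, lg T p.2 \ lg T p.1)))
        · intro p hp
          rw [mem_filter] at hp
          obtain ⟨hp, he⟩ := hp
          simp only [Prod.mk.injEq] at he
          obtain ⟨⟨rfl, rfl⟩, rfl, rfl⟩ := he
          obtain ⟨hp1, hp2, hj1, hj2⟩ := facts p hp
          obtain ⟨e1, -, -, -, c1, s1, g1⟩ := omega_facts hp1 hT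
          obtain ⟨e2, -, -, -, c2, s2, g2⟩ := omega_facts hp2 hT
          have k1 := card_sdiff_add_card_inter (lg T p.1) (lg T p.2)
          have k2 := card_sdiff_add_card_inter (lg T p.2) (lg T p.1)
          have k3 := sum_inter_add_sum_sdiff (lg T p.1) (lg T p.2) (fun y : ℕ => y)
          have k4 := sum_inter_add_sum_sdiff (lg T p.2) (lg T p.1) (fun y : ℕ => y)
          rw [inter_comm (lg T p.2)] at k2 k4
          have r1 : lg T p.1 ⊆ range (n+1) := fun y hy => mem_range.mpr (Nat.lt_succ_of_le (g1 y hy).2.2)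
          have r2 : lg T p.2 ⊆ range (n+1) := fun y hy => mem_range.mpr (Nat.lt_succ_of_le (g2 y hy).2.2)
          simp only [mem_product, FF, mem_filter, mem_powersetCard]
          refine ⟨⟨⟨inter_subset_left.trans r1, by trivial⟩, by omega⟩, ⟨⟨sdiff_subset.trans r1, by omega⟩, by omega⟩,
            ⟨⟨sdiff_subset.trans r2, by omega⟩, by omega⟩⟩
        · intro p hp p' hp' hpp
          rw [mem_coe, mem_filter] at hp hp'
          obtain ⟨hp1, hp2, -, -⟩ := facts p hp.1
          obtain ⟨hp1', hp2', -, -⟩ := facts p' hp'.1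
          have he := hp.2.trans hp'.2.symm
          simp only [Prod.mk.injEq] at he hpp
          have e1 := (omega_facts hp1 hT).1
          have e2 := (omega_facts hp2 hT).1
          have e3 := (omega_facts hp1' hT).1
          have e4 := (omega_facts hp2' hT).1
          have q1 : lg T p.1 = lg T p'.1 := by
            rw [← sdiff_union_inter (lg T p.1) (lg T p.2), ← sdiff_union_inter (lg T p'.1) (lg T p'.2), hpp.1, hpp.2.1]
          have q2 : lg T p.2 = lg T p'.2 := by
            rw [← sdiff_union_inter (lg T p.2) (lg T p.1), ← sdiff_union_inter (lg T p'.2) (lg T p'.1), inter_comm, hpp.1, hpp.2.2, inter_comm]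
          apply Prod.ext
          · rw [e1, e3, q1, he.1.1]
          · rw [e2, e4, q2, he.1.2]
        · intro p hp
          rw [mem_filter] at hp
          obtain ⟨hp, he⟩ := hp
          obtain ⟨hp1, hp2, -, -⟩ := facts p hp
          obtain ⟨e1, n1, x1, -, c1, s1, g1⟩ := omega_facts hp1 hT
          obtain ⟨e2, n2, x2, -, c2, s2, g2⟩ := omega_facts hp2 hT
          have hsub : lg T p.1 ∪ lg T p.2 ⊆ p.1 ∪ p.2 := union_subset_union (filter_subset _ _) (filter_subset _ _)
          have hpos : ∀ y ∈ p.1 ∪ p.2, 1 ≤ y := by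
            intro y hy
            rw [mem_union] at hy
            rcases hy with hy | hy
            · rw [e1, mem_insert] at hy
              rcases hy with hy | hy
              · omega
              · exact (g1 y hy).2.1
            · rw [e2, mem_insert] at hy
              rcases hy with hy | hy
              · omega
              · exact (g2 y hy).2.1
          calc ∏ y ∈ p.1 ∪ p.2, ff θ y
              = (∏ y ∈ (p.1 ∪ p.2) \ (lg T p.1 ∪ lg T p.2), ff θ y) * ∏ y ∈ lg T p.1 ∪ lg T p.2, ff θ y :=
                (prod_sdiff hsub).symm
            _ ≤ 1 * ∏ y ∈ lg T p.1 ∪ lg T p.2, ff θ y := by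
                apply mul_le_mul_of_nonneg_right _ (prod_nonneg fun y _ => ff_nonneg h0.le y)
                exact prod_le_one (fun y _ => ff_nonneg h0.le y)
                  (fun y hy => ff_le_one h0.le h1.le y (hpos y (sdiff_subset hy)))
            _ = ∏ y ∈ lg T p.1 ∪ lg T p.2, ff θ y := one_mul _
            _ ≤ ∏ y ∈ lg T p.1 ∪ lg T p.2, K * bt θ y :=
                prod_le_prod (fun y _ => ff_nonneg h0.le y) (fun y hy => hKf y (hpos y (hsub hy)))
            _ = K^(lg T p.1 ∪ lg T p.2).card * ∏ y ∈ lg T p.1 ∪ lg T p.2, bt θ y := by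
                rw [prod_mul_distrib, prod_const]
            _ ≤ K^(2*s) * ∏ y ∈ lg T p.1 ∪ lg T p.2, bt θ y := by
                apply mul_le_mul_of_nonneg_right _ (hbp _)
                apply pow_le_pow_right₀ hK
                have := card_union_le (lg T p.1) (lg T p.2)
                omega
            _ = _ := by
                congr 1
                have hu : lg T p.1 ∪ lg T p.2 = (lg T p.1 ∩ lg T p.2) ∪ ((lg T p.1 \ lg T p.2) ∪ (lg T p.2 \ lg T p.1)) := by
                  ext z; simp only [mem_union, mem_inter, Finset.mem_sdiff]; tauto
                rw [hu, prod_union, prod_union]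
                · rw [disjoint_left]; intro z; simp only [Finset.mem_sdiff]; tauto
                · rw [disjoint_left]; intro z; simp only [Finset.mem_sdiff, mem_union, mem_inter]; tauto
        · intro u _
          exact mul_nonneg (by positivity) (mul_nonneg (hbp _) (mul_nonneg (hbp _) (hbp _)))
    _ = K^(2*s) * ((∑ A ∈ FF n j (n-q), ∏ y ∈ A, bt θ y) * ((∑ A ∈ FF n (s-j) (q-x), ∏ y ∈ A, bt θ y) *
          (∑ A ∈ FF n (s-j) (q-x'), ∏ y ∈ A, bt θ y))) := by
        rw [← mul_sum, sum_mul_sum, sum_mul_sum, sum_product]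
        congr 1
        refine sum_congr rfl fun A _ => ?_
        rw [sum_product]
        refine sum_congr rfl fun B _ => ?_
        rw [mul_sum]
    _ ≤ _ := by
        have hn : ∀ r m, 0 ≤ ∑ A ∈ FF n r m, ∏ y ∈ A, bt θ y := fun r m => sum_nonneg fun A _ => hbp A
        apply mul_le_mul_of_nonneg_left _ (by positivity)
        have hbn : ∀ r m : ℕ, 0 ≤ bt (r*θ) m := fun r m => bt_nonneg (by positivity) m
        exact mul_le_mul (hFs j (n-q)) (mul_le_mul (hFs (s-j) (q-x)) (hFs (s-j) (q-x')) (hn _ _) (hbn _ _))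
          (mul_nonneg (hn _ _) (hn _ _)) (hbn _ _)

lemma bt_le' {s : ℕ} (hs : 2 ≤ s) {r : ℕ} (hr : r ≤ s - 1) (m : ℕ) {B : ℝ} (hB : 0 < B) (hBm : B ≤ m + 1) :
    bt (r * (1/(s:ℝ))) m ≤ B^(-(1/(s:ℝ))) := by
  have hs' : (2:ℝ) ≤ s := by exact_mod_cast hs
  have hr' : (r:ℝ) + 1 ≤ s := by exact_mod_cast (by omega : r + 1 ≤ s)
  have e : (r:ℝ) * (1/(s:ℝ)) ≤ 1 - 1/s := by
    rw [mul_one_div, div_le_iff₀ (by positivity)]; field_simp; linarith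
  have hp : 0 < 1/(s:ℝ) := by positivity
  calc _ ≤ ((m:ℝ)+1)^((r:ℝ) * (1/(s:ℝ)) - 1) := bt_le (by positivity) (by linarith) m
    _ ≤ ((m:ℝ)+1)^(-(1/(s:ℝ))) := Real.rpow_le_rpow_of_exponent_le (by simp) (by linarith)
    _ ≤ _ := Real.rpow_le_rpow_of_nonpos hB hBm (by linarith)

lemma part2b {s : ℕ} (hs : 2 ≤ s) {n j x x' t Q : ℕ} (hj1 : 1 ≤ j) (hj2 : j ≤ s-1) (hx : x ≤ t) (hx' : x' ≤ t)
    (htQ : t ≤ Q) (hQn : Q ≤ n) :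
    ∑ q ∈ range (n+1), (bt (j * (1/(s:ℝ))) (n - q) * (bt ((s-j:ℕ) * (1/(s:ℝ))) (q - x) *
          bt ((s-j:ℕ) * (1/(s:ℝ))) (q - x'))) ≤
      ((Q:ℝ)+1) * ((n:ℝ)-Q+1)^(-(1/(s:ℝ))) + ((Q:ℝ) - t + 1)^(-(1/(s:ℝ))) := by
  have hs' : (2:ℝ) ≤ s := by exact_mod_cast hs
  set θ := 1/(s:ℝ) with hθ
  have h0 : 0 < θ := by positivity
  have hbn : ∀ (r m : ℕ), 0 ≤ bt (r*θ) m := fun r m => bt_nonneg (by positivity) m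
  have hb1 : ∀ m : ℕ, bt ((s-j:ℕ)*θ) m ≤ 1 := by
    intro m
    have := bt_le' hs (r := s-j) (by omega) m (B := 1) one_pos (by simp)
    simpa only [Real.one_rpow] using this
  have htQ' : (t:ℝ) ≤ Q := by exact_mod_cast htQ
  have hQn' : (Q:ℝ) ≤ n := by exact_mod_cast hQn
  rw [← sum_filter_add_sum_filter_not (range (n+1)) (fun q => q ≤ Q)]
  apply add_le_add
  · calc _ ≤ ∑ q ∈ range (n+1) with q ≤ Q, ((n:ℝ)-Q+1)^(-θ) := by
          refine sum_le_sum fun q hq => ?_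
          rw [mem_filter] at hq
          have hq' : (q:ℝ) ≤ Q := by exact_mod_cast hq.2
          have b := bt_le' hs hj2 (n-q) (B := (n:ℝ)-Q+1) (by linarith)
            (by rw [Nat.cast_sub (by omega)]; linarith)
          calc _ ≤ ((n:ℝ)-Q+1)^(-θ) * (1 * 1) := by
                apply mul_le_mul b _ (mul_nonneg (hbn _ _) (hbn _ _)) (Real.rpow_nonneg (by linarith) _)
                exact mul_le_mul (hb1 _) (hb1 _) (hbn _ _) zero_le_one
            _ = _ := by ring
      _ = (((range (n+1)).filter (fun q => q ≤ Q)).card : ℝ) * ((n:ℝ)-Q+1)^(-θ) := by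
          rw [sum_const, nsmul_eq_mul]
      _ ≤ _ := by
          apply mul_le_mul_of_nonneg_right _ (Real.rpow_nonneg (by linarith) _)
          have : (range (n+1)).filter (fun q => q ≤ Q) ⊆ range (Q+1) := by
            intro q hq; simp only [mem_filter, mem_range] at hq ⊢; omega
          have := card_le_card this
          rw [card_range] at this
          exact_mod_cast this
  · calc _ ≤ ∑ q ∈ range (n+1) with ¬ q ≤ Q, (bt (j*θ) (n-q) * bt ((s-j:ℕ)*θ) (q-x)) * ((Q:ℝ) - t + 1)^(-θ) := by
          refine sum_le_sum fun q hq => ?_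
          rw [mem_filter, not_le] at hq
          rw [← mul_assoc]
          apply mul_le_mul_of_nonneg_left _ (mul_nonneg (hbn _ _) (hbn _ _))
          apply bt_le' hs (by omega) _ (by linarith) _
          rw [Nat.cast_sub (by omega)]
          have h1 : (Q:ℝ) ≤ q := by exact_mod_cast hq.2.le
          have h2 : (x':ℝ) ≤ t := by exact_mod_cast hx'
          linarith
      _ = (∑ q ∈ range (n+1) with ¬ q ≤ Q, bt (j*θ) (n-q) * bt ((s-j:ℕ)*θ) (q-x)) * ((Q:ℝ) - t + 1)^(-θ) := by
          rw [sum_mul]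
      _ ≤ 1 * ((Q:ℝ) - t + 1)^(-θ) := by
          apply mul_le_mul_of_nonneg_right _ (Real.rpow_nonneg (by linarith) _)
          calc _ ≤ ∑ p ∈ antidiagonal (n-x), bt (j*θ) p.1 * bt ((s-j:ℕ)*θ) p.2 := by
                apply sum_le_of_inj _ _ (fun q => (n-q, q-x))
                · intro q hq
                  simp only [mem_filter, mem_range, not_le] at hq
                  rw [HasAntidiagonal.mem_antidiagonal]; simp only; omega
                · intro q hq q' hq' h
                  simp only [coe_filter, Set.mem_ofPred_eq, mem_range] at hq hq'
                  simp only [Prod.mk.injEq] at h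
                  omega
                · intro q _; exact le_refl _
                · intro p _; exact mul_nonneg (hbn _ _) (hbn _ _)
            _ = bt (j*θ + (s-j:ℕ)*θ) (n-x) := bt_conv _ _ _
            _ = 1 := by
                have : (j:ℝ)*θ + (s-j:ℕ)*θ = 1 := by
                  rw [Nat.cast_sub (by omega), hθ]; field_simp; ring
                rw [this, bt_one]
      _ = _ := one_mul _

lemma part2 {s : ℕ} (hs : 2 ≤ s) {c : ℝ} {n : ℕ} {T : ℝ}
    (hT : T = (c * Real.log n)^s) (hT0 : 0 ≤ T) {K : ℝ} (hK : 1 ≤ K)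
    (hKf : ∀ y : ℕ, 1 ≤ y → ff (1/(s:ℝ)) y ≤ K * bt (1/(s:ℝ)) y) (Q : ℕ) (hTQ : T ≤ Q) (hQn : Q ≤ n) :
    ∑ p ∈ DD s c n with ¬ Disjoint (lg T p.1) (lg T p.2), ∏ x ∈ p.1 ∪ p.2, ff (1/(s:ℝ)) x
      ≤ K^(2*s) * (T^2 * s) * (((Q:ℝ)+1) * ((n:ℝ)-Q+1)^(-(1/(s:ℝ))) + ((Q:ℝ) - T + 1)^(-(1/(s:ℝ)))) := by
  have hs' : (2:ℝ) ≤ s := by exact_mod_cast hs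
  have hQn' : (Q:ℝ) ≤ n := by exact_mod_cast hQn
  refine (part2a hs hT hK hKf).trans ?_
  set E := ((Q:ℝ)+1) * ((n:ℝ)-Q+1)^(-(1/(s:ℝ))) + ((Q:ℝ) - T + 1)^(-(1/(s:ℝ))) with hE
  have hE0 : 0 ≤ E := by
    have := Real.rpow_nonneg (show 0 ≤ (n:ℝ)-Q+1 by linarith) (-(1/(s:ℝ)))
    have := Real.rpow_nonneg (show 0 ≤ (Q:ℝ) - T + 1 by linarith) (-(1/(s:ℝ)))
    positivity
  rw [← mul_sum, mul_assoc]
  apply mul_le_mul_of_nonneg_left _ (by positivity)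
  have hfl := Nat.floor_le hT0
  rw [sum_product]
  calc _ ≤ ∑ u ∈ Icc 1 ⌊T⌋₊ ×ˢ Icc 1 ⌊T⌋₊, (s:ℝ) * E := by
        refine sum_le_sum fun u hu => ?_
        rw [sum_product]
        simp only [mem_product, mem_Icc] at hu
        calc _ ≤ ∑ j ∈ Icc 1 (s-1), E := by
              refine sum_le_sum fun j hj => ?_
              rw [mem_Icc] at hj
              refine (part2b hs hj.1 hj.2 hu.1.2 hu.2.2 (Nat.floor_le_of_le hTQ) hQn).trans ?_
              rw [hE]
              apply add_le_add le_rfl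
              apply Real.rpow_le_rpow_of_nonpos (by linarith) (by linarith)
              have : 0 < 1/(s:ℝ) := by positivity
              linarith
          _ = ((s-1:ℕ):ℝ) * E := by rw [sum_const, nsmul_eq_mul]; simp
          _ ≤ _ := by
              apply mul_le_mul_of_nonneg_right _ hE0
              exact_mod_cast Nat.sub_le s 1
    _ = ((⌊T⌋₊:ℝ) * ⌊T⌋₊) * ((s:ℝ) * E) := by
        rw [sum_const, nsmul_eq_mul, card_product]; simp
    _ ≤ (T*T) * ((s:ℝ) * E) := by
        apply mul_le_mul_of_nonneg_right _ (by positivity)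
        exact mul_le_mul hfl hfl (by positivity) hT0
    _ = _ := by ring

lemma part3 {s : ℕ} (hs : 2 ≤ s) {n : ℕ} {T u : ℝ} (hT0 : 0 ≤ T) (hu : 2 ≤ u) (hTu : T + 1 ≤ u)
    (hn : (n:ℝ) = u^(8*s*s)) : ∃ Q : ℕ, T ≤ Q ∧ Q ≤ n ∧
      T^2 * (((Q:ℝ)+1) * ((n:ℝ)-Q+1)^(-(1/(s:ℝ))) + ((Q:ℝ) - T + 1)^(-(1/(s:ℝ)))) ≤ 3 / u := by
  have hs' : (2:ℝ) ≤ s := by exact_mod_cast hs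
  have hs0 : s ≠ 0 := by omega
  have hu1 : 1 ≤ u := by linarith
  have hu0 : 0 < u := by linarith
  have hss : s ≤ s * s := Nat.le_mul_self s
  have h0 : 0 ≤ 1/(s:ℝ) := by positivity
  have conv : ∀ (k : ℕ) (B : ℝ), (u^k)^s ≤ B → B^(-(1/(s:ℝ))) ≤ 1/(u^k) := by
    intro k B hB
    calc B^(-(1/(s:ℝ))) ≤ ((u^k)^s)^(-(1/(s:ℝ))) :=
          Real.rpow_le_rpow_of_nonpos (by positivity) hB (by linarith)
      _ = 1/(u^k) := by
          rw [Real.rpow_neg (by positivity), one_div, Real.pow_rpow_inv_natCast (by positivity) hs0, one_div]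
  have hq0 : 0 ≤ u^(4*s) := by positivity
  have f1 := Nat.floor_le hq0
  have f2 := Nat.lt_floor_add_one (u^(4*s))
  set Q := ⌊u^(4*s)⌋₊ with hQ
  have m1 : u ≤ u^(4*s) := le_self_pow₀ hu1 (by omega)
  have m2 : u^(4*s) ≤ u^(8*s*s) := pow_le_pow_right₀ hu1 (by nlinarith)
  refine ⟨Q, by linarith, ?_, ?_⟩
  · have : (Q:ℝ) ≤ n := by rw [hn]; linarith
    exact_mod_cast this
  have g1 : ((n:ℝ)-Q+1)^(-(1/(s:ℝ))) ≤ 1/(u^(7*s)) := by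
    apply conv
    rw [← pow_mul, hn]
    have a1 : u^(7*s*s) * 2 ≤ u^(8*s*s) := by
      calc u^(7*s*s) * 2 ≤ u^(7*s*s) * u := by gcongr
        _ = u^(7*s*s+1) := by rw [pow_succ]
        _ ≤ _ := pow_le_pow_right₀ hu1 (by nlinarith)
    have a2 : u^(4*s) ≤ u^(7*s*s) := pow_le_pow_right₀ hu1 (by nlinarith)
    linarith
  have g2 : ((Q:ℝ) - T + 1)^(-(1/(s:ℝ))) ≤ 1/(u^3) := by
    apply conv
    rw [← pow_mul]
    have a1 : u^(3*s) * 2 ≤ u^(4*s) := by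
      calc u^(3*s) * 2 ≤ u^(3*s) * u := by gcongr
        _ = u^(3*s+1) := by rw [pow_succ]
        _ ≤ _ := pow_le_pow_right₀ hu1 (by omega)
    have a2 : u ≤ u^(3*s) := le_self_pow₀ hu1 (by omega)
    linarith
  have g3 : ((Q:ℝ)+1) * ((n:ℝ)-Q+1)^(-(1/(s:ℝ))) ≤ 2 * (1/u^3) := by
    calc _ ≤ (2 * u^(4*s)) * (1/(u^(7*s))) := by
          apply mul_le_mul (by linarith) g1 (Real.rpow_nonneg _ _) (by positivity)
          rw [hn]; linarith
      _ = 2 * (1/u^(3*s)) := by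
          rw [show 7*s = 4*s+3*s by ring, pow_add]; field_simp
      _ ≤ _ := by
          have : u^3 ≤ u^(3*s) := pow_le_pow_right₀ hu1 (by omega)
          gcongr
  calc _ ≤ u^2 * (2 * (1/u^3) + 1/u^3) := by
        apply mul_le_mul (pow_le_pow_left₀ hT0 (by linarith) 2) (add_le_add g3 g2) _ (by positivity)
        have := Real.rpow_nonneg (show 0 ≤ (n:ℝ)-Q+1 by rw [hn]; linarith) (-(1/(s:ℝ)))
        have := Real.rpow_nonneg (show 0 ≤ (Q:ℝ) - T + 1 by linarith) (-(1/(s:ℝ)))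
        positivity
    _ = _ := by field_simp; ring

/-- Lemma 5 (Lemma `delta`): `Δ_n ≤ (1+o(1)) c λ_s² log n` as `n → ∞`; in particular
`limsup_{n → ∞} Δ_n / log n ≤ c λ_s²`. -/
theorem stmt_10 (s : ℕ) (hs : 2 ≤ s) (c : ℝ) (hc : 0 < c) :
    Filter.limsup (fun n : ℕ => DeltaN s c n / Real.log n) Filter.atTop ≤
      c * (lambdaS s) ^ 2 := by
  have hs' : (2:ℝ) ≤ s := by exact_mod_cast hs
  have hs0 : s ≠ 0 := by omega
  set θ := 1/(s:ℝ) with hθ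
  have h0 : 0 < θ := by positivity
  have h1 : θ < 1 := by rw [hθ, div_lt_one (by positivity)]; linarith
  have hg := Real.Gamma_pos_of_pos h0
  set K := 2 * Real.Gamma θ * θ + 1 with hKd
  have hK : 1 ≤ K := by
    have : 0 ≤ 2 * Real.Gamma θ * θ := by positivity
    linarith
  have hKf : ∀ y : ℕ, 1 ≤ y → ff θ y ≤ K * bt θ y := by
    intro y hy
    have hy' : (1:ℝ) ≤ y := by exact_mod_cast hy
    have hb := bt_nonneg h0.le y
    have hi : 1/(y:ℝ) ≤ 1 := by rw [div_le_one (by linarith)]; exact hy'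
    unfold ff
    calc θ * (y:ℝ)^(-1+θ) ≤ θ * ((1 + 1/y) * Real.Gamma θ * bt θ y) := by
          gcongr; exact le_bt h0 h1 y hy
      _ ≤ θ * ((1 + 1) * Real.Gamma θ * bt θ y) := by gcongr
      _ ≤ _ := by rw [hKd]; linarith
  set T : ℕ → ℝ := fun n => (c * Real.log n)^s with hTd
  set U : ℕ → ℝ := fun n => (n:ℝ)^(((8*s*s : ℕ):ℝ)⁻¹) with hUd
  have hpos8 : 0 < ((8*s*s : ℕ):ℝ) := by positivity
  set g : ℕ → ℝ := fun n => c * ((((1 + 1/T n) * (Real.Gamma θ * θ))^s / s.factorial))^2 +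
    K^(2*s) * s * (3 / U n) with hgd
  have hlog : Tendsto (fun n : ℕ => Real.log n) atTop atTop :=
    Real.tendsto_log_atTop.comp tendsto_natCast_atTop_atTop
  have hTt : Tendsto T atTop atTop :=
    (tendsto_pow_atTop hs0).comp (hlog.const_mul_atTop hc)
  have hUt : Tendsto U atTop atTop :=
    (tendsto_rpow_atTop (inv_pos.mpr hpos8)).comp tendsto_natCast_atTop_atTop
  have hTU : ∀ᶠ n in atTop, T n + 1 ≤ U n := by
    have h := (isLittleO_log_rpow_rpow_atTop (s := ((8*s*s : ℕ):ℝ)⁻¹) (s:ℝ) (inv_pos.mpr hpos8)).comp_tendsto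
      (tendsto_natCast_atTop_atTop (R := ℝ))
    have hcs : 0 < c^s := by positivity
    have h2 := h.bound (show 0 < 1/(2*c^s) by positivity)
    filter_upwards [h2, hUt.eventually_ge_atTop 2, hlog.eventually_ge_atTop 0] with n hn hU2 hl
    simp only [Function.comp, Real.rpow_natCast] at hn
    rw [Real.norm_of_nonneg (by positivity), Real.norm_of_nonneg (by positivity)] at hn
    have : T n ≤ U n / 2 := by
      simp only [hTd, hUd]
      rw [mul_pow]
      calc c^s * Real.log n ^ s ≤ c^s * (1/(2*c^s) * (n:ℝ)^(((8*s*s : ℕ):ℝ)⁻¹)) :=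
            mul_le_mul_of_nonneg_left hn hcs.le
        _ = _ := by field_simp
    linarith
  have hgt : Tendsto g atTop (nhds (c * (lambdaS s)^2)) := by
    have a1 : Tendsto (fun n => 1 / T n) atTop (nhds 0) := by
      simpa only [one_div, Function.comp_def] using tendsto_inv_atTop_zero.comp hTt
    have a2 : Tendsto (fun n => 3 / U n) atTop (nhds 0) := hUt.const_div_atTop 3
    have a3 := (((((((tendsto_const_nhds (x := (1:ℝ))).add a1).mul_const (Real.Gamma θ * θ)).pow s).div_const
      (s.factorial:ℝ)).pow 2).const_mul c).add (a2.const_mul (K^(2*s) * s))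
    convert a3 using 2
    unfold lambdaS
    rw [← hθ, add_zero, one_mul, mul_zero, add_zero, mul_pow]
    rw [hθ, one_div, inv_pow]
    field_simp
  have hD0 : ∀ n, 0 ≤ DeltaN s c n / Real.log n := by
    intro n
    rw [DeltaN_eq]
    exact div_nonneg (sum_nonneg fun p _ => prod_nonneg fun y _ => ff_nonneg h0.le y) (Real.log_natCast_nonneg n)
  have hle : ∀ᶠ n in atTop, DeltaN s c n / Real.log n ≤ g n := by
    filter_upwards [hTU, hUt.eventually_ge_atTop 2, hlog.eventually_ge_atTop 1, hTt.eventually_gt_atTop 0]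
      with n hn hU2 hl hT0
    have hun : (n:ℝ) = (U n)^(8*s*s) := by
      simp only [hUd]
      rw [Real.rpow_inv_natCast_pow (by positivity) (by positivity)]
    obtain ⟨Q, q1, q2, q3⟩ := part3 hs hT0.le hU2 hn hun
    have p1 := part1 hs (c := c) (n := n) (T := T n) rfl hT0
    have p2 := part2 hs (c := c) (n := n) (T := T n) rfl hT0.le hK hKf Q q1 q2
    have hTp : (T n)^(1/(s:ℝ)) = c * Real.log n := by
      simp only [hTd]
      rw [one_div, Real.pow_rpow_inv_natCast (by positivity) hs0]
    rw [hTp] at p1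
    rw [div_le_iff₀ (by linarith), DeltaN_eq,
      ← sum_filter_add_sum_filter_not (DD s c n) (fun p => Disjoint (lg (T n) p.1) (lg (T n) p.2))]
    have p3 : K^(2*s) * s * (3 / U n) ≤ K^(2*s) * s * (3 / U n) * Real.log n :=
      le_mul_of_one_le_right (by positivity) hl
    have p4 := mul_le_mul_of_nonneg_left q3 (show 0 ≤ K^(2*s) * s by positivity)
    calc _ ≤ _ := add_le_add p1 (p2.trans (le_of_eq_of_le (by ring) (p4.trans p3)))
      _ = _ := by simp only [hgd]; ring
  calc _ ≤ limsup g atTop := limsup_le_limsup hle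
        (IsCoboundedUnder.of_frequently_ge (Eventually.frequently (Eventually.of_forall hD0)))
        hgt.isBoundedUnder_le
    _ = _ := hgt.limsup_eq
end

section
/- Let s ≥ 2 be an integer, let c > λ_s^{-1}, and let B be an infinite set of positive integers whose counting function satisfies B(n) ≥ (1+o(1))·c·log n. For each integer n ≥ 2 for which it exists, let m(n) be the smallest positive integer with B(m(n)) = ⌊((c + λ_s^{-1})/2)·log n⌋. Then, as n → ∞, Σ_{b∈B, b<m(n)} s^{-s} · Σ_{x_1 > x_2 > ⋯ > x_s ≥ 1, x_1+⋯+x_s = n−b} (x_1 ⋯ x_s)^{-1+1/s} = (1+o(1)) · ((c·λ_s + 1)/2) · log n. -/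
open Finset Filter

/-- The counting function `B(n) = |B ∩ [1, n]|` of a set of positive integers. -/
noncomputable def countB (B : Set ℕ) (n : ℕ) : ℕ := (B ∩ Set.Icc 1 n).ncard


noncomputable def cc (p : ℝ) (n : ℕ) : ℝ := ∏ i ∈ Finset.range n, (p + i) / ((i : ℝ) + 1)

lemma cc_pos {p : ℝ} (hp : 0 < p) (n : ℕ) : 0 < cc p n := by
  unfold cc
  exact Finset.prod_pos fun i _ => by positivity

lemma cc_zero (p : ℝ) : cc p 0 = 1 := by simp [cc]

lemma cc_one (n : ℕ) : cc 1 n = 1 := by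
  unfold cc
  apply Finset.prod_eq_one
  intro i _
  rw [add_comm]
  exact div_self (by positivity)

lemma cc_succ (p : ℝ) (n : ℕ) : ((n : ℝ) + 1) * cc p (n + 1) = (p + n) * cc p n := by
  unfold cc
  rw [Finset.prod_range_succ]
  have : (n : ℝ) + 1 ≠ 0 := by positivity
  field_simp

lemma cc_conv (p q : ℝ) (n : ℕ) :
    ∑ x ∈ antidiagonal n, cc p x.1 * cc q x.2 = cc (p + q) n := by
  induction n with
  | zero => simp [cc_zero]
  | succ n ih =>
    have h0 : (n : ℝ) + 1 ≠ 0 := by positivity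
    apply mul_left_cancel₀ h0
    rw [cc_succ, ← ih, Finset.mul_sum, Finset.mul_sum]
    have e1 : ∑ x ∈ antidiagonal (n + 1), ((n : ℝ) + 1) * (cc p x.1 * cc q x.2)
        = ∑ x ∈ antidiagonal (n + 1), ((x.1 : ℝ) * cc p x.1) * cc q x.2
          + ∑ x ∈ antidiagonal (n + 1), cc p x.1 * ((x.2 : ℝ) * cc q x.2) := by
      rw [← Finset.sum_add_distrib]
      apply Finset.sum_congr rfl
      intro x hx
      have : (x.1 : ℝ) + x.2 = n + 1 := by
        rw [HasAntidiagonal.mem_antidiagonal] at hx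
        exact_mod_cast hx
      rw [← this]; ring
    rw [e1, Finset.Nat.sum_antidiagonal_succ, Finset.Nat.sum_antidiagonal_succ']
    simp only [Nat.cast_zero, zero_mul, mul_zero, zero_add]
    rw [← Finset.sum_add_distrib]
    apply Finset.sum_congr rfl
    intro x hx
    have : (x.1 : ℝ) + x.2 = n := by
      rw [HasAntidiagonal.mem_antidiagonal] at hx
      exact_mod_cast hx
    push_cast
    rw [cc_succ, cc_succ, ← this]; ring

lemma cc_asymp {p : ℝ} (hp : 0 < p) :
    Tendsto (fun n : ℕ => (n : ℝ) ^ (p - 1) / cc p n) atTop (nhds (Real.Gamma p)) := by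
  have h1 := Real.GammaSeq_tendsto_Gamma p
  have h2 : Tendsto (fun n : ℕ => (1 : ℝ) + p / n) atTop (nhds (1 + 0)) :=
    tendsto_const_nhds.add (tendsto_const_div_atTop_nhds_zero_nat p)
  have h3 := h1.mul h2
  rw [add_zero, mul_one] at h3
  refine h3.congr' ?_
  filter_upwards [eventually_gt_atTop 0] with n hn
  have hn' : (0 : ℝ) < n := by exact_mod_cast hn
  unfold Real.GammaSeq cc
  rw [Finset.prod_div_distrib, Finset.prod_range_succ, Real.rpow_sub_one hn'.ne']
  have e : (n.factorial : ℝ) = ∏ i ∈ range n, ((i : ℝ) + 1) := by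
    rw [← Finset.prod_range_add_one_eq_factorial]; push_cast; rfl
  rw [e]
  have a1 : ∏ i ∈ range n, ((i : ℝ) + 1) ≠ 0 := (Finset.prod_pos fun i _ => by positivity).ne'
  have a2 : ∏ i ∈ range n, (p + (i : ℝ)) ≠ 0 := (Finset.prod_pos fun i _ => by positivity).ne'
  have a3 : p + n ≠ 0 := by positivity
  field_simp
  ring

lemma cc_ratio {p q : ℝ} (hp : 0 < p) (hq : 0 < q) :
    Tendsto (fun n : ℕ => cc q n / cc (p + q) n) atTop (nhds 0) := by
  have h1 := (cc_asymp (add_pos hp hq)).div (cc_asymp hq) (Real.Gamma_pos_of_pos hq).ne'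
  have h2 : Tendsto (fun n : ℕ => (n : ℝ) ^ (-p)) atTop (nhds 0) :=
    (tendsto_rpow_neg_atTop hp).comp tendsto_natCast_atTop_atTop
  have h3 := h1.mul h2
  rw [mul_zero] at h3
  refine h3.congr' ?_
  filter_upwards [eventually_gt_atTop 0] with n hn
  have hn' : (0 : ℝ) < n := by exact_mod_cast hn
  have e : (n : ℝ) ^ (q - 1) = (n : ℝ) ^ (p + q - 1) * (n : ℝ) ^ (-p) := by
    rw [← Real.rpow_add hn']; congr 1; ring
  have a1 := (cc_pos hq n).ne'
  have a2 := (cc_pos (add_pos hp hq) n).ne'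
  have a3 : (n : ℝ) ^ (p + q - 1) ≠ 0 := (Real.rpow_pos_of_pos hn' _).ne'
  have a4 : (n : ℝ) ^ (-p) ≠ 0 := (Real.rpow_pos_of_pos hn' _).ne'
  simp only [Pi.div_apply]
  rw [e]
  field_simp

lemma cc_pred {q : ℝ} (hq : 0 < q) (m : ℕ) : cc q (m - 1) ≤ (1 + 1 / q) * cc q m := by
  have hq' : 0 < 1 / q := by positivity
  rcases m with _ | m
  · simp [cc_zero]; positivity
  · have h := cc_succ q m
    have h1 := cc_pos hq m
    have h2 := cc_pos hq (m + 1)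
    have hm : (0 : ℝ) ≤ m := by positivity
    simp only [Nat.add_sub_cancel]
    have e : cc q m = ((m : ℝ) + 1) / (q + m) * cc q (m + 1) := by
      have : q + m ≠ 0 := by positivity
      field_simp
      linarith
    rw [e]
    apply mul_le_mul_of_nonneg_right _ h2.le
    rw [div_le_iff₀ (by positivity)]
    have : (1 + 1 / q) * (q + m) = q + m + 1 + m / q := by field_simp; ring
    rw [this]
    have : 0 ≤ (m : ℝ) / q := by positivity
    linarith

lemma cc_sub_le {q : ℝ} (hq : 0 < q) (n i : ℕ) : cc q (n - i) ≤ (1 + 1 / q) ^ i * cc q n := by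
  induction i with
  | zero => simp
  | succ i ih =>
    have hq' : 0 < 1 / q := by positivity
    calc cc q (n - (i + 1)) = cc q ((n - i) - 1) := by rw [Nat.sub_sub]
      _ ≤ (1 + 1 / q) * cc q (n - i) := cc_pred hq _
      _ ≤ (1 + 1 / q) * ((1 + 1 / q) ^ i * cc q n) := by gcongr
      _ = _ := by ring

lemma cc_shift {p q : ℝ} (hp : 0 < p) (hq : 0 < q) (i : ℕ) :
    Tendsto (fun n : ℕ => cc q (n - i) / cc (p + q) n) atTop (nhds 0) := by
  have h := (cc_ratio hp hq).const_mul ((1 + 1 / q) ^ i)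
  rw [mul_zero] at h
  refine squeeze_zero (fun n => ?_) (fun n => ?_) h
  · exact div_nonneg (cc_pos hq _).le (cc_pos (add_pos hp hq) _).le
  · rw [← mul_div_assoc]
    exact div_le_div_of_nonneg_right (cc_sub_le hq n i) (cc_pos (add_pos hp hq) _).le

/-- Toeplitz-type lemma. -/
lemma toep {p q : ℝ} (hp : 0 < p) (hq : 0 < q) (e : ℕ → ℝ) (he : Tendsto e atTop (nhds 0)) :
    Tendsto (fun n : ℕ => (∑ x ∈ antidiagonal n, |e x.1| * (cc p x.1 * cc q x.2)) / cc (p + q) n)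
      atTop (nhds 0) := by
  rw [Metric.tendsto_atTop]
  intro ε hε
  rw [Metric.tendsto_atTop] at he
  obtain ⟨K, hK⟩ := he (ε / 2) (by positivity)
  have hfin : Tendsto (fun n : ℕ => ∑ i ∈ range K, (|e i| * cc p i) * (cc q (n - i) / cc (p + q) n))
      atTop (nhds 0) := by
    have : Tendsto (fun n : ℕ => ∑ i ∈ range K, (|e i| * cc p i) * (cc q (n - i) / cc (p + q) n))
      atTop (nhds (∑ i ∈ range K, (|e i| * cc p i) * 0)) :=
      tendsto_finsetSum _ fun i _ => (cc_shift hp hq i).const_mul _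
    simpa using this
  rw [Metric.tendsto_atTop] at hfin
  obtain ⟨N, hN⟩ := hfin (ε / 2) (by positivity)
  refine ⟨N, fun n hn => ?_⟩
  have hc := cc_pos (add_pos hp hq) n
  have h1 := hN n hn
  rw [Real.dist_eq, sub_zero] at h1
  have h1' := lt_of_le_of_lt (le_abs_self _) h1
  have hnn : 0 ≤ (∑ x ∈ antidiagonal n, |e x.1| * (cc p x.1 * cc q x.2)) / cc (p + q) n := by
    apply div_nonneg _ hc.le
    exact Finset.sum_nonneg fun x _ =>
      mul_nonneg (abs_nonneg _) (mul_nonneg (cc_pos hp _).le (cc_pos hq _).le)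
  rw [Real.dist_eq, sub_zero, abs_of_nonneg hnn]
  have hpt : ∑ x ∈ antidiagonal n, |e x.1| * (cc p x.1 * cc q x.2)
      ≤ ∑ x ∈ antidiagonal n, (ε / 2 * (cc p x.1 * cc q x.2)
        + if x.1 < K then |e x.1| * cc p x.1 * cc q (n - x.1) else 0) := by
    apply Finset.sum_le_sum
    intro x hx
    rw [HasAntidiagonal.mem_antidiagonal] at hx
    have hx2 : n - x.1 = x.2 := by omega
    have hpos : 0 ≤ cc p x.1 * cc q x.2 := mul_nonneg (cc_pos hp _).le (cc_pos hq _).le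
    split_ifs with h
    · rw [hx2]
      have : 0 ≤ ε / 2 * (cc p x.1 * cc q x.2) := by positivity
      linarith
    · rw [add_zero]
      apply mul_le_mul_of_nonneg_right _ hpos
      have := hK x.1 (by omega)
      rw [Real.dist_eq, sub_zero] at this
      exact this.le
  have hif : ∑ x ∈ antidiagonal n, (if x.1 < K then |e x.1| * cc p x.1 * cc q (n - x.1) else 0)
      ≤ ∑ i ∈ range K, |e i| * cc p i * cc q (n - i) := by
    rw [Finset.Nat.sum_antidiagonal_eq_sum_range_succ_mk]
    simp only
    rw [← Finset.sum_filter]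
    apply Finset.sum_le_sum_of_subset_of_nonneg
    · intro i hi
      simp at hi ⊢
      exact hi.2
    · intro i _ _
      exact mul_nonneg (mul_nonneg (abs_nonneg _) (cc_pos hp _).le) (cc_pos hq _).le
  rw [Finset.sum_add_distrib, ← Finset.mul_sum, cc_conv] at hpt
  have h2 : (∑ i ∈ range K, |e i| * cc p i * cc q (n - i)) < ε / 2 * cc (p + q) n := by
    rw [← div_lt_iff₀ hc, Finset.sum_div]
    simpa only [mul_div_assoc] using h1'
  rw [div_lt_iff₀ hc]
  linarith

lemma conv_lim {p q : ℝ} (hp : 0 < p) (hq : 0 < q) (f g : ℕ → ℝ) (A B : ℝ)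
    (hf : Tendsto (fun n => f n / cc p n) atTop (nhds A))
    (hg : Tendsto (fun n => g n / cc q n) atTop (nhds B)) :
    Tendsto (fun n => (∑ x ∈ antidiagonal n, f x.1 * g x.2) / cc (p + q) n) atTop
      (nhds (A * B)) := by
  obtain ⟨M, hM⟩ := hg.abs.bddAbove_range
  have hM' : ∀ n, |g n / cc q n| ≤ M := fun n => hM ⟨n, rfl⟩
  have h1 := (toep hp hq (fun n => f n / cc p n - A) (by simpa using hf.sub_const A)).const_mul M
  have h2 := (toep hq hp (fun n => g n / cc q n - B) (by simpa using hg.sub_const B)).const_mul |A|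
  have h3 := h1.add h2
  rw [mul_zero, mul_zero, add_zero] at h3
  rw [tendsto_iff_dist_tendsto_zero]
  refine squeeze_zero (fun n => dist_nonneg) (fun n => ?_) h3
  have hc := cc_pos (add_pos hp hq) n
  have hsw : ∑ x ∈ antidiagonal n, |g x.1 / cc q x.1 - B| * (cc q x.1 * cc p x.2)
      = ∑ x ∈ antidiagonal n, |g x.2 / cc q x.2 - B| * (cc p x.1 * cc q x.2) := by
    rw [← Finset.Nat.sum_antidiagonal_swap]
    apply Finset.sum_congr rfl
    intro x _
    simp only [Prod.fst_swap, Prod.snd_swap]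
    ring
  rw [add_comm q p, hsw, Real.dist_eq, ← mul_div_assoc, ← mul_div_assoc, ← add_div, le_div_iff₀ hc,
    Finset.mul_sum, Finset.mul_sum, ← Finset.sum_add_distrib]
  have e : ((∑ x ∈ antidiagonal n, f x.1 * g x.2) / cc (p + q) n - A * B) * cc (p + q) n
      = ∑ x ∈ antidiagonal n, (((f x.1 / cc p x.1 - A) * (g x.2 / cc q x.2)
        + A * (g x.2 / cc q x.2 - B)) * (cc p x.1 * cc q x.2)) := by
    rw [sub_mul, div_mul_cancel₀ _ hc.ne', ← cc_conv, Finset.mul_sum, ← Finset.sum_sub_distrib]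
    apply Finset.sum_congr rfl
    intro x _
    have a1 := (cc_pos hp x.1).ne'
    have a2 := (cc_pos hq x.2).ne'
    field_simp
    ring
  rw [← abs_of_pos hc, ← abs_mul, abs_of_pos hc, e]
  refine (Finset.abs_sum_le_sum_abs _ _).trans (Finset.sum_le_sum fun x _ => ?_)
  have hpos : 0 ≤ cc p x.1 * cc q x.2 := mul_nonneg (cc_pos hp _).le (cc_pos hq _).le
  rw [abs_mul, abs_of_nonneg hpos, ← mul_assoc M, ← mul_assoc |A|, ← add_mul]
  apply mul_le_mul_of_nonneg_right _ hpos
  refine (abs_add_le _ _).trans ?_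
  rw [abs_mul, abs_mul]
  have := mul_le_mul_of_nonneg_left (hM' x.2) (abs_nonneg (f x.1 / cc p x.1 - A))
  linarith

open Finset.Nat in
lemma tuple_succ (k N : ℕ) (Ψ : (Fin (k + 1) → ℕ) → ℝ) :
    ∑ x ∈ antidiagonalTuple (k + 1) N, Ψ x
      = ∑ p ∈ HasAntidiagonal.antidiagonal N, ∑ y ∈ antidiagonalTuple k p.2, Ψ (Fin.cons p.1 y) := by
  rw [Finset.sum_sigma']
  refine Finset.sum_bij' (fun x _ => ⟨(x 0, ∑ i, Fin.tail x i), Fin.tail x⟩)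
    (fun z _ => Fin.cons z.1.1 z.2) ?_ ?_ ?_ ?_ ?_
  · intro x hx
    rw [mem_antidiagonalTuple, Fin.sum_univ_succ] at hx
    simp only [Finset.mem_sigma, HasAntidiagonal.mem_antidiagonal, mem_antidiagonalTuple]
    exact ⟨hx, trivial⟩
  · intro z hz
    simp only [Finset.mem_sigma, HasAntidiagonal.mem_antidiagonal, mem_antidiagonalTuple] at hz
    rw [mem_antidiagonalTuple, Fin.sum_cons, hz.2, hz.1]
  · intro x hx
    exact Fin.cons_self_tail x
  · rintro ⟨⟨a, b⟩, y⟩ hz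
    simp only [Finset.mem_sigma, HasAntidiagonal.mem_antidiagonal, mem_antidiagonalTuple] at hz
    simp [hz.2]
  · intro x hx
    simp

open Finset.Nat in
lemma tuple_lim {α : ℝ} (hα : 0 < α) (f : ℕ → ℝ) (A : ℝ)
    (hf : Tendsto (fun n => f n / cc α n) atTop (nhds A)) (k : ℕ) :
    Tendsto (fun N => (∑ x ∈ antidiagonalTuple (k + 1) N, ∏ i, f (x i)) / cc ((k + 1 : ℕ) * α) N)
      atTop (nhds (A ^ (k + 1))) := by
  induction k with
  | zero => simpa using hf
  | succ k ih =>
    have h := conv_lim hα (by positivity) f _ A _ hf ih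
    have e : α + ((k + 1 : ℕ) : ℝ) * α = ((k + 1 + 1 : ℕ) : ℝ) * α := by push_cast; ring
    rw [e, ← pow_succ'] at h
    refine h.congr fun N => ?_
    rw [tuple_succ]
    congr 1
    apply Finset.sum_congr rfl
    intro p _
    rw [Finset.mul_sum]
    apply Finset.sum_congr rfl
    intro y _
    exact (Fin.prod_univ_succ (fun i => f ((Fin.cons p.1 y : Fin (k + 2) → ℕ) i))).symm

open Finset.Nat in
lemma coll_lim {α : ℝ} (hα : 0 < α) (f : ℕ → ℝ) (A : ℝ)
    (hf : Tendsto (fun n => f n / cc α n) atTop (nhds A))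
    (hg : Tendsto (fun N => (∑ p ∈ HasAntidiagonal.antidiagonal N,
      if p.1 = p.2 then f p.1 * f p.2 else 0) / cc (2 * α) N) atTop (nhds 0)) (k : ℕ) :
    Tendsto (fun N => (∑ x ∈ antidiagonalTuple (k + 2) N,
      if x ⟨k, by omega⟩ = x ⟨k + 1, by omega⟩ then ∏ i, f (x i) else 0) / cc ((k + 2 : ℕ) * α) N)
      atTop (nhds 0) := by
  induction k with
  | zero =>
    have e : ((0 + 2 : ℕ) : ℝ) * α = 2 * α := by push_cast; ring
    rw [e]
    refine hg.congr fun N => ?_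
    rw [tuple_succ]
    congr 1
    apply Finset.sum_congr rfl
    intro p _
    rw [antidiagonalTuple_one, Finset.sum_singleton, Fin.prod_univ_two]
    rfl
  | succ k ih =>
    have h := conv_lim hα (by positivity) f _ A _ hf ih
    have e : α + ((k + 2 : ℕ) : ℝ) * α = ((k + 1 + 2 : ℕ) : ℝ) * α := by push_cast; ring
    rw [e, mul_zero] at h
    refine h.congr fun N => ?_
    rw [tuple_succ]
    congr 1
    apply Finset.sum_congr rfl
    intro p _
    rw [Finset.mul_sum]
    apply Finset.sum_congr rfl
    intro y _
    have e2 := Fin.prod_univ_succ (fun i => f ((Fin.cons p.1 y : Fin (k + 1 + 2) → ℕ) i))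
    rw [e2, mul_ite, mul_zero]
    rfl

lemma pair_lim {α : ℝ} (hα : 0 < α) (hα1 : α < 1) :
    Tendsto (fun N => (∑ p ∈ HasAntidiagonal.antidiagonal N,
      if p.1 = p.2 then ((p.1 : ℕ) : ℝ) ^ (α - 1) * ((p.2 : ℕ) : ℝ) ^ (α - 1) else 0)
        / cc (2 * α) N) atTop (nhds 0) := by
  have h2α : 0 < 2 * α := by positivity
  have h1 := cc_asymp h2α
  have h2 := (h1.mul (tendsto_const_div_atTop_nhds_zero_nat ((2 : ℝ) ^ (2 - 2 * α))))
  rw [mul_zero] at h2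
  refine squeeze_zero' (Eventually.of_forall fun N => ?_) ?_ h2
  · apply div_nonneg _ (cc_pos h2α N).le
    apply Finset.sum_nonneg
    intro p _
    split_ifs <;> positivity
  · filter_upwards [eventually_gt_atTop 0] with N hN
    have hc := cc_pos h2α N
    have hN' : (0 : ℝ) < N := by exact_mod_cast hN
    rw [div_mul_eq_mul_div]
    apply div_le_div_of_nonneg_right _ hc.le
    calc _ ≤ ∑ p ∈ HasAntidiagonal.antidiagonal N,
          if p = (N / 2, N / 2) then (N : ℝ) ^ (2 * α - 1) * ((2 : ℝ) ^ (2 - 2 * α) / N) else 0 := by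
          apply Finset.sum_le_sum
          rintro ⟨a, b⟩ hp
          rw [HasAntidiagonal.mem_antidiagonal] at hp
          simp only at hp ⊢
          split_ifs with ha hb hb
          · subst ha
            have ha0 : (0 : ℝ) < a := by
              have : 0 < a := by omega
              exact_mod_cast this
            have hNa : (N : ℝ) = 2 * a := by rw [← hp]; push_cast; ring
            rw [hNa, ← Real.rpow_add ha0, Real.mul_rpow (by norm_num) ha0.le]
            have e1 : (2 : ℝ) ^ (2 * α - 1) * 2 ^ (2 - 2 * α) = 2 := by
              rw [← Real.rpow_add (by norm_num)]
              ring_nf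
              exact Real.rpow_one 2
            have e2 : (a : ℝ) ^ (2 * α - 1) = (a : ℝ) ^ (α - 1 + (α - 1)) * a := by
              rw [← Real.rpow_add_one ha0.ne']; congr 1; ring
            rw [e2]
            have : (2 : ℝ) ^ (2 * α - 1) * ((a : ℝ) ^ (α - 1 + (α - 1)) * a)
              * (2 ^ (2 - 2 * α) / (2 * a)) = (2 ^ (2 * α - 1) * 2 ^ (2 - 2 * α)) / 2 *
                (a : ℝ) ^ (α - 1 + (α - 1)) := by field_simp
            rw [this, e1]
            simp
          · exfalso
            apply hb
            simp only [Prod.mk.injEq]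
            omega
          · positivity
          · exact le_rfl
      _ ≤ _ := by
          rw [Finset.sum_ite_eq']
          split_ifs
          · exact le_rfl
          · positivity

open Finset.Nat in
lemma perm_sum {s N : ℕ} (σ : Equiv.Perm (Fin s)) (Φ : (Fin s → ℕ) → ℝ) :
    ∑ x ∈ antidiagonalTuple s N, Φ (x ∘ σ) = ∑ x ∈ antidiagonalTuple s N, Φ x := by
  refine Finset.sum_nbij' (fun x => x ∘ σ) (fun x => x ∘ σ.symm) ?_ ?_ ?_ ?_ ?_
  · intro x hx
    rw [mem_antidiagonalTuple] at hx ⊢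
    rw [← hx]
    exact Equiv.sum_comp σ x
  · intro x hx
    rw [mem_antidiagonalTuple] at hx ⊢
    rw [← hx]
    exact Equiv.sum_comp σ.symm x
  · intro x _; ext i; simp
  · intro x _; ext i; simp
  · intro x _; rfl

lemma exists_perm {s : ℕ} (a b i j : Fin s) (hab : a ≠ b) (hij : i ≠ j) :
    ∃ σ : Equiv.Perm (Fin s), σ a = i ∧ σ b = j := by
  refine ⟨Equiv.swap a i * Equiv.swap b ((Equiv.swap a i).symm j), ?_, ?_⟩
  · rw [Equiv.Perm.mul_apply, Equiv.swap_apply_of_ne_of_ne hab, Equiv.swap_apply_left]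
    intro h
    apply hij
    have := congrArg (Equiv.swap a i) h
    rw [Equiv.apply_symm_apply, Equiv.swap_apply_left] at this
    exact this
  · rw [Equiv.Perm.mul_apply, Equiv.swap_apply_left, Equiv.apply_symm_apply]

open Finset.Nat in
lemma coll_eq {s N : ℕ} (f : ℕ → ℝ) (a b i j : Fin s) (hab : a ≠ b) (hij : i ≠ j) :
    ∑ x ∈ antidiagonalTuple s N, (if x i = x j then ∏ l, f (x l) else 0)
      = ∑ x ∈ antidiagonalTuple s N, (if x a = x b then ∏ l, f (x l) else 0) := by
  obtain ⟨σ, h1, h2⟩ := exists_perm a b i j hab hij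
  rw [← perm_sum σ (fun x => if x a = x b then ∏ l, f (x l) else 0)]
  apply Finset.sum_congr rfl
  intro x _
  simp only [Function.comp, h1, h2]
  rw [Equiv.prod_comp σ (fun l => f (x l))]

open Classical in
lemma count_perm {s : ℕ} (x : Fin s → ℕ) :
    (∑ σ : Equiv.Perm (Fin s), if StrictAnti (x ∘ σ) then (1 : ℝ) else 0)
      = if Function.Injective x then 1 else 0 := by
  split_ifs with h
  · let y : Fin s → ℕᵒᵈ := fun i => OrderDual.toDual (x i)
    have hy : Function.Injective y := fun i j hij => h (OrderDual.toDual.injective hij)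
    have hmono : StrictMono (y ∘ Tuple.sort y) :=
      (Tuple.monotone_sort y).strictMono_of_injective (hy.comp (Equiv.injective _))
    rw [Finset.sum_eq_single (Tuple.sort y)]
    · rw [if_pos]
      intro i j hij
      exact hmono hij
    · intro τ _ hτ
      rw [if_neg]
      intro hτ'
      apply hτ
      have hm2 : StrictMono (y ∘ τ) := fun i j hij => hτ' hij
      have : y ∘ τ = y ∘ Tuple.sort y := by
        apply (hm2.range_inj hmono).1
        rw [Set.range_comp, Set.range_comp, Equiv.range_eq_univ, Equiv.range_eq_univ]
      ext i
      have := congrFun this i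
      exact congrArg _ (hy this)
    · simp
  · apply Finset.sum_eq_zero
    intro σ _
    rw [if_neg]
    intro hσ
    apply h
    have := hσ.injective
    exact (Function.Injective.of_comp_iff' x σ.bijective).1 this

open Classical Finset.Nat in
lemma inj_sum {s N : ℕ} (f : ℕ → ℝ) :
    ∑ x ∈ antidiagonalTuple s N, (if Function.Injective x then ∏ l, f (x l) else 0)
      = (s.factorial : ℝ) *
        ∑ x ∈ antidiagonalTuple s N, (if StrictAnti x then ∏ l, f (x l) else 0) := by
  have h1 : ∀ x : Fin s → ℕ, (if Function.Injective x then ∏ l, f (x l) else 0)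
      = ∑ σ : Equiv.Perm (Fin s), if StrictAnti (x ∘ σ) then ∏ l, f ((x ∘ σ) l) else 0 := by
    intro x
    have : ∀ σ : Equiv.Perm (Fin s), (if StrictAnti (x ∘ σ) then ∏ l, f ((x ∘ σ) l) else 0)
      = (if StrictAnti (x ∘ σ) then (1 : ℝ) else 0) * ∏ l, f (x l) := by
      intro σ
      rw [ite_mul, one_mul, zero_mul]
      simp only [Function.comp]
      rw [Equiv.prod_comp σ (fun l => f (x l))]
    simp_rw [this]
    rw [← Finset.sum_mul, count_perm]
    simp
  simp_rw [h1]
  rw [Finset.sum_comm]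
  have h2 : ∀ σ : Equiv.Perm (Fin s), ∑ x ∈ antidiagonalTuple s N,
      (if StrictAnti (x ∘ σ) then ∏ l, f ((x ∘ σ) l) else 0)
      = ∑ x ∈ antidiagonalTuple s N, (if StrictAnti x then ∏ l, f (x l) else 0) := by
    intro σ
    exact perm_sum σ (fun x => if StrictAnti x then ∏ l, f (x l) else 0)
  simp_rw [h2]
  rw [Finset.sum_const, Finset.card_univ, Fintype.card_perm, Fintype.card_fin, nsmul_eq_mul]

open Classical Finset.Nat in
lemma strict_lim {s : ℕ} (hs : 2 ≤ s) :
    Tendsto (fun N => ∑ x ∈ antidiagonalTuple s N,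
      (if StrictAnti x then ∏ l, ((x l : ℕ) : ℝ) ^ (-1 + 1 / (s : ℝ)) else 0)) atTop
      (nhds (Real.Gamma (1 / s) ^ s / s.factorial)) := by
  obtain ⟨k, rfl⟩ : ∃ k, s = k + 2 := ⟨s - 2, by omega⟩
  set α : ℝ := 1 / ((k + 2 : ℕ) : ℝ) with hαdef
  have hα : 0 < α := by positivity
  have hα1 : α < 1 := by
    rw [hαdef, div_lt_one (by positivity)]
    push_cast
    have : (0 : ℝ) ≤ k := by positivity
    linarith
  have hsα : ((k + 2 : ℕ) : ℝ) * α = 1 := by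
    rw [hαdef]
    have : ((k + 2 : ℕ) : ℝ) ≠ 0 := by positivity
    field_simp
  rw [show -1 + α = α - 1 by ring]
  set f : ℕ → ℝ := fun n => (n : ℝ) ^ (α - 1) with hf
  have hfnn : ∀ n, 0 ≤ f n := fun n => by rw [hf]; positivity
  have hfl := cc_asymp hα
  have hall := tuple_lim hα f _ hfl (k + 1)
  have hcoll := coll_lim hα f _ hfl (pair_lim hα hα1) k
  rw [hsα] at hcoll
  rw [show k + 1 + 1 = k + 2 by ring, hsα] at hall
  simp only [cc_one, div_one] at hall hcoll
  have hbad : Tendsto (fun N => ∑ x ∈ antidiagonalTuple (k + 2) N,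
      (if Function.Injective x then 0 else ∏ l, f (x l))) atTop (nhds 0) := by
    have hsum := (hcoll.const_mul ((Finset.univ : Finset (Fin (k + 2))).offDiag.card : ℝ))
    rw [mul_zero] at hsum
    refine squeeze_zero (fun N => ?_) (fun N => ?_) hsum
    · apply Finset.sum_nonneg
      intro x _
      split_ifs
      · exact le_rfl
      · exact Finset.prod_nonneg fun i _ => hfnn _
    · have : ((Finset.univ : Finset (Fin (k + 2))).offDiag.card : ℝ) *
          ∑ x ∈ antidiagonalTuple (k + 2) N,
            (if x ⟨k, by omega⟩ = x ⟨k + 1, by omega⟩ then ∏ i, f (x i) else 0)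
          = ∑ z ∈ (Finset.univ : Finset (Fin (k + 2))).offDiag, ∑ x ∈ antidiagonalTuple (k + 2) N,
            (if x z.1 = x z.2 then ∏ i, f (x i) else 0) := by
        rw [← nsmul_eq_mul, ← Finset.sum_const]
        apply Finset.sum_congr rfl
        intro z hz
        rw [Finset.mem_offDiag] at hz
        exact (coll_eq f _ _ _ _ (by simp) hz.2.2).symm
      rw [this, Finset.sum_comm]
      apply Finset.sum_le_sum
      intro x _
      have hP : 0 ≤ ∏ l, f (x l) := Finset.prod_nonneg fun i _ => hfnn _
      have hnn : ∀ z ∈ (Finset.univ : Finset (Fin (k + 2))).offDiag,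
          0 ≤ (if x z.1 = x z.2 then ∏ i, f (x i) else 0) := by
        intro z _
        split_ifs
        · exact hP
        · exact le_rfl
      split_ifs with hinj
      · exact Finset.sum_nonneg hnn
      · unfold Function.Injective at hinj
        push Not at hinj
        obtain ⟨i, j, h1, h2⟩ := hinj
        have := Finset.single_le_sum hnn (a := (i, j)) (by simp [h2])
        simpa [h1] using this
  have hinj := hall.sub hbad
  rw [sub_zero] at hinj
  have hfin := hinj.div_const (((k + 2).factorial : ℕ) : ℝ)
  refine hfin.congr fun N => ?_
  rw [← Finset.sum_sub_distrib, div_eq_iff (by positivity), mul_comm]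
  change _ = _ * ∑ x ∈ antidiagonalTuple (k + 2) N, (if StrictAnti x then ∏ l, f (x l) else 0)
  rw [← inj_sum]
  apply Finset.sum_congr rfl
  intro x _
  split_ifs <;> simp

open Classical Finset.Nat in
lemma inner_eq {s : ℕ} (hs : 2 ≤ s) {N n : ℕ} (hN : N ≤ n) :
    ∑ x ∈ (Fintype.piFinset fun _ : Fin s => Finset.Icc 1 n).filter
        (fun x : Fin s → ℕ => (∀ i j : Fin s, i < j → x j < x i) ∧ ∑ i, x i = N),
      ∏ i, (x i : ℝ) ^ (-1 + 1 / (s : ℝ))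
    = ∑ x ∈ antidiagonalTuple s N,
      (if StrictAnti x then ∏ l, ((x l : ℕ) : ℝ) ^ (-1 + 1 / (s : ℝ)) else 0) := by
  rw [← Finset.sum_filter]
  apply Finset.sum_subset
  · intro x hx
    simp only [Finset.mem_filter, mem_antidiagonalTuple] at hx ⊢
    exact ⟨hx.2.2, fun i j hij => hx.2.1 i j hij⟩
  · intro x hx hx'
    simp only [Finset.mem_filter, mem_antidiagonalTuple] at hx
    have hex : ∃ i, x i = 0 := by
      by_contra hcon
      push Not at hcon
      apply hx'
      simp only [Finset.mem_filter, Fintype.mem_piFinset, Finset.mem_Icc]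
      refine ⟨fun i => ⟨Nat.one_le_iff_ne_zero.2 (hcon i), ?_⟩, fun i j hij => hx.2 hij, hx.1⟩
      refine le_trans ?_ hN
      rw [← hx.1]
      exact Finset.single_le_sum (fun _ _ => Nat.zero_le _) (Finset.mem_univ i)
    obtain ⟨i, hi⟩ := hex
    apply Finset.prod_eq_zero (Finset.mem_univ i)
    rw [hi, Nat.cast_zero, Real.zero_rpow]
    have h2 : (2 : ℝ) ≤ s := by exact_mod_cast hs
    have : 1 / (s : ℝ) < 1 := by
      rw [div_lt_one (by linarith)]; linarith
    linarith

lemma lambdaS_pos {s : ℕ} (hs : 2 ≤ s) : 0 < lambdaS s := by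
  unfold lambdaS
  have h0 : (0 : ℝ) < s := by
    have : 0 < s := by omega
    exact_mod_cast this
  have := Real.Gamma_pos_of_pos (s := 1 / (s : ℝ)) (by positivity)
  positivity

lemma m_small {κ c : ℝ} (hκ : 0 < κ) (hκc : κ < c) (Bc : ℕ → ℕ)
    (hB : ∀ ε : ℝ, 0 < ε → ∀ᶠ n : ℕ in Filter.atTop,
      (1 - ε) * (c * Real.log n) ≤ (Bc n : ℝ))
    (m : ℕ → ℕ) (hm : ∀ n : ℕ, 2 ≤ n → Bc (m n) = ⌊κ * Real.log n⌋₊) (N1 : ℕ) :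
    ∀ᶠ n : ℕ in atTop, m n + N1 ≤ n := by
  have hc : 0 < c := hκ.trans hκc
  have hd : 0 < (c + κ) / 2 := by linarith
  have h1 := hB ((c - κ) / (2 * c)) (div_pos (by linarith) (by linarith))
  rw [eventually_atTop] at h1
  obtain ⟨K, hK⟩ := h1
  set θ : ℝ := κ / ((c + κ) / 2) with hθ
  have hθ1 : θ < 1 := by rw [hθ, div_lt_one hd]; linarith
  have hlim : Tendsto (fun n : ℕ => (n : ℝ) ^ (-(1 - θ))) atTop (nhds 0) :=
    (tendsto_rpow_neg_atTop (by linarith)).comp tendsto_natCast_atTop_atTop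
  have hev := hlim.eventually (gt_mem_nhds (show (0 : ℝ) < 1 / 2 by norm_num))
  filter_upwards [hev, eventually_ge_atTop 2, eventually_ge_atTop (2 * (K + N1))] with n hn h2 h3
  have hn0 : (0 : ℝ) < n := by
    have : 0 < n := by omega
    exact_mod_cast this
  by_cases hmK : m n < K + 1
  · omega
  · have hk := hK (m n) (by omega)
    have e : (1 - (c - κ) / (2 * c)) * (c * Real.log (m n)) = (c + κ) / 2 * Real.log (m n) := by
      field_simp
      ring
    rw [e, hm n h2] at hk
    have hlogn : 0 ≤ Real.log n := Real.log_natCast_nonneg n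
    have hfl := Nat.floor_le (mul_nonneg hκ.le hlogn)
    have hm0 : (0 : ℝ) < m n := by
      have : 0 < m n := by omega
      exact_mod_cast this
    have hle : Real.log (m n) ≤ θ * Real.log n := by
      rw [hθ, div_mul_eq_mul_div, le_div_iff₀ hd]
      linarith
    have hmle : (m n : ℝ) ≤ (n : ℝ) ^ θ := by
      rw [← Real.log_le_log_iff hm0 (Real.rpow_pos_of_pos hn0 _), Real.log_rpow hn0]
      exact hle
    have e2 : (n : ℝ) ^ θ = (n : ℝ) ^ (-(1 - θ)) * n := by
      rw [← Real.rpow_add_one hn0.ne']; congr 1; ring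
    have : (m n : ℝ) ≤ n / 2 := by
      rw [e2] at hmle
      have := mul_le_mul_of_nonneg_right hn.le hn0.le
      linarith
    have h4 : 2 * m n ≤ n := by
      have : 2 * (m n : ℝ) ≤ n := by linarith
      exact_mod_cast this
    omega

lemma card_bounds (B : Set ℕ) [DecidablePred (· ∈ B)] (m : ℕ) :
    ((Finset.Ico 1 m).filter (· ∈ B)).card ≤ countB B m ∧
      countB B m ≤ ((Finset.Ico 1 m).filter (· ∈ B)).card + 1 := by
  have e : countB B m = ((Finset.Icc 1 m).filter (· ∈ B)).card := by
    unfold countB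
    rw [← Set.ncard_coe_finset]
    congr 1
    ext x
    simp only [Set.mem_inter_iff, Set.mem_Icc, Finset.coe_filter, Finset.mem_Icc, Set.mem_setOf_eq]
    exact and_comm
  rw [e]
  constructor
  · apply Finset.card_le_card
    intro x hx
    simp only [Finset.mem_filter, Finset.mem_Ico, Finset.mem_Icc] at hx ⊢
    exact ⟨⟨hx.1.1, hx.1.2.le⟩, hx.2⟩
  · refine (Finset.card_le_card ?_).trans (Finset.card_insert_le m _)
    intro x hx
    simp only [Finset.mem_filter, Finset.mem_insert, Finset.mem_Ico, Finset.mem_Icc] at hx ⊢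
    rcases hx.1.2.eq_or_lt with h | h
    · exact Or.inl h
    · exact Or.inr ⟨⟨hx.1.1, h⟩, hx.2⟩

/-- Lemma 6 (Lemma `B`): for `c > λ_s⁻¹` and `B` infinite with `B(n) ≥ (1+o(1)) c log n`, with
`m(n)` the least positive integer with `B(m(n)) = ⌊(c+λ_s⁻¹)/2 · log n⌋`, one has
`Σ_{b ∈ B, b < m(n)} s^{-s} Σ_{x_1 > ⋯ > x_s ≥ 1, x_1 + ⋯ + x_s = n - b} (x_1 ⋯ x_s)^{-1+1/s}
  = (1+o(1)) (c λ_s + 1)/2 · log n`. -/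
theorem stmt_11 (s : ℕ) (hs : 2 ≤ s) (c : ℝ) (hc : (lambdaS s)⁻¹ < c)
    (B : Set ℕ) [DecidablePred (· ∈ B)] (hBpos : ∀ b ∈ B, 1 ≤ b) (hBinf : B.Infinite)
    (hB : ∀ ε : ℝ, 0 < ε → ∀ᶠ n : ℕ in Filter.atTop,
      (1 - ε) * (c * Real.log n) ≤ (countB B n : ℝ))
    (m : ℕ → ℕ)
    (hm : ∀ n : ℕ, 2 ≤ n →
      1 ≤ m n ∧ countB B (m n) = ⌊((c + (lambdaS s)⁻¹) / 2) * Real.log n⌋₊ ∧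
        ∀ k : ℕ, 1 ≤ k → countB B k = ⌊((c + (lambdaS s)⁻¹) / 2) * Real.log n⌋₊ → m n ≤ k) :
    Filter.Tendsto
      (fun n : ℕ =>
        (∑ b ∈ (Finset.Ico 1 (m n)).filter (· ∈ B),
          ((s : ℝ) ^ s)⁻¹ *
            ∑ x ∈ (Fintype.piFinset fun _ : Fin s => Finset.Icc 1 n).filter
                (fun x : Fin s → ℕ => (∀ i j : Fin s, i < j → x j < x i) ∧ ∑ i, x i = n - b),
              ∏ i, (x i : ℝ) ^ (-1 + 1 / (s : ℝ))) / Real.log n)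
      Filter.atTop (nhds ((c * lambdaS s + 1) / 2)) := by
  have hlam := lambdaS_pos hs
  set κ : ℝ := (c + (lambdaS s)⁻¹) / 2 with hκdef
  have hinv : 0 < (lambdaS s)⁻¹ := inv_pos.2 hlam
  have hκ : 0 < κ := by rw [hκdef]; linarith
  have hκc : κ < c := by rw [hκdef]; linarith
  have hlimit : (c * lambdaS s + 1) / 2 = κ * lambdaS s := by
    rw [hκdef]; field_simp
  have hsmall := m_small hκ hκc (countB B) hB m (fun n hn => (hm n hn).2.1)
  have hlog : Tendsto (fun n : ℕ => Real.log n) atTop atTop :=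
    Real.tendsto_log_atTop.comp tendsto_natCast_atTop_atTop
  -- the cardinality asymptotics
  have hcard : Tendsto (fun n : ℕ => (((Finset.Ico 1 (m n)).filter (· ∈ B)).card : ℝ) / Real.log n)
      atTop (nhds κ) := by
    have hinvlog : Tendsto (fun n : ℕ => 2 / Real.log n) atTop (nhds 0) :=
      hlog.const_div_atTop 2
    have hlow : Tendsto (fun n : ℕ => κ - 2 / Real.log n) atTop (nhds κ) := by
      simpa using hinvlog.const_sub κ
    refine tendsto_of_tendsto_of_tendsto_of_le_of_le' hlow tendsto_const_nhds ?_ ?_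
    · filter_upwards [hlog.eventually_gt_atTop 0, eventually_ge_atTop 2] with n hn h2
      have h1 := (card_bounds B (m n)).2
      rw [(hm n h2).2.1] at h1
      have h3 := Nat.lt_floor_add_one (κ * Real.log n)
      have h1' : ((⌊κ * Real.log n⌋₊ : ℕ) : ℝ)
        ≤ (((Finset.Ico 1 (m n)).filter (· ∈ B)).card : ℝ) + 1 := by exact_mod_cast h1
      rw [le_div_iff₀ hn, sub_mul, div_mul_cancel₀ _ hn.ne']
      linarith
    · filter_upwards [hlog.eventually_gt_atTop 0, eventually_ge_atTop 2] with n hn h2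
      have h1 := (card_bounds B (m n)).1
      rw [(hm n h2).2.1] at h1
      have h3 := Nat.floor_le (mul_nonneg hκ.le hn.le)
      have h1' : (((Finset.Ico 1 (m n)).filter (· ∈ B)).card : ℝ)
        ≤ ((⌊κ * Real.log n⌋₊ : ℕ) : ℝ) := by exact_mod_cast h1
      rw [div_le_iff₀ hn]
      linarith
  -- the inner sums
  obtain ⟨G, hG, hGlim⟩ : ∃ G : ℕ → ℝ, (∀ N n : ℕ, N ≤ n → ((s : ℝ) ^ s)⁻¹ *
      ∑ x ∈ (Fintype.piFinset fun _ : Fin s => Finset.Icc 1 n).filter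
          (fun x : Fin s → ℕ => (∀ i j : Fin s, i < j → x j < x i) ∧ ∑ i, x i = N),
        ∏ i, (x i : ℝ) ^ (-1 + 1 / (s : ℝ)) = G N) ∧
      Tendsto G atTop (nhds (lambdaS s)) := by
    have h := (strict_lim hs).const_mul (((s : ℝ) ^ s)⁻¹)
    have e : ((s : ℝ) ^ s)⁻¹ * (Real.Gamma (1 / s) ^ s / s.factorial) = lambdaS s := by
      unfold lambdaS
      rw [inv_mul_eq_div, div_div, mul_comm ((s : ℝ) ^ s)]
    rw [e] at h
    refine ⟨_, fun N n hN => ?_, h⟩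
    rw [inner_eq hs hN]
  have hsum : ∀ n : ℕ, (∑ b ∈ (Finset.Ico 1 (m n)).filter (· ∈ B),
          ((s : ℝ) ^ s)⁻¹ *
            ∑ x ∈ (Fintype.piFinset fun _ : Fin s => Finset.Icc 1 n).filter
                (fun x : Fin s → ℕ => (∀ i j : Fin s, i < j → x j < x i) ∧ ∑ i, x i = n - b),
              ∏ i, (x i : ℝ) ^ (-1 + 1 / (s : ℝ)))
      = ∑ b ∈ (Finset.Ico 1 (m n)).filter (· ∈ B), G (n - b) := fun n =>
    Finset.sum_congr rfl fun b _ => hG (n - b) n (Nat.sub_le _ _)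
  simp_rw [hsum]
  rw [hlimit]
  have hmain := hcard.mul_const (lambdaS s)
  have hdiff : Tendsto (fun n : ℕ =>
      (∑ b ∈ (Finset.Ico 1 (m n)).filter (· ∈ B), (G (n - b) - lambdaS s)) / Real.log n)
      atTop (nhds 0) := by
    rw [Metric.tendsto_nhds]
    intro ε hε
    have hδ : 0 < ε / (κ + 1) := by positivity
    rw [Metric.tendsto_atTop] at hGlim
    obtain ⟨N1, hN1⟩ := hGlim _ hδ
    filter_upwards [hsmall N1, hlog.eventually_gt_atTop 0,
      hcard.eventually (gt_mem_nhds (show κ < κ + 1 by linarith))] with n h1 h2 h3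
    rw [Real.dist_eq, sub_zero, abs_div, abs_of_pos h2, div_lt_iff₀ h2]
    rw [div_lt_iff₀ h2] at h3
    calc _ ≤ ∑ b ∈ (Finset.Ico 1 (m n)).filter (· ∈ B), |G (n - b) - lambdaS s| :=
          Finset.abs_sum_le_sum_abs _ _
      _ ≤ ∑ b ∈ (Finset.Ico 1 (m n)).filter (· ∈ B), ε / (κ + 1) := by
          apply Finset.sum_le_sum
          intro b hb
          simp only [Finset.mem_filter, Finset.mem_Ico] at hb
          have := hN1 (n - b) (by omega)
          rw [Real.dist_eq] at this
          exact this.le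
      _ = (((Finset.Ico 1 (m n)).filter (· ∈ B)).card : ℝ) * (ε / (κ + 1)) := by
          rw [Finset.sum_const, nsmul_eq_mul]
      _ < ((κ + 1) * Real.log n) * (ε / (κ + 1)) := mul_lt_mul_of_pos_right h3 hδ
      _ = ε * Real.log n := by field_simp
  have hfin := hdiff.add hmain
  rw [zero_add] at hfin
  refine hfin.congr fun n => ?_
  rw [Finset.sum_sub_distrib, Finset.sum_const, nsmul_eq_mul, sub_div]
  ring
end
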